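/- arXiv:2605.07664 — 8 statements merged into one kernel-verified Lean document; each statement's English description precedes it below -/
import Mathlib

section
/- Let T be a finite tree, let c be a subtree core of T, and let v be a vertex of T with v ≠ c. For each neighbour u of v, let T_u denote the component of T − v containing u. Suppose w is a neighbour of v such that N(T_w, w) = max over all neighbours u of v of N(T_u, u). Then w lies in the component of T − v that contains c. In particular, N_c(T,v) = M(T,v). -/
/-- A subtree of a graph: a nonempty set of vertices inducing a connected subgraph. -/
def IsSubtree {V : Type*} (G : SimpleGraph V) (S : Finset V) : Prop :=
  S.Nonempty ∧ (G.induce (S : Set V)).Connected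

/-- `N(T,v)`: the number of subtrees containing the vertex `v`. -/
noncomputable def numSubtreesContaining {V : Type*} [Fintype V] (G : SimpleGraph V) (v : V) : ℕ :=
  Nat.card {S : Finset V // IsSubtree G S ∧ v ∈ S}

/-- The number of subtrees containing `v` but not `u`. -/
noncomputable def numSubtreesWithWithout {V : Type*} [Fintype V] (G : SimpleGraph V) (v u : V) : ℕ :=
  Nat.card {S : Finset V // IsSubtree G S ∧ v ∈ S ∧ u ∉ S}

/-- `M(T,v)`: the minimum, over all neighbours `u` of `v`, of the number of subtrees
containing `v` but not `u`. -/
noncomputable def subtreeM {V : Type*} [Fintype V] (G : SimpleGraph V) (v : V) : ℕ :=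
  sInf ((fun u => numSubtreesWithWithout G v u) '' (G.neighborSet v))

/-- `N_v(T,w)`: the number of subtrees `S` containing `w` such that for all `u ∈ S`
the unique path from `u` to `v` passes through `w`. -/
noncomputable def numSubtreesGrowingAway {V : Type*} [Fintype V] (G : SimpleGraph V)
    (v w : V) : ℕ :=
  Nat.card {S : Finset V // IsSubtree G S ∧ w ∈ S ∧
    ∀ u ∈ S, ∀ p : G.Walk u v, p.IsPath → w ∈ p.support}

/-- The vertices joined to `v` by a walk avoiding `u`. -/
def avoidingSide {V : Type*} (G : SimpleGraph V) (v u : V) : Set V :=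
  {x | ∃ p : G.Walk x v, u ∉ p.support}

theorem isSubtree_and_mem_iff {V : Type*} (G : SimpleGraph V) (S : Finset V) (v : V) :
    IsSubtree G S ∧ v ∈ S ↔
      v ∈ S ∧ ∀ x ∈ S, ∃ p : G.Walk x v, ∀ y ∈ p.support, y ∈ S := by
  constructor
  · rintro ⟨⟨-, hS⟩, hv⟩
    refine ⟨hv, fun x hx => ?_⟩
    obtain ⟨p⟩ := hS.preconnected ⟨x, hx⟩ ⟨v, hv⟩
    refine ⟨p.map (SimpleGraph.Embedding.induce _).toHom, fun y hy => ?_⟩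
    obtain ⟨z, -, rfl⟩ := List.mem_map.1 (SimpleGraph.Walk.support_map _ p ▸ hy)
    exact z.2
  · rintro ⟨hv, h⟩
    refine ⟨⟨⟨v, hv⟩, ?_⟩, hv⟩
    rw [SimpleGraph.connected_iff_exists_forall_reachable]
    refine ⟨⟨v, hv⟩, fun ⟨x, hx⟩ => ?_⟩
    obtain ⟨p, hp⟩ := h x hx
    exact ⟨(p.induce _ hp).reverse⟩

theorem IsSubtree.subset_avoidingSide {V : Type*} {G : SimpleGraph V} {S : Finset V} {v u x : V}
    (hS : IsSubtree G S) (hv : v ∈ S) (hu : u ∉ S) (hx : x ∈ S) : x ∈ avoidingSide G v u := by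
  obtain ⟨p, hp⟩ := ((isSubtree_and_mem_iff G S v).1 ⟨hS, hv⟩).2 x hx
  exact ⟨p, fun h => hu (hp u h)⟩

theorem notMem_avoidingSide_of_mem {V : Type*} {G : SimpleGraph V} (hG : G.IsTree) {v u x : V}
    (h : G.Adj v u) (hx : x ∈ avoidingSide G v u) : x ∉ avoidingSide G u v := by
  classical
  rintro ⟨q, hq⟩
  obtain ⟨p, hp⟩ := hx
  have hq' : v ∉ q.bypass.support := fun hv => hq (q.support_bypass_subset_support hv)
  have hpath : (q.bypass.concat h.symm).IsPath := q.bypass_isPath.concat hq' h.symm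
  have heq := (hG.isAcyclic.subsingleton_path x v).elim ⟨p.bypass, p.bypass_isPath⟩ ⟨_, hpath⟩
  have heq' : p.bypass = q.bypass.concat h.symm := congrArg Subtype.val heq
  apply hp
  apply p.support_bypass_subset_support
  rw [heq', SimpleGraph.Walk.support_concat]
  simp

theorem mem_avoidingSide_or {V : Type*} {G : SimpleGraph V} (hG : G.IsTree) {v u : V}
    (h : v ≠ u) (x : V) : x ∈ avoidingSide G v u ∨ x ∈ avoidingSide G u v := by
  classical
  obtain ⟨p, hp⟩ := (hG.connected.preconnected x v).exists_isPath
  by_cases hu : u ∈ p.support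
  · exact Or.inr ⟨p.takeUntil u hu,
      SimpleGraph.Walk.endpoint_notMem_support_takeUntil hp hu h⟩
  · exact Or.inl ⟨p, hu⟩

theorem IsSubtree.insert_adj {V : Type*} [DecidableEq V] {G : SimpleGraph V} {S : Finset V}
    {a b : V} (hS : IsSubtree G S) (ha : a ∈ S) (h : G.Adj a b) : IsSubtree G (insert b S) := by
  obtain ⟨-, hw⟩ := (isSubtree_and_mem_iff G S a).1 ⟨hS, ha⟩
  refine ((isSubtree_and_mem_iff G (insert b S) a).2 ⟨by simp [ha], fun x hx => ?_⟩).1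
  rcases Finset.mem_insert.1 hx with rfl | hx
  · exact ⟨h.symm.toWalk, by simp [ha]⟩
  · obtain ⟨p, hp⟩ := hw x hx
    exact ⟨p, fun y hy => Finset.mem_insert_of_mem (hp y hy)⟩

theorem numSubtreesWithWithout_lt {V : Type*} [Fintype V] {G : SimpleGraph V} (hG : G.IsTree)
    {a b d : V} (hab : G.Adj a b) (hbd : G.Adj b d) (had : a ≠ d) :
    numSubtreesWithWithout G a b < numSubtreesWithWithout G b d := by
  classical
  change Set.ncard {S | IsSubtree G S ∧ a ∈ S ∧ b ∉ S} <
    Set.ncard {S | IsSubtree G S ∧ b ∈ S ∧ d ∉ S}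
  have hinj : Set.InjOn (fun S : Finset V => insert b S)
      {S | IsSubtree G S ∧ a ∈ S ∧ b ∉ S} := by
    rintro S ⟨-, -, hS⟩ R ⟨-, -, hR⟩ h
    rw [← Finset.erase_insert hS, ← Finset.erase_insert hR]
    exact congrArg (Finset.erase · b) h
  rw [← hinj.ncard_image]
  apply Set.ncard_lt_ncard _ (Set.toFinite _)
  refine (Set.ssubset_iff_of_subset ?_).2 ⟨{b}, ⟨?_, by simp, by simp [hbd.ne']⟩, ?_⟩
  · rintro _ ⟨S, ⟨hS, ha, hb⟩, rfl⟩
    refine ⟨hS.insert_adj ha hab, by simp, ?_⟩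
    simp only [Finset.mem_insert, not_or]
    refine ⟨hbd.ne', fun hd => ?_⟩
    refine notMem_avoidingSide_of_mem hG hab (hS.subset_avoidingSide ha hb hd)
      ⟨hbd.symm.toWalk, ?_⟩
    simp [hab.ne, had]
  · exact ((isSubtree_and_mem_iff G {b} b).2
      ⟨by simp, fun x hx => by obtain rfl := Finset.mem_singleton.1 hx; exact ⟨.nil, by simp⟩⟩).1
  · rintro ⟨S, ⟨hS, ha, hb⟩, h⟩
    have : a ∈ ({b} : Finset V) := h ▸ Finset.mem_insert_of_mem ha
    exact hab.ne (Finset.mem_singleton.1 this)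

theorem numSubtreesContaining_eq_add {V : Type*} [Fintype V] (G : SimpleGraph V) (v u : V) :
    numSubtreesContaining G v = numSubtreesWithWithout G v u +
      Set.ncard {S : Finset V | IsSubtree G S ∧ v ∈ S ∧ u ∈ S} := by
  change Set.ncard {S : Finset V | IsSubtree G S ∧ v ∈ S} =
    Set.ncard {S : Finset V | IsSubtree G S ∧ v ∈ S ∧ u ∉ S} + _
  rw [← Set.ncard_union_eq _ (Set.toFinite _) (Set.toFinite _)]
  · congr 1
    ext S
    simp only [Set.mem_ofPred_eq, Set.mem_union]
    tauto
  · rw [Set.disjoint_left]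
    rintro S ⟨-, -, h⟩ ⟨-, -, h'⟩
    exact h h'

theorem numSubtreesContaining_lt_of_withWithout_lt {V : Type*} [Fintype V] {G : SimpleGraph V}
    {v u : V} (h : numSubtreesWithWithout G u v < numSubtreesWithWithout G v u) :
    numSubtreesContaining G u < numSubtreesContaining G v := by
  rw [numSubtreesContaining_eq_add G v u, numSubtreesContaining_eq_add G u v]
  have : {S : Finset V | IsSubtree G S ∧ v ∈ S ∧ u ∈ S} =
      {S : Finset V | IsSubtree G S ∧ u ∈ S ∧ v ∈ S} := by
    ext S
    simp only [Set.mem_ofPred_eq]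
    tauto
  rw [this]
  omega

/-- Once the number of subtrees containing a vertex drops along a path, it keeps dropping. -/
theorem numSubtreesContaining_lt_of_isPath {V : Type*} [Fintype V] {G : SimpleGraph V}
    (hG : G.IsTree) {u c : V} (p : G.Walk u c) : ∀ {v : V} (h : G.Adj v u),
    (SimpleGraph.Walk.cons h p).IsPath →
    numSubtreesWithWithout G u v < numSubtreesWithWithout G v u →
    numSubtreesContaining G c < numSubtreesContaining G v := by
  induction p with
  | nil => exact fun _ _ hlt => numSubtreesContaining_lt_of_withWithout_lt hlt
  | @cons u u' c h' p ih =>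
    intro v h hp hlt
    obtain ⟨hp', hv⟩ := (SimpleGraph.Walk.cons_isPath_iff _ _).1 hp
    have hne : v ≠ u' := by
      rintro rfl
      exact hv (by simp)
    have hlt₁ := numSubtreesWithWithout_lt hG h'.symm h.symm hne.symm
    have hlt₂ := numSubtreesWithWithout_lt hG h h' hne
    exact (ih h' hp' (by omega)).trans (numSubtreesContaining_lt_of_withWithout_lt hlt)

theorem IsSubtree.filter_avoidingSide {V : Type*} [DecidableEq V] {G : SimpleGraph V}
    (hG : G.IsTree) {S : Finset V} {v u : V} (h : G.Adj v u) (hS : IsSubtree G S) (hv : v ∈ S)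
    [DecidablePred (· ∈ avoidingSide G v u)] :
    IsSubtree G (S.filter (· ∈ avoidingSide G v u)) ∧
      v ∈ S.filter (· ∈ avoidingSide G v u) := by
  obtain ⟨-, hw⟩ := (isSubtree_and_mem_iff G S v).1 ⟨hS, hv⟩
  refine (isSubtree_and_mem_iff G _ v).2
    ⟨Finset.mem_filter.2 ⟨hv, .nil, by simp [h.ne']⟩, fun x hx => ?_⟩
  obtain ⟨hxS, hx⟩ := Finset.mem_filter.1 hx
  obtain ⟨p, hp⟩ := hw x hxS
  have hu : u ∉ p.bypass.support := fun hu =>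
    notMem_avoidingSide_of_mem hG h hx ⟨p.bypass.takeUntil u hu,
      SimpleGraph.Walk.endpoint_notMem_support_takeUntil p.bypass_isPath hu h.ne⟩
  refine ⟨p.bypass, fun y hy => Finset.mem_filter.2 ⟨hp y (p.support_bypass_subset_support hy), ?_⟩⟩
  exact ⟨p.bypass.dropUntil y hy, fun h' => hu (p.bypass.support_dropUntil_subset_support hy h')⟩

theorem IsSubtree.union_adj {V : Type*} [DecidableEq V] {G : SimpleGraph V} {S R : Finset V}
    {v u : V} (h : G.Adj v u) (hS : IsSubtree G S) (hv : v ∈ S) (hR : IsSubtree G R)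
    (hu : u ∈ R) : IsSubtree G (S ∪ R) := by
  refine ((isSubtree_and_mem_iff G (S ∪ R) v).2 ⟨by simp [hv], fun x hx => ?_⟩).1
  rcases Finset.mem_union.1 hx with hx | hx
  · obtain ⟨p, hp⟩ := ((isSubtree_and_mem_iff G S v).1 ⟨hS, hv⟩).2 x hx
    exact ⟨p, fun y hy => Finset.mem_union_left _ (hp y hy)⟩
  · obtain ⟨p, hp⟩ := ((isSubtree_and_mem_iff G R u).1 ⟨hR, hu⟩).2 x hx
    refine ⟨p.concat h.symm, fun y hy => ?_⟩
    rw [SimpleGraph.Walk.support_concat] at hy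
    simp only [List.mem_append, List.mem_singleton] at hy
    rcases hy with hy | rfl
    · exact Finset.mem_union_right _ (hp y hy)
    · exact Finset.mem_union_left _ hv

theorem filter_avoidingSide_union {V : Type*} [DecidableEq V] {G : SimpleGraph V} (hG : G.IsTree)
    {S R : Finset V} {v u : V} (h : G.Adj v u) (hS : IsSubtree G S) (hv : v ∈ S) (hu : u ∉ S)
    (hR : IsSubtree G R) (hu' : u ∈ R) (hv' : v ∉ R)
    [DecidablePred (· ∈ avoidingSide G v u)] :
    (S ∪ R).filter (· ∈ avoidingSide G v u) = S := by
  ext x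
  simp only [Finset.mem_filter, Finset.mem_union]
  constructor
  · rintro ⟨hx | hx, hx'⟩
    · exact hx
    · exact absurd (hR.subset_avoidingSide hu' hv' hx) (notMem_avoidingSide_of_mem hG h hx')
  · exact fun hx => ⟨Or.inl hx, hS.subset_avoidingSide hv hu hx⟩

theorem ncard_subtrees_through_edge {V : Type*} [Fintype V] {G : SimpleGraph V} (hG : G.IsTree)
    {v u : V} (h : G.Adj v u) :
    Set.ncard {S : Finset V | IsSubtree G S ∧ v ∈ S ∧ u ∈ S} =
      numSubtreesWithWithout G v u * numSubtreesWithWithout G u v := by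
  classical
  change _ = Set.ncard {S : Finset V | IsSubtree G S ∧ v ∈ S ∧ u ∉ S} *
    Set.ncard {S : Finset V | IsSubtree G S ∧ u ∈ S ∧ v ∉ S}
  rw [← Set.ncard_prod]
  have hself : ∀ {a b : V}, a ∉ avoidingSide G b a := fun ⟨p, hp⟩ => hp p.start_mem_support
  refine Set.ncard_congr
    (fun S _ => (S.filter (· ∈ avoidingSide G v u), S.filter (· ∈ avoidingSide G u v))) ?_ ?_ ?_
  · rintro S ⟨hS, hv, hu⟩
    obtain ⟨h₁, h₂⟩ := hS.filter_avoidingSide hG h hv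
    obtain ⟨h₃, h₄⟩ := hS.filter_avoidingSide hG h.symm hu
    exact ⟨⟨h₁, h₂, fun hm => hself (Finset.mem_filter.1 hm).2⟩,
      ⟨h₃, h₄, fun hm => hself (Finset.mem_filter.1 hm).2⟩⟩
  · have hcover : ∀ S : Finset V,
        S.filter (· ∈ avoidingSide G v u) ∪ S.filter (· ∈ avoidingSide G u v) = S := by
      intro S
      rw [← Finset.filter_or]
      exact Finset.filter_true_of_mem fun x _ => mem_avoidingSide_or hG h.ne x
    intro S R _ _ heq
    obtain ⟨h₁, h₂⟩ := Prod.mk.inj heq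
    rw [← hcover S, ← hcover R, h₁, h₂]
  · rintro ⟨S, R⟩ ⟨⟨hS, hv, hu⟩, ⟨hR, hu', hv'⟩⟩
    refine ⟨S ∪ R, ⟨hS.union_adj h hv hR hu', by simp [hv], by simp [hu']⟩, ?_⟩
    refine Prod.ext (filter_avoidingSide_union hG h hS hv hu hR hu' hv') ?_
    rw [Finset.union_comm]
    exact filter_avoidingSide_union hG h.symm hR hu' hv' hS hv hu

theorem numSubtreesContaining_eq_mul {V : Type*} [Fintype V] {G : SimpleGraph V} (hG : G.IsTree)
    {v u : V} (h : G.Adj v u) :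
    numSubtreesContaining G v =
      numSubtreesWithWithout G v u * (numSubtreesWithWithout G u v + 1) := by
  rw [numSubtreesContaining_eq_add G v u, ncard_subtrees_through_edge hG h]
  ring

theorem numSubtreesWithWithout_le_of_le {V : Type*} [Fintype V] {G : SimpleGraph V}
    (hG : G.IsTree) {v u w : V} (hu : G.Adj v u) (hw : G.Adj v w)
    (hle : numSubtreesWithWithout G u v ≤ numSubtreesWithWithout G w v) :
    numSubtreesWithWithout G v w ≤ numSubtreesWithWithout G v u := by
  have heq := (numSubtreesContaining_eq_mul hG hw).symm.trans (numSubtreesContaining_eq_mul hG hu)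
  refine Nat.le_of_mul_le_mul_right (c := numSubtreesWithWithout G w v + 1) ?_ (by omega)
  rw [heq]
  exact Nat.mul_le_mul_left _ (by omega)

theorem numSubtreesGrowingAway_eq {V : Type*} [Fintype V] {G : SimpleGraph V} (hG : G.IsTree)
    {v u c : V} (h : G.Adj v u) (hc : c ∈ avoidingSide G u v) :
    numSubtreesGrowingAway G c v = numSubtreesWithWithout G v u := by
  classical
  obtain ⟨q, hq⟩ := hc
  refine Nat.card_congr (Equiv.subtypeEquivRight fun S => ?_)
  refine and_congr_right fun hS => and_congr_right fun hv => ⟨fun hall hu => ?_, ?_⟩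
  · have hmem := q.reverse.support_bypass_subset_support (hall u hu _ q.reverse.bypass_isPath)
    exact hq (by simpa using hmem)
  · intro hu x hx p _
    by_contra hvp
    refine notMem_avoidingSide_of_mem hG h (hS.subset_avoidingSide hv hu hx) ⟨p.append q, ?_⟩
    simp [SimpleGraph.Walk.mem_support_append_iff, hvp, hq]

theorem mem_avoidingSide_of_forall_le {V : Type*} [Fintype V] {G : SimpleGraph V} (hG : G.IsTree)
    {c v w : V} (hc : ∀ x : V, numSubtreesContaining G x ≤ numSubtreesContaining G c)
    (hvc : v ≠ c) (hw : G.Adj v w)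
    (hmax : ∀ u : V, G.Adj v u →
      numSubtreesWithWithout G u v ≤ numSubtreesWithWithout G w v) :
    c ∈ avoidingSide G w v := by
  obtain ⟨p, hp⟩ := (hG.connected.preconnected v c).exists_isPath
  cases p with
  | nil => exact absurd rfl hvc
  | @cons _ u _ h p =>
    have hv := ((SimpleGraph.Walk.cons_isPath_iff _ _).1 hp).2
    by_cases hwu : w = u
    · subst hwu
      exact ⟨p.reverse, by simpa using hv⟩
    · have hlt := (hmax u h).trans_lt (numSubtreesWithWithout_lt hG hw.symm h hwu)
      exact absurd (hc v) (numSubtreesContaining_lt_of_isPath hG p h hp hlt).not_ge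

theorem stmt0 {V : Type*} [Fintype V] (G : SimpleGraph V) (hG : G.IsTree)
    (c : V) (hc : ∀ x : V, numSubtreesContaining G x ≤ numSubtreesContaining G c)
    (v : V) (hvc : v ≠ c) (w : V) (hw : G.Adj v w)
    (hmax : ∀ u : V, G.Adj v u →
      numSubtreesWithWithout G u v ≤ numSubtreesWithWithout G w v) :
    (G.induce {x : V | x ≠ v}).Reachable ⟨w, hw.ne'⟩ ⟨c, hvc.symm⟩ ∧
      numSubtreesGrowingAway G c v = subtreeM G v := by
  have hside := mem_avoidingSide_of_forall_le hG hc hvc hw hmax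
  refine ⟨?_, ?_⟩
  · obtain ⟨p, hp⟩ := hside
    exact ⟨(p.induce {x : V | x ≠ v} fun x hx hxv => hp (hxv ▸ hx)).reverse⟩
  · rw [numSubtreesGrowingAway_eq hG hw hside]
    have hmem : numSubtreesWithWithout G v w ∈
        (fun u => numSubtreesWithWithout G v u) '' G.neighborSet v := ⟨w, hw, rfl⟩
    refine le_antisymm (le_csInf ⟨_, hmem⟩ ?_) (Nat.sInf_le hmem)
    rintro _ ⟨u, hu, rfl⟩
    exact numSubtreesWithWithout_le_of_le hG hu hw (hmax u hu)
end

section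
/- Let T be a finite tree and let c be a subtree core of T. Then |log(1 + N(T,c)) − log N(T)| ≤ log 2. -/
/-- `N(T)`: the number of subtrees. -/
noncomputable def numSubtrees {V : Type*} [Fintype V] (G : SimpleGraph V) : ℕ :=
  Nat.card {S : Finset V // IsSubtree G S}

open Classical in
/-- The number of subtrees `S` contained in `W` and satisfying `P`. -/
noncomputable def countSubtrees {V : Type*} [Fintype V] (G : SimpleGraph V) (W : Finset V)
    (P : Finset V → Prop) : ℕ :=
  (Finset.univ.filter fun S => IsSubtree G S ∧ S ⊆ W ∧ P S).card

/-- `A` and `B` are disjoint, and `v ∈ A`, `u ∈ B` are the ends of the only edge joining them. -/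
structure IsEdgeCut {V : Type*} (G : SimpleGraph V) (A B : Finset V) (v u : V) : Prop where
  disjoint : ∀ x ∈ A, x ∉ B
  left_mem : v ∈ A
  right_mem : u ∈ B
  adj : G.Adj v u
  eq_of_adj : ∀ x ∈ A, ∀ y ∈ B, G.Adj x y → x = v ∧ y = u

/-- A set containing `v` is a subtree iff it is the only subset of itself that contains `v`
and is closed under adjacency. -/
theorem isSubtree_iff_forall_closed {V : Type*} {G : SimpleGraph V} {S : Finset V} {v : V}
    (hv : v ∈ S) :
    IsSubtree G S ↔ ∀ X : V → Prop, X v → (∀ x ∈ S, ∀ y ∈ S, X x → G.Adj x y → X y) →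
      ∀ w ∈ S, X w := by
  constructor
  · rintro ⟨-, hS⟩ X hX hcl w hw
    obtain ⟨p⟩ := hS.preconnected ⟨v, hv⟩ ⟨w, hw⟩
    suffices h : ∀ a b : (S : Set V), (G.induce (S : Set V)).Walk a b → X a → X b from h _ _ p hX
    intro a b q
    induction q with
    | nil => exact id
    | @cons a b _ hab _ ih => exact fun ha => ih (hcl a a.2 b b.2 ha hab)
  · intro h
    refine ⟨⟨v, hv⟩, ?_⟩
    have key := h (fun w => ∃ hw : w ∈ S, (G.induce (S : Set V)).Reachable ⟨v, hv⟩ ⟨w, hw⟩)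
      ⟨hv, .refl _⟩ (by
        rintro x - y hy ⟨hx, hr⟩ hxy
        refine ⟨hy, hr.trans (SimpleGraph.Adj.reachable ?_)⟩
        exact hxy)
    rw [SimpleGraph.connected_iff_exists_forall_reachable]
    exact ⟨⟨v, hv⟩, fun w => (key w w.2).2⟩

theorem isSubtree_singleton {V : Type*} (G : SimpleGraph V) (v : V) : IsSubtree G {v} := by
  rw [isSubtree_iff_forall_closed (Finset.mem_singleton_self v)]
  intro X hX _ w hw
  rwa [Finset.mem_singleton.1 hw]

namespace IsEdgeCut

variable {V : Type*} {G : SimpleGraph V} {A B : Finset V} {v u : V}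

theorem symm (h : IsEdgeCut G A B v u) : IsEdgeCut G B A u v where
  disjoint x hx hx' := h.disjoint x hx' hx
  left_mem := h.right_mem
  right_mem := h.left_mem
  adj := h.adj.symm
  eq_of_adj x hx y hy hxy := (h.eq_of_adj y hy x hx hxy.symm).symm

theorem isSubtree_left [DecidableEq V] (h : IsEdgeCut G A B v u) (hW : IsSubtree G (A ∪ B)) :
    IsSubtree G A := by
  rw [isSubtree_iff_forall_closed h.left_mem]
  intro X hX hcl w hw
  have key := (isSubtree_iff_forall_closed (Finset.mem_union_left B h.left_mem)).1 hW
    (fun x => x ∈ B ∨ x ∈ A ∧ X x) (Or.inr ⟨h.left_mem, hX⟩) (by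
      intro x _ y hy hx hxy
      rcases Finset.mem_union.1 hy with hyA | hyB
      · right
        refine ⟨hyA, ?_⟩
        rcases hx with hx | ⟨hxA, hx⟩
        · rwa [(h.eq_of_adj y hyA x hx hxy.symm).1]
        · exact hcl x hxA y hyA hx hxy
      · exact Or.inl hyB) w (Finset.mem_union_left B hw)
  exact (key.resolve_left (h.disjoint w hw)).2

theorem isSubtree_right [DecidableEq V] (h : IsEdgeCut G A B v u) (hW : IsSubtree G (A ∪ B)) :
    IsSubtree G B :=
  h.symm.isSubtree_left (by rwa [Finset.union_comm])

/-- A subtree avoiding `v` lies on one side of the cut. -/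
theorem subset_or_subset [DecidableEq V] (h : IsEdgeCut G A B v u) {S : Finset V}
    (hS : IsSubtree G S) (hSW : S ⊆ A ∪ B) (hv : v ∉ S) : S ⊆ A ∨ S ⊆ B := by
  obtain ⟨w, hw⟩ := hS.1
  have closed := (isSubtree_iff_forall_closed hw).1 hS
  rcases Finset.mem_union.1 (hSW hw) with hwA | hwB
  · refine Or.inl (closed (· ∈ A) hwA ?_)
    intro x hx y hy hxA hxy
    refine (Finset.mem_union.1 (hSW hy)).resolve_right fun hyB => hv ?_
    rwa [← (h.eq_of_adj x hxA y hyB hxy).1]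
  · refine Or.inr (closed (· ∈ B) hwB ?_)
    intro x hx y hy hxB hxy
    refine (Finset.mem_union.1 (hSW hy)).resolve_left fun hyA => hv ?_
    rwa [← (h.eq_of_adj y hyA x hxB hxy.symm).1]

end IsEdgeCut

/-- Two subtrees joined by an edge form a subtree. -/
theorem IsSubtree.union {V : Type*} [DecidableEq V] {G : SimpleGraph V} {S R : Finset V} {v u : V}
    (hS : IsSubtree G S) (hR : IsSubtree G R) (hv : v ∈ S) (hu : u ∈ R) (huv : G.Adj v u) :
    IsSubtree G (S ∪ R) := by
  rw [isSubtree_iff_forall_closed (Finset.mem_union_left R hv)]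
  intro X hX hcl
  have hXS : ∀ w ∈ S, X w := (isSubtree_iff_forall_closed hv).1 hS X hX fun x hx y hy =>
    hcl x (Finset.mem_union_left R hx) y (Finset.mem_union_left R hy)
  have hXu : X u := hcl v (Finset.mem_union_left R hv) u (Finset.mem_union_right S hu) hX huv
  have hXR : ∀ w ∈ R, X w := (isSubtree_iff_forall_closed hu).1 hR X hXu fun x hx y hy =>
    hcl x (Finset.mem_union_right S hx) y (Finset.mem_union_right S hy)
  intro w hw
  exact (Finset.mem_union.1 hw).elim (hXS w) (hXR w)

/-- Every edge of an acyclic graph lying inside `W` cuts `W` in two. -/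
theorem exists_isEdgeCut {V : Type*} [DecidableEq V] {G : SimpleGraph V} (hG : G.IsAcyclic)
    {W : Finset V} {v u : V} (hv : v ∈ W) (hu : u ∈ W) (hvu : G.Adj v u) :
    ∃ A B : Finset V, A ∪ B = W ∧ IsEdgeCut G A B v u := by
  classical
  have hb := (SimpleGraph.isAcyclic_iff_forall_adj_isBridge.1 hG) hvu
  rw [SimpleGraph.isBridge_iff] at hb
  let H := G \ SimpleGraph.fromEdgeSet {s(v, u)}
  refine ⟨W.filter fun w => ¬ H.Reachable u w, W.filter fun w => H.Reachable u w, ?_, ?_⟩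
  · ext w
    simp only [Finset.mem_union, Finset.mem_filter]
    tauto
  · refine ⟨?_, ?_, ?_, hvu, ?_⟩
    · simp only [Finset.mem_filter]
      tauto
    · exact Finset.mem_filter.2 ⟨hv, fun h => hb h.symm⟩
    · exact Finset.mem_filter.2 ⟨hu, .refl _⟩
    · intro x hx y hy hxy
      rw [Finset.mem_filter] at hx hy
      by_cases he : s(x, y) = s(v, u)
      · rcases Sym2.eq_iff.1 he with h | ⟨rfl, rfl⟩
        · exact h
        · exact absurd (.refl _) hx.2
      · have hH : H.Adj y x := by
          simp only [H, SimpleGraph.sdiff_adj, SimpleGraph.fromEdgeSet_adj]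
          refine ⟨hxy.symm, fun h => he ?_⟩
          rw [Sym2.eq_swap]
          exact h.1
        exact absurd (hy.2.trans hH.reachable) hx.2

theorem IsSubtree.exists_adj {V : Type*} {G : SimpleGraph V} {W : Finset V} {v : V}
    (hW : IsSubtree G W) (hv : v ∈ W) (hne : W ≠ {v}) : ∃ u ∈ W, G.Adj v u := by
  by_contra! hcon
  refine hne (Finset.eq_singleton_iff_unique_mem.2 ⟨hv, ?_⟩)
  refine (isSubtree_iff_forall_closed hv).1 hW (· = v) rfl ?_
  rintro x - y hy rfl hxy
  exact absurd hxy (hcon y hy)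

/-- Induction on rooted subtrees of an acyclic graph by splitting along an edge at the root. -/
theorem IsSubtree.rooted_induction {V : Type*} [DecidableEq V] {G : SimpleGraph V}
    (hG : G.IsAcyclic) {motive : Finset V → V → Prop} (singleton : ∀ v, motive {v} v)
    (cut : ∀ A B v u, IsEdgeCut G A B v u → IsSubtree G (A ∪ B) → IsSubtree G B →
      motive A v → motive B u → motive (A ∪ B) v)
    {W : Finset V} {v : V} (hW : IsSubtree G W) (hv : v ∈ W) : motive W v := by
  induction hn : W.card using Nat.strong_induction_on generalizing W v with
  | _ n ih =>
    by_cases hne : W = {v}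
    · rw [hne]
      exact singleton v
    obtain ⟨u, hu, hvu⟩ := hW.exists_adj hv hne
    obtain ⟨A, B, rfl, hcut⟩ := exists_isEdgeCut hG hv hu hvu
    have hcard : (A ∪ B).card = A.card + B.card :=
      Finset.card_union_of_disjoint (Finset.disjoint_left.2 hcut.disjoint)
    have hA := Finset.card_pos.2 ⟨v, hcut.left_mem⟩
    have hB := Finset.card_pos.2 ⟨u, hcut.right_mem⟩
    exact cut A B v u hcut hW (hcut.isSubtree_right hW)
      (ih _ (by omega) (hcut.isSubtree_left hW) hcut.left_mem rfl)
      (ih _ (by omega) (hcut.isSubtree_right hW) hcut.right_mem rfl)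

section Counting

variable {V : Type*} [Fintype V] {G : SimpleGraph V}

theorem countSubtrees_le {W W' : Finset V} {P Q : Finset V → Prop}
    (h : ∀ S, IsSubtree G S → S ⊆ W → P S → S ⊆ W' ∧ Q S) :
    countSubtrees G W P ≤ countSubtrees G W' Q := by
  classical
  refine Finset.card_le_card fun S hS => ?_
  simp only [Finset.mem_filter, Finset.mem_univ, true_and] at hS ⊢
  exact ⟨hS.1, h S hS.1 hS.2.1 hS.2.2⟩

theorem countSubtrees_le_add {W W₁ W₂ : Finset V} {P Q R : Finset V → Prop}
    (h : ∀ S, IsSubtree G S → S ⊆ W → P S → S ⊆ W₁ ∧ Q S ∨ S ⊆ W₂ ∧ R S) :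
    countSubtrees G W P ≤ countSubtrees G W₁ Q + countSubtrees G W₂ R := by
  classical
  refine le_trans (Finset.card_le_card fun S hS => ?_) (Finset.card_union_le _ _)
  simp only [Finset.mem_filter, Finset.mem_univ, true_and, Finset.mem_union] at hS ⊢
  exact (h S hS.1 hS.2.1 hS.2.2).imp (fun h => ⟨hS.1, h⟩) fun h => ⟨hS.1, h⟩

theorem countSubtrees_eq_add (W : Finset V) (P Q : Finset V → Prop) :
    countSubtrees G W P =
      countSubtrees G W (fun S => P S ∧ Q S) + countSubtrees G W (fun S => P S ∧ ¬ Q S) := by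
  classical
  unfold countSubtrees
  rw [← Finset.card_filter_add_card_filter_not (fun S => Q S), Finset.filter_filter,
    Finset.filter_filter]
  simp only [and_assoc]

theorem countSubtrees_mem_pos {W : Finset V} {v : V} (hv : v ∈ W) :
    1 ≤ countSubtrees G W (v ∈ ·) := by
  classical
  refine Finset.card_pos.2 ⟨{v}, ?_⟩
  simp [isSubtree_singleton, hv]

theorem countSubtrees_singleton_notMem (v : V) : countSubtrees G {v} (v ∉ ·) = 0 := by
  classical
  refine Finset.card_eq_zero.2 (Finset.eq_empty_of_forall_notMem fun S hSmem => ?_)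
  simp only [Finset.mem_filter, Finset.mem_univ, true_and] at hSmem
  obtain ⟨hS, hSv, hv⟩ := hSmem
  obtain ⟨w, hw⟩ := hS.1
  exact hv (Finset.mem_singleton.1 (hSv hw) ▸ hw)

namespace IsEdgeCut

variable {A B : Finset V} {v u : V}

theorem mul_le_countSubtrees [DecidableEq V] (h : IsEdgeCut G A B v u) :
    countSubtrees G A (v ∈ ·) * (1 + countSubtrees G B (u ∈ ·)) ≤
      countSubtrees G (A ∪ B) (v ∈ ·) := by
  classical
  let F := Finset.univ.filter fun S => IsSubtree G S ∧ S ⊆ A ∧ v ∈ S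
  let E := Finset.univ.filter fun S => IsSubtree G S ∧ S ⊆ B ∧ u ∈ S
  have hE : ∅ ∉ E := by simp [E]
  have hcard : (F ×ˢ insert ∅ E).card =
      countSubtrees G A (v ∈ ·) * (1 + countSubtrees G B (u ∈ ·)) := by
    rw [Finset.card_product, Finset.card_insert_of_notMem hE, add_comm]
    simp only [countSubtrees, F, E]
  rw [← hcard]
  have hF : ∀ S ∈ F, IsSubtree G S ∧ S ⊆ A ∧ v ∈ S := fun S hS => (Finset.mem_filter.1 hS).2
  have hE' : ∀ S ∈ insert ∅ E, S = ∅ ∨ IsSubtree G S ∧ S ⊆ B ∧ u ∈ S := fun S hS => by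
    refine (Finset.mem_insert.1 hS).imp_right fun hS => ?_
    exact (Finset.mem_filter.1 hS).2
  have hE'' : ∀ S ∈ insert ∅ E, S ⊆ B := fun S hS => by
    rcases hE' S hS with rfl | hS
    · exact Finset.empty_subset B
    · exact hS.2.1
  refine Finset.card_le_card_of_injOn (fun p => p.1 ∪ p.2) ?_ ?_
  · rintro ⟨S, R⟩ hp
    obtain ⟨hS, hR⟩ := Finset.mem_product.1 hp
    obtain ⟨hS1, hS2, hS3⟩ := hF S hS
    simp only [Finset.coe_filter, Finset.mem_univ, true_and, Set.mem_ofPred_eq]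
    refine ⟨?_, Finset.union_subset_union hS2 (hE'' R hR), Finset.mem_union_left R hS3⟩
    rcases hE' R hR with hR | hR
    · obtain rfl : R = ∅ := hR
      simpa using hS1
    · exact hS1.union hR.1 hS3 hR.2.2 h.adj
  · rintro ⟨S, R⟩ hp ⟨S', R'⟩ hp' heq
    obtain ⟨hS, hR⟩ := Finset.mem_product.1 hp
    obtain ⟨hS', hR'⟩ := Finset.mem_product.1 hp'
    have hdis := Finset.disjoint_left.2 h.disjoint
    have hinter : ∀ S ∈ F, ∀ R ∈ insert ∅ E, (S ∪ R) ∩ A = S ∧ (S ∪ R) ∩ B = R := by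
      intro S hS R hR
      have hSA := (hF S hS).2.1
      have hRB := hE'' R hR
      rw [Finset.union_inter_distrib_right, Finset.union_inter_distrib_right,
        Finset.inter_eq_left.2 hSA, Finset.inter_eq_left.2 hRB,
        Finset.disjoint_iff_inter_eq_empty.1 (hdis.symm.mono_left hRB),
        Finset.disjoint_iff_inter_eq_empty.1 (hdis.mono_left hSA)]
      simp
    obtain ⟨h1, h2⟩ := hinter S hS R hR
    obtain ⟨h1', h2'⟩ := hinter S' hS' R' hR'
    have heq' : S ∪ R = S' ∪ R' := heq
    rw [heq'] at h1 h2
    exact Prod.ext (h1.symm.trans h1') (h2.symm.trans h2')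

theorem countSubtrees_notMem_le [DecidableEq V] (h : IsEdgeCut G A B v u) :
    countSubtrees G (A ∪ B) (v ∉ ·) ≤ countSubtrees G A (v ∉ ·) +
      (countSubtrees G B (u ∈ ·) + countSubtrees G B (u ∉ ·)) := by
  have hB := countSubtrees_eq_add (G := G) B (fun _ => True) (u ∈ ·)
  simp only [true_and] at hB
  rw [← hB]
  exact countSubtrees_le_add fun S hS hSW hv =>
    (h.subset_or_subset hS hSW hv).imp (fun h => ⟨h, hv⟩) fun h => ⟨h, trivial⟩

end IsEdgeCut

/-- If `a` subtrees of `W` contain `v`, then at most `a (a - 1) / 2` avoid it. -/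
theorem IsSubtree.two_mul_countSubtrees_notMem_add_le (hG : G.IsAcyclic) {W : Finset V} {v : V}
    (hW : IsSubtree G W) (hv : v ∈ W) :
    2 * countSubtrees G W (v ∉ ·) + countSubtrees G W (v ∈ ·) ≤
      countSubtrees G W (v ∈ ·) ^ 2 := by
  classical
  refine IsSubtree.rooted_induction hG (motive := fun W v =>
    2 * countSubtrees G W (v ∉ ·) + countSubtrees G W (v ∈ ·) ≤
      countSubtrees G W (v ∈ ·) ^ 2) (fun v => ?_) ?_ hW hv
  · have h := countSubtrees_mem_pos (G := G) (Finset.mem_singleton_self v)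
    rw [countSubtrees_singleton_notMem]
    nlinarith
  · intro A B v u hcut _ _ hA hB
    have h1 := hcut.mul_le_countSubtrees
    have h2 := hcut.countSubtrees_notMem_le
    have hx := countSubtrees_mem_pos (G := G) hcut.left_mem
    generalize countSubtrees G A (v ∈ ·) = x at *
    generalize countSubtrees G B (u ∈ ·) = y at *
    generalize countSubtrees G (A ∪ B) (v ∈ ·) = a at *
    obtain ⟨x, rfl⟩ := Nat.exists_eq_add_of_le hx
    obtain ⟨d, rfl⟩ := Nat.exists_eq_add_of_le h1
    nlinarith [Nat.zero_le (x * y), Nat.zero_le (x * y * y), Nat.zero_le (x * x * y),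
      Nat.zero_le (x * x * y * y), Nat.zero_le (d * x), Nat.zero_le (d * y),
      Nat.zero_le (d * (x * y)), Nat.zero_le (d * d)]

/-- A bound on the number of subtrees avoiding `v`, linear in the number of those containing it,
when every branch at `v` has fewer than `m` subtrees containing its root. -/
theorem IsSubtree.two_mul_countSubtrees_notMem_add_le_mul (hG : G.IsAcyclic) {W : Finset V}
    {v : V} (hW : IsSubtree G W) (hv : v ∈ W) {m : ℕ}
    (hm : ∀ u ∈ W, G.Adj v u → countSubtrees G W (fun S => u ∈ S ∧ v ∉ S) + 1 ≤ m) :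
    2 * countSubtrees G W (v ∉ ·) + m ≤ m * countSubtrees G W (v ∈ ·) := by
  classical
  revert hm
  refine IsSubtree.rooted_induction hG (motive := fun W v =>
    (∀ u ∈ W, G.Adj v u → countSubtrees G W (fun S => u ∈ S ∧ v ∉ S) + 1 ≤ m) →
    2 * countSubtrees G W (v ∉ ·) + m ≤ m * countSubtrees G W (v ∈ ·)) (fun v _ => ?_) ?_ hW hv
  · have h := countSubtrees_mem_pos (G := G) (Finset.mem_singleton_self v)
    rw [countSubtrees_singleton_notMem]
    nlinarith
  · intro A B v u hcut _ hBs ihA _ hm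
    have hA := ihA fun w hw hvw => le_trans (Nat.add_le_add_right
      (countSubtrees_le fun S _ hSA hS => ⟨hSA.trans Finset.subset_union_left, hS⟩) 1)
      (hm w (Finset.mem_union_left B hw) hvw)
    have hB := hBs.two_mul_countSubtrees_notMem_add_le hG hcut.right_mem
    have hy : countSubtrees G B (u ∈ ·) + 1 ≤ m := le_trans (Nat.add_le_add_right
      (countSubtrees_le fun S _ hSB hS => ⟨hSB.trans Finset.subset_union_right, hS,
        fun hv => hcut.disjoint v hcut.left_mem (hSB hv)⟩) 1)
      (hm u (Finset.mem_union_right A hcut.right_mem) hcut.adj)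
    have h1 := hcut.mul_le_countSubtrees
    have h2 := hcut.countSubtrees_notMem_le
    have hx := countSubtrees_mem_pos (G := G) hcut.left_mem
    generalize countSubtrees G A (v ∈ ·) = x at *
    generalize countSubtrees G B (u ∈ ·) = y at *
    generalize countSubtrees G (A ∪ B) (v ∈ ·) = a at *
    have h3 := Nat.mul_le_mul_left m h1
    have h4 := Nat.mul_le_mul_left y hy
    have h5 := Nat.mul_le_mul_left (m * y) hx
    nlinarith

theorem numSubtreesContaining_eq (v : V) :
    numSubtreesContaining G v = countSubtrees G Finset.univ (v ∈ ·) := by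
  classical
  simp [numSubtreesContaining, countSubtrees, Fintype.card_subtype]

theorem numSubtrees_eq (v : V) :
    numSubtrees G = numSubtreesContaining G v + countSubtrees G Finset.univ (v ∉ ·) := by
  classical
  have h := countSubtrees_eq_add (G := G) Finset.univ (fun _ => True) (v ∈ ·)
  simp only [true_and] at h
  rw [numSubtreesContaining_eq, ← h]
  simp [numSubtrees, countSubtrees, Fintype.card_subtype]

/-- At most as many subtrees avoid a subtree core as contain it. -/
theorem countSubtrees_notMem_core_le (hG : G.IsTree) {c : V}
    (hc : ∀ x, numSubtreesContaining G x ≤ numSubtreesContaining G c) :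
    countSubtrees G Finset.univ (c ∉ ·) ≤ countSubtrees G Finset.univ (c ∈ ·) := by
  classical
  simp only [numSubtreesContaining_eq] at hc
  have hacyc := hG.isAcyclic
  have huniv : IsSubtree G Finset.univ := by
    refine ⟨⟨c, Finset.mem_univ c⟩, ?_⟩
    rw [Finset.coe_univ]
    exact (SimpleGraph.induceUnivIso G).connected_iff.2 hG.connected
  by_cases hne : (Finset.univ : Finset V) = {c}
  · rw [hne, countSubtrees_singleton_notMem]
    exact Nat.zero_le _
  obtain ⟨u₀, -, hu₀⟩ := huniv.exists_adj (Finset.mem_univ c) hne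
  obtain ⟨u, hu, hmax⟩ := (Finset.univ.filter (G.Adj c)).exists_max_image
    (fun u => countSubtrees G Finset.univ fun S => u ∈ S ∧ c ∉ S) ⟨u₀, by simpa using hu₀⟩
  simp only [Finset.mem_filter, Finset.mem_univ, true_and] at hu hmax
  obtain ⟨A, B, hAB, hcut⟩ := exists_isEdgeCut hacyc (Finset.mem_univ c) (Finset.mem_univ u) hu
  have hAB' : IsSubtree G (A ∪ B) := hAB ▸ huniv
  have hR : countSubtrees G Finset.univ (fun S => u ∈ S ∧ c ∉ S) =
      countSubtrees G B (u ∈ ·) := by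
    refine le_antisymm (countSubtrees_le fun S hS _ hS' => ⟨?_, hS'.1⟩)
      (countSubtrees_le fun S _ hSB hS => ⟨Finset.subset_univ S, hS,
        fun hv => hcut.disjoint c hcut.left_mem (hSB hv)⟩)
    exact (hcut.subset_or_subset hS (by simp [hAB]) hS'.2).resolve_left
      fun hSA => hcut.disjoint u (hSA hS'.1) hcut.right_mem
  have hQ : countSubtrees G Finset.univ (fun S => c ∈ S ∧ u ∉ S) ≤
      countSubtrees G A (c ∈ ·) := by
    refine countSubtrees_le fun S hS _ hS' => ⟨?_, hS'.1⟩
    exact (hcut.symm.subset_or_subset hS (by simp [Finset.union_comm B A, hAB])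
      hS'.2).resolve_left fun hSB => hcut.disjoint c hcut.left_mem (hSB hS'.1)
  have hcore := hc u
  rw [countSubtrees_eq_add _ (u ∈ ·) (c ∈ ·), countSubtrees_eq_add _ (c ∈ ·) (u ∈ ·), hR] at hcore
  have hcomm : countSubtrees G Finset.univ (fun S => u ∈ S ∧ c ∈ S) =
      countSubtrees G Finset.univ (fun S => c ∈ S ∧ u ∈ S) := by simp only [and_comm]
  have hyx : countSubtrees G B (u ∈ ·) ≤ countSubtrees G A (c ∈ ·) := by omega
  have hA := (hcut.isSubtree_left hAB').two_mul_countSubtrees_notMem_add_le_mul hacyc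
    hcut.left_mem (m := countSubtrees G B (u ∈ ·) + 1) fun w _ hw => by
      rw [← hR]
      exact Nat.add_le_add_right (le_trans
        (countSubtrees_le fun S _ _ hS => ⟨Finset.subset_univ S, hS⟩) (hmax w hw)) 1
  have hB := (hcut.isSubtree_right hAB').two_mul_countSubtrees_notMem_add_le hacyc hcut.right_mem
  have h1 := hcut.mul_le_countSubtrees
  have h2 := hcut.countSubtrees_notMem_le
  rw [hAB] at h1 h2
  generalize countSubtrees G A (c ∈ ·) = x at *
  generalize countSubtrees G B (u ∈ ·) = y at *
  nlinarith

end Counting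

theorem stmt1 {V : Type*} [Fintype V] (G : SimpleGraph V) (hG : G.IsTree)
    (c : V) (hc : ∀ x : V, numSubtreesContaining G x ≤ numSubtreesContaining G c) :
    |Real.log (1 + (numSubtreesContaining G c : ℝ)) - Real.log (numSubtrees G : ℝ)| ≤
      Real.log 2 := by
  have hle := countSubtrees_notMem_core_le hG hc
  have hpos := countSubtrees_mem_pos (G := G) (Finset.mem_univ c)
  have hN := numSubtrees_eq (G := G) c
  rw [← numSubtreesContaining_eq] at hle hpos
  have hlow : numSubtreesContaining G c ≤ numSubtrees G := by omega
  have hupp : numSubtrees G ≤ 2 * numSubtreesContaining G c := by omega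
  have hlow' : (numSubtreesContaining G c : ℝ) ≤ numSubtrees G := by exact_mod_cast hlow
  have hupp' : (numSubtrees G : ℝ) ≤ 2 * numSubtreesContaining G c := by exact_mod_cast hupp
  have hpos' : (1 : ℝ) ≤ numSubtreesContaining G c := by exact_mod_cast hpos
  rw [abs_sub_le_iff, sub_le_iff_le_add, sub_le_iff_le_add,
    ← Real.log_mul two_ne_zero (by linarith), ← Real.log_mul two_ne_zero (by linarith)]
  exact ⟨Real.log_le_log (by linarith) (by linarith), Real.log_le_log (by linarith) (by linarith)⟩
end

section
/- Let T be a finite tree and v a vertex of T. Then log(1 + N(T,v)) = Σ_{w ∈ V(T)} log(1 + 1/N_v(T,w)). -/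
/-- The abstract counterpart, for a parent function `par` rooted at `v`, of the
possibly empty subtrees growing away from `w`. -/
def IsRootedAt {V : Type*} (par : V → V) (v w : V) (S : Finset V) : Prop :=
  ∀ u ∈ S, u ≠ w → u ≠ v ∧ par u ∈ S

/-- One step towards the root. -/
def StepsUp {V : Type*} (par : V → V) (v a b : V) : Prop := a ≠ v ∧ par a = b

section Rooted

variable {V : Type*} {par : V → V} {d : V → ℕ} {v : V}

lemma IsRootedAt.stepsUp (hd : ∀ u, u ≠ v → d (par u) < d u) {w : V} {S : Finset V}
    (hS : IsRootedAt par v w S) {u : V} (hu : u ∈ S) :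
    Relation.ReflTransGen (StepsUp par v) u w ∧ w ∈ S := by
  induction h : d u using Nat.strong_induction_on generalizing u with
  | _ n ih =>
    by_cases huw : u = w
    · subst huw
      exact ⟨.refl, hu⟩
    · obtain ⟨h1, h2⟩ := hS u hu huw
      have := ih _ (h ▸ hd u h1) h2 rfl
      exact ⟨.head ⟨h1, rfl⟩ this.1, this.2⟩

lemma le_of_stepsUp (hd : ∀ u, u ≠ v → d (par u) < d u) {a b : V}
    (h : Relation.ReflTransGen (StepsUp par v) a b) : d b ≤ d a := by
  induction h with
  | refl => exact le_rfl
  | tail _ h ih => exact (h.2 ▸ (hd _ h.1).le).trans ih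

lemma not_stepsUp_of_child (hd : ∀ u, u ≠ v → d (par u) < d u) {w c : V}
    (hc : StepsUp par v c w) : ¬ Relation.ReflTransGen (StepsUp par v) w c := by
  intro h
  have h1 := le_of_stepsUp hd h
  have h2 := hd c hc.1
  rw [hc.2] at h2
  omega

lemma child_unique_of_le (hd : ∀ u, u ≠ v → d (par u) < d u) {w c c' : V}
    (hc : StepsUp par v c w) (hc' : StepsUp par v c' w)
    (h : Relation.ReflTransGen (StepsUp par v) c c') : c = c' := by
  rcases h.cases_head with h | ⟨x, hx, h⟩
  · exact h
  · obtain rfl : w = x := hc.2.symm.trans hx.2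
    exact absurd h (not_stepsUp_of_child hd hc')

/-- Two children of `w` with a common descendant agree. -/
lemma child_unique (hd : ∀ u, u ≠ v → d (par u) < d u) {u w c c' : V}
    (hc : StepsUp par v c w) (hc' : StepsUp par v c' w)
    (h : Relation.ReflTransGen (StepsUp par v) u c)
    (h' : Relation.ReflTransGen (StepsUp par v) u c') : c = c' := by
  have hu : Relator.RightUnique (StepsUp par v) := fun a b c h h' => h.2.symm.trans h'.2
  rcases Relation.ReflTransGen.total_of_right_unique hu h h' with h | h
  · exact child_unique_of_le hd hc hc' h
  · exact (child_unique_of_le hd hc' hc h).symm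

open Classical in
/-- A subtree with top vertex `w` amounts to a choice, for each child of `w`, of a possibly empty
subtree with that child as top vertex. -/
noncomputable def rootedEquiv [Fintype V] (hd : ∀ u, u ≠ v → d (par u) < d u) (w : V) :
    {S : Finset V // w ∈ S ∧ IsRootedAt par v w S} ≃
      ((c : {c : V // StepsUp par v c w}) → {S : Finset V // IsRootedAt par v c.1 S}) where
  toFun S c := ⟨S.1.filter fun u => Relation.ReflTransGen (StepsUp par v) u c.1, by
    intro u hu huc
    rw [Finset.mem_filter] at hu
    rcases hu.2.cases_head with h | ⟨x, hx, h⟩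
    · exact absurd h huc
    · have huw : u ≠ w := by
        rintro rfl
        exact not_stepsUp_of_child hd c.2 hu.2
      refine ⟨hx.1, Finset.mem_filter.2 ⟨(S.2.2 u hu.1 huw).2, ?_⟩⟩
      rwa [hx.2]⟩
  invFun F := ⟨insert w (Finset.univ.biUnion fun c => (F c).1), Finset.mem_insert_self _ _, by
    intro u hu huw
    obtain ⟨c, -, hc⟩ := Finset.mem_biUnion.1 (Finset.mem_of_mem_insert_of_ne hu huw)
    by_cases huc : u = c
    · rw [huc, c.2.2]
      exact ⟨c.2.1, Finset.mem_insert_self _ _⟩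
    · obtain ⟨h1, h2⟩ := (F c).2 u hc huc
      exact ⟨h1, Finset.mem_insert_of_mem (Finset.mem_biUnion.2 ⟨c, Finset.mem_univ _, h2⟩)⟩⟩
  left_inv S := by
    ext u
    simp only [Finset.mem_insert, Finset.mem_biUnion, Finset.mem_univ, true_and,
      Finset.mem_filter]
    constructor
    · rintro (rfl | ⟨c, hc, -⟩)
      exacts [S.2.1, hc]
    · intro hu
      rcases (S.2.2.stepsUp hd hu).1.cases_tail with h | ⟨c, hc, h⟩
      · exact .inl h.symm
      · exact .inr ⟨⟨c, h⟩, hu, hc⟩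
  right_inv F := by
    ext c u
    simp only [Finset.mem_insert, Finset.mem_biUnion, Finset.mem_univ, true_and,
      Finset.mem_filter]
    constructor
    · rintro ⟨rfl | ⟨c', hc'⟩, h⟩
      · exact absurd h (not_stepsUp_of_child hd c.2)
      · have := ((F c').2.stepsUp hd hc').1
        rwa [Subtype.ext (child_unique hd c.2 c'.2 h this)]
    · intro h
      exact ⟨.inr ⟨c, h⟩, ((F c).2.stepsUp hd h).1⟩

lemma card_isRootedAt [Fintype V] (hd : ∀ u, u ≠ v → d (par u) < d u) (c : V) :
    Nat.card {S : Finset V // IsRootedAt par v c S} =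
      1 + Nat.card {S : Finset V // c ∈ S ∧ IsRootedAt par v c S} := by
  classical
  rw [Nat.card_eq_fintype_card, Nat.card_eq_fintype_card, Fintype.card_subtype,
    Fintype.card_subtype]
  have : (Finset.univ.filter fun S : Finset V => IsRootedAt par v c S) =
      insert ∅ (Finset.univ.filter fun S : Finset V => c ∈ S ∧ IsRootedAt par v c S) := by
    ext S
    simp only [Finset.mem_filter, Finset.mem_univ, true_and, Finset.mem_insert]
    constructor
    · intro h
      rcases S.eq_empty_or_nonempty with rfl | ⟨u, hu⟩
      · exact .inl rfl
      · exact .inr ⟨(h.stepsUp hd hu).2, h⟩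
    · rintro (rfl | h)
      · intro u hu
        simp at hu
      · exact h.2
  rw [this, Finset.card_insert_of_notMem (by simp), add_comm]

open Classical in
lemma card_rooted_eq_prod [Fintype V] (hd : ∀ u, u ≠ v → d (par u) < d u) (w : V) :
    Nat.card {S : Finset V // w ∈ S ∧ IsRootedAt par v w S} =
      ∏ c with StepsUp par v c w,
        (1 + Nat.card {S : Finset V // c ∈ S ∧ IsRootedAt par v c S}) := by
  rw [Nat.card_congr (rootedEquiv hd w), Nat.card_pi,
    Finset.prod_subtype (p := fun c => StepsUp par v c w) _ (by simp)]
  exact Finset.prod_congr rfl fun c _ => card_isRootedAt hd c.1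

end Rooted

/-- Telescoping of logarithms along a rooted tree. -/
lemma log_one_add_eq_sum {V : Type*} [Fintype V] [DecidableEq V] (par : V → V) (v : V) (f : V → ℕ)
    (hf : ∀ w, f w = ∏ c with c ≠ v ∧ par c = w, (1 + f c)) :
    Real.log (1 + (f v : ℝ)) = ∑ w : V, Real.log (1 + 1 / (f w : ℝ)) := by
  have hpos : ∀ w, (0 : ℝ) < f w := fun w => by
    rw [hf w]
    positivity
  have hterm : ∀ w, Real.log (1 + 1 / (f w : ℝ)) =
      Real.log (1 + (f w : ℝ)) - ∑ c with c ≠ v ∧ par c = w, Real.log (1 + (f c : ℝ)) := by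
    intro w
    have h1 : ∑ c with c ≠ v ∧ par c = w, Real.log (1 + (f c : ℝ)) = Real.log (f w) := by
      rw [← Real.log_prod fun c _ => by positivity]
      congr 1
      rw [hf w]
      push_cast
      rfl
    rw [h1, ← Real.log_div (by positivity) (hpos w).ne']
    congr 1
    have := (hpos w).ne'
    field_simp
    ring
  rw [Finset.sum_congr rfl fun w _ => hterm w, Finset.sum_sub_distrib]
  have h2 : ∑ w : V, ∑ c with c ≠ v ∧ par c = w, Real.log (1 + (f c : ℝ)) =
      ∑ c with c ≠ v, Real.log (1 + (f c : ℝ)) := by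
    rw [← Finset.sum_fiberwise (Finset.univ.filter (· ≠ v)) par]
    simp only [Finset.filter_filter]
  rw [h2, Finset.filter_ne', ← Finset.add_sum_erase _ _ (Finset.mem_univ v)]
  ring

/-- In a tree, parents towards a root `v` give the first step of every path to `v`. -/
lemma exists_parent {V : Type*} {G : SimpleGraph V} (hG : G.IsTree) (v : V) :
    ∃ (P : ∀ u, G.Walk u v) (par : V → V), (∀ u, ∀ p : G.Walk u v, p.IsPath → p = P u) ∧
      (∀ u, (P u).IsPath) ∧
      ∀ u, u ≠ v → ∃ h : G.Adj u (par u), P u = .cons h (P (par u)) := by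
  choose P hP hPu using fun u => hG.existsUnique_path u v
  refine ⟨P, fun u => (P u).snd, hPu, hP, fun u hu => ?_⟩
  have hnil : ¬ (P u).Nil := SimpleGraph.Walk.not_nil_of_ne hu
  refine ⟨(P u).adj_snd hnil, ?_⟩
  rw [← hPu _ _ (hP u).tail, SimpleGraph.Walk.cons_tail_eq _ hnil]

lemma isSubtree_growingAway_iff {V : Type*} {G : SimpleGraph V} (hG : G.IsTree) {v : V}
    {P : ∀ u, G.Walk u v} {par : V → V} (hPu : ∀ u, ∀ p : G.Walk u v, p.IsPath → p = P u)
    (hP : ∀ u, (P u).IsPath)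
    (hpar : ∀ u, u ≠ v → ∃ h : G.Adj u (par u), P u = .cons h (P (par u)))
    (w : V) (S : Finset V) :
    (IsSubtree G S ∧ w ∈ S ∧ ∀ u ∈ S, ∀ p : G.Walk u v, p.IsPath → w ∈ p.support) ↔
      w ∈ S ∧ IsRootedAt par v w S := by
  classical
  constructor
  · rintro ⟨hS, hw, hpath⟩
    refine ⟨hw, fun u hu huw => ?_⟩
    have hwu := hpath u hu (P u) (hP u)
    have huv : u ≠ v := by
      rintro rfl
      rw [← hPu _ .nil .nil] at hwu
      simp only [SimpleGraph.Walk.support_nil, List.mem_singleton] at hwu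
      exact huw hwu.symm
    refine ⟨huv, ?_⟩
    obtain ⟨q, hq⟩ := (hS.2.preconnected ⟨u, hu⟩ ⟨w, hw⟩).exists_isPath
    have hq' : (q.map (SimpleGraph.Embedding.induce (S : Set V)).toHom).IsPath :=
      hq.map Subtype.val_injective
    obtain ⟨h, hcons⟩ := hpar u huv
    have hpw : w ∈ (P (par u)).support := by
      rw [hcons, SimpleGraph.Walk.support_cons, List.mem_cons] at hwu
      exact hwu.resolve_left (Ne.symm huw)
    have hpath' : (SimpleGraph.Walk.cons h ((P (par u)).takeUntil w hpw)).IsPath := by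
      have := hP u
      rw [hcons, SimpleGraph.Walk.cons_isPath_iff] at this
      rw [SimpleGraph.Walk.cons_isPath_iff]
      exact ⟨this.1.takeUntil _, fun h' => this.2
        (SimpleGraph.Walk.support_takeUntil_subset_support _ _ h')⟩
    have heq := (hG.existsUnique_path u w).unique hpath' hq'
    have hmem : par u ∈ (q.map (SimpleGraph.Embedding.induce (S : Set V)).toHom).support := by
      rw [← heq]
      simp
    rw [SimpleGraph.Walk.support_map, List.mem_map] at hmem
    obtain ⟨x, -, hx⟩ := hmem
    rw [← hx]
    exact x.2
  · rintro ⟨hw, hS⟩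
    have key : ∀ n, ∀ u (hu : u ∈ S), (P u).length = n →
        (G.induce (S : Set V)).Reachable ⟨u, hu⟩ ⟨w, hw⟩ ∧ w ∈ (P u).support := by
      intro n
      induction n with
      | zero =>
        intro u hu hn
        by_cases huw : u = w
        · subst huw
          exact ⟨.rfl, SimpleGraph.Walk.start_mem_support _⟩
        · exact absurd (SimpleGraph.Walk.eq_of_length_eq_zero hn) (hS u hu huw).1
      | succ n ih =>
        intro u hu hn
        by_cases huw : u = w
        · subst huw
          exact ⟨.rfl, SimpleGraph.Walk.start_mem_support _⟩
        · obtain ⟨huv, hp⟩ := hS u hu huw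
          obtain ⟨h, hcons⟩ := hpar u huv
          rw [hcons, SimpleGraph.Walk.length_cons] at hn
          obtain ⟨h1, h2⟩ := ih _ hp (by omega)
          refine ⟨SimpleGraph.Reachable.trans (SimpleGraph.Adj.reachable ?_) h1, ?_⟩
          · exact h
          · rw [hcons, SimpleGraph.Walk.support_cons]
            exact List.mem_cons_of_mem _ h2
    refine ⟨⟨⟨w, hw⟩, ?_⟩, hw, fun u hu p hp => ?_⟩
    · rw [SimpleGraph.connected_iff_exists_forall_reachable]
      exact ⟨⟨w, hw⟩, fun u => (key _ u.1 u.2 rfl).1.symm⟩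
    · rw [hPu u p hp]
      exact (key _ u hu rfl).2

lemma numSubtreesContaining_eq_growingAway {V : Type*} [Fintype V] (G : SimpleGraph V) (v : V) :
    numSubtreesContaining G v = numSubtreesGrowingAway G v v :=
  Nat.card_congr <| Equiv.subtypeEquivRight fun _ =>
    ⟨fun h => ⟨h.1, h.2, fun _ _ p _ => p.end_mem_support⟩, fun h => ⟨h.1, h.2.1⟩⟩

theorem stmt2 {V : Type*} [Fintype V] (G : SimpleGraph V) (hG : G.IsTree) (v : V) :
    Real.log (1 + (numSubtreesContaining G v : ℝ)) =
      ∑ w : V, Real.log (1 + 1 / (numSubtreesGrowingAway G v w : ℝ)) := by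
  classical
  obtain ⟨P, par, hPu, hP, hpar⟩ := exists_parent hG v
  have hd : ∀ u, u ≠ v → (P (par u)).length < (P u).length := fun u hu => by
    obtain ⟨h, hcons⟩ := hpar u hu
    rw [hcons, SimpleGraph.Walk.length_cons]
    exact Nat.lt_succ_self _
  have hcard : ∀ w, numSubtreesGrowingAway G v w =
      Nat.card {S : Finset V // w ∈ S ∧ IsRootedAt par v w S} := fun w =>
    Nat.card_congr <| Equiv.subtypeEquivRight (isSubtree_growingAway_iff hG hPu hP hpar w)
  rw [numSubtreesContaining_eq_growingAway]
  refine log_one_add_eq_sum par v (numSubtreesGrowingAway G v) fun w => ?_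
  simp only [hcard]
  rw [card_rooted_eq_prod (d := fun u => (P u).length) hd w]
  exact Finset.prod_congr (Finset.filter_congr fun _ _ => Iff.rfl) fun _ _ => rfl
end

section
/- Let T be a finite tree with at least two vertices. Then |log N(T) − Σ_{w ∈ V(T)} log(1 + 1/M(T,w))| ≤ 2 log 2. -/
open Finset

namespace SubtreeCount

/-- `y` lies on every walk from `a` to `b`. -/
def Separates {V : Type*} (G : SimpleGraph V) (y a b : V) : Prop :=
  ∀ w : G.Walk a b, y ∈ w.support

section Separation

variable {V : Type*} {G : SimpleGraph V} {a b c r u v w x y z : V}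

lemma separates_left (a b : V) : Separates G a a b := fun w => w.start_mem_support

lemma separates_right (a b : V) : Separates G b a b := fun w => w.end_mem_support

lemma Separates.eq_of_same (h : Separates G y a a) : y = a := by
  simpa using h .nil

lemma Separates.trans (hy : Separates G y v x) (hz : Separates G z v y) : Separates G z v x := by
  classical
  intro w
  exact w.support_takeUntil_subset_support (hy w) (hz (w.takeUntil y (hy w)))

lemma exists_walk_of_not_separates (h : ¬ Separates G y a b) :
    ∃ w : G.Walk a b, y ∉ w.support := by
  simpa [Separates] using h

lemma not_separates_of_walk (w : G.Walk a b) (h : y ∉ w.support) : ¬ Separates G y a b :=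
  fun hs => h (hs w)

lemma not_separates_trans (hab : ¬ Separates G y a b) (hbc : ¬ Separates G y b c) :
    ¬ Separates G y a c := by
  obtain ⟨p, hp⟩ := exists_walk_of_not_separates hab
  obtain ⟨q, hq⟩ := exists_walk_of_not_separates hbc
  exact not_separates_of_walk (p.append q)
    (by simp [SimpleGraph.Walk.mem_support_append_iff, hp, hq])

lemma Separates.symm (h : Separates G y a b) : Separates G y b a := fun w => by
  simpa using h w.reverse

/-- In a connected graph, if `z` separates `c` from `y ≠ z`, and `y` separates `c` from `x`,
then `y` separates `z` from `x`. -/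
lemma Separates.of_prefix (hG : G.Connected) (hz : Separates G z c y) (hzy : z ≠ y)
    (hy : Separates G y c x) : Separates G y z x := by
  classical
  obtain ⟨p, hp⟩ := (hG c y).exists_isPath
  have hq := SimpleGraph.Walk.endpoint_notMem_support_takeUntil hp (hz p) hzy.symm
  by_contra hn
  exact not_separates_trans (not_separates_of_walk _ hq) hn hy

lemma separates_or_of_adj (hG : G.IsTree) (huv : G.Adj v u) (x : V) :
    Separates G u v x ∨ Separates G v u x := by
  by_contra! h
  obtain ⟨p, hp⟩ := exists_walk_of_not_separates h.1
  obtain ⟨q, hq⟩ := exists_walk_of_not_separates h.2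
  have hb := SimpleGraph.isAcyclic_iff_forall_adj_isBridge.1 hG.isAcyclic huv
  have he := SimpleGraph.isBridge_iff_forall_walk_mem_edges.1 hb (p.append q.reverse)
  rw [SimpleGraph.Walk.edges_append, List.mem_append, SimpleGraph.Walk.edges_reverse,
    List.mem_reverse] at he
  rcases he with he | he
  · exact hp (p.snd_mem_support_of_mem_edges he)
  · exact hq (q.fst_mem_support_of_mem_edges he)

lemma Separates.not_swap (hG : G.Connected) (huv : u ≠ v) (h : Separates G u v x) :
    ¬ Separates G v u x := fun h' => by
  have := h.symm.of_prefix hG huv h'.symm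
  exact huv this.eq_of_same.symm

lemma existsUnique_adj_separates (hG : G.IsTree) (hw : w ≠ r) :
    ∃! p, G.Adj w p ∧ Separates G p w r := by
  obtain ⟨q, hq⟩ := (hG.connected w r).exists_isPath
  cases q with
  | nil => exact absurd rfl hw
  | @cons _ p _ hwp q =>
    rw [SimpleGraph.Walk.cons_isPath_iff] at hq
    have hpr : ¬ Separates G w p r := not_separates_of_walk q hq.2
    refine ⟨p, ⟨hwp, (separates_or_of_adj hG hwp r).resolve_right hpr⟩, ?_⟩
    rintro u ⟨hwu, hu⟩
    by_contra hne
    have hur := hu.not_swap hG.connected hwu.ne'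
    have hpu : ¬ Separates G w p u := not_separates_trans hpr fun h => hur h.symm
    have hup := (separates_or_of_adj hG hwp u).resolve_right hpu hwu.toWalk
    simp [hwp.ne', Ne.symm hne] at hup

lemma separates_of_mem_path (hG : G.IsTree) {p : G.Walk a b} (hp : p.IsPath)
    (hy : y ∈ p.support) : Separates G y a b := by
  classical
  intro w
  have := (hG.isAcyclic.subsingleton_path a b).elim ⟨p, hp⟩ w.toPath
  rw [Subtype.ext_iff] at this
  rw [show p = w.toPath from this] at hy
  exact w.support_toPath_subset_support hy

lemma mem_of_separates {S : Finset V} (hS : IsSubtree G S) (ha : a ∈ S) (hb : b ∈ S)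
    (hy : Separates G y a b) : y ∈ S := by
  obtain ⟨w⟩ := hS.2.preconnected ⟨a, ha⟩ ⟨b, hb⟩
  have := hy (w.map (SimpleGraph.Embedding.induce (S : Set V)).toHom)
  erw [SimpleGraph.Walk.support_map, List.mem_map] at this
  obtain ⟨z, -, rfl⟩ := this
  exact z.2

lemma isSubtree_of_forall_separates (hG : G.IsTree) {S : Finset V} (hv : v ∈ S)
    (h : ∀ x ∈ S, ∀ y, Separates G y v x → y ∈ S) : IsSubtree G S := by
  refine ⟨⟨v, hv⟩, ?_⟩
  rw [SimpleGraph.connected_iff_exists_forall_reachable]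
  refine ⟨⟨v, hv⟩, fun ⟨x, hx⟩ => ?_⟩
  obtain ⟨p, hp⟩ := (hG.connected v x).exists_isPath
  exact ⟨p.induce _ fun y hy => h x hx y (separates_of_mem_path hG hp hy)⟩

lemma isSubtree_singleton (hG : G.IsTree) (v : V) : IsSubtree G {v} :=
  isSubtree_of_forall_separates hG (mem_singleton_self v) fun x hx y hy => by
    rw [mem_singleton] at hx ⊢
    subst hx
    exact hy.eq_of_same

end Separation

section EdgeSplitting

open scoped Classical

variable {V : Type*} {G : SimpleGraph V} {u v : V}

/-- The part of a subtree through the edge `vu` on the side of `v`. -/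
noncomputable def sidePart (G : SimpleGraph V) (v u : V) (S : Finset V) : Finset V :=
  {x ∈ S | ¬ Separates G u v x}

lemma mem_sidePart {S : Finset V} {x : V} :
    x ∈ sidePart G v u S ↔ x ∈ S ∧ ¬ Separates G u v x := by
  simp [sidePart]

lemma isSubtree_sidePart (hG : G.IsTree) {S : Finset V} (hS : IsSubtree G S) (hv : v ∈ S)
    (huv : u ≠ v) : IsSubtree G (sidePart G v u S) := by
  refine isSubtree_of_forall_separates hG (mem_sidePart.2 ⟨hv, fun h => huv h.eq_of_same⟩) ?_
  intro x hx y hy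
  rw [mem_sidePart] at hx ⊢
  exact ⟨mem_of_separates hS hv hx.1 hy, fun h => hx.2 (hy.trans h)⟩

lemma not_separates_of_notMem {S : Finset V} (hS : IsSubtree G S) (hv : v ∈ S) (hu : u ∉ S)
    {x : V} (hx : x ∈ S) : ¬ Separates G u v x :=
  fun h => hu (mem_of_separates hS hv hx h)

lemma isSubtree_union (hG : G.IsTree) (hvu : G.Adj v u) {A B : Finset V}
    (hA : IsSubtree G A) (hB : IsSubtree G B) (hvA : v ∈ A) (huB : u ∈ B) :
    IsSubtree G (A ∪ B) := by
  refine isSubtree_of_forall_separates hG (mem_union_left _ hvA) fun x hx y hy => ?_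
  rw [mem_union] at hx ⊢
  rcases hx with hx | hx
  · exact Or.inl (mem_of_separates hA hvA hx hy)
  · by_cases hyv : y = v
    · exact Or.inl (hyv ▸ hvA)
    · refine Or.inr (mem_of_separates hB huB hx fun w => ?_)
      have := hy (.cons hvu w)
      simpa [hyv] using this

lemma sidePart_union_left (hG : G.IsTree) (hvu : G.Adj v u) {A B : Finset V}
    (hA : IsSubtree G A) (hB : IsSubtree G B) (hvA : v ∈ A) (huB : u ∈ B) (huA : u ∉ A)
    (hvB : v ∉ B) : sidePart G v u (A ∪ B) = A := by
  ext x
  rw [mem_sidePart, mem_union]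
  constructor
  · rintro ⟨hx | hx, hn⟩
    · exact hx
    · exact absurd ((separates_or_of_adj hG hvu x).resolve_right
        (not_separates_of_notMem hB huB hvB hx)) hn
  · exact fun hx => ⟨Or.inl hx, not_separates_of_notMem hA hvA huA hx⟩

end EdgeSplitting

section Counting

open scoped Classical

variable {V : Type*} [Fintype V] {G : SimpleGraph V} {r u v w : V}

/-- The subtrees containing `v` and disjoint from `X`. -/
noncomputable def subtreesAvoiding (G : SimpleGraph V) (v : V) (X : Finset V) :
    Finset (Finset V) :=
  {S | IsSubtree G S ∧ v ∈ S ∧ Disjoint S X}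

/-- The neighbours of `v`, as a finset. -/
noncomputable def neighbors (G : SimpleGraph V) (v : V) : Finset V := {u | G.Adj v u}

lemma mem_neighbors : u ∈ neighbors G v ↔ G.Adj v u := by simp [neighbors]

lemma mem_subtreesAvoiding {X S : Finset V} :
    S ∈ subtreesAvoiding G v X ↔ IsSubtree G S ∧ v ∈ S ∧ Disjoint S X := by
  simp [subtreesAvoiding]

lemma card_subtreesAvoiding_singleton (v u : V) :
    #(subtreesAvoiding G v {u}) = numSubtreesWithWithout G v u := by
  rw [numSubtreesWithWithout, Nat.card_eq_fintype_card, Fintype.card_subtype]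
  simp [subtreesAvoiding]

lemma card_subtreesAvoiding_filter_mem (hG : G.IsTree) (hvu : G.Adj v u) {X : Finset V}
    (hX : X ⊆ neighbors G v) (hu : u ∉ X) :
    #{S ∈ subtreesAvoiding G v X | u ∈ S} =
      #(subtreesAvoiding G v (insert u X)) * #(subtreesAvoiding G u {v}) := by
  rw [← card_product]
  refine card_nbij' (fun S => (sidePart G v u S, sidePart G u v S)) (fun P => P.1 ∪ P.2)
    ?_ ?_ ?_ ?_
  · intro S hS
    simp only [coe_filter, Set.mem_ofPred_eq, mem_subtreesAvoiding] at hS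
    obtain ⟨⟨hS, hv, hd⟩, huS⟩ := hS
    simp only [coe_product, Set.mem_prod, mem_coe, mem_subtreesAvoiding, disjoint_insert_right,
      disjoint_singleton_right]
    refine ⟨⟨isSubtree_sidePart hG hS hv hvu.ne', ?_, ?_, ?_⟩,
      isSubtree_sidePart hG hS huS hvu.ne, ?_, ?_⟩
    · exact mem_sidePart.2 ⟨hv, fun h => hvu.ne' h.eq_of_same⟩
    · exact fun h => (mem_sidePart.1 h).2 (separates_right _ _)
    · exact hd.mono_left fun x hx => (mem_sidePart.1 hx).1
    · exact mem_sidePart.2 ⟨huS, fun h => hvu.ne h.eq_of_same⟩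
    · exact fun h => (mem_sidePart.1 h).2 (separates_right _ _)
  · rintro ⟨A, B⟩ hP
    simp only [coe_product, Set.mem_prod, mem_coe, mem_subtreesAvoiding, disjoint_insert_right,
      disjoint_singleton_right] at hP
    obtain ⟨⟨hA, hvA, huA, hAX⟩, hB, huB, hvB⟩ := hP
    simp only [coe_filter, Set.mem_ofPred_eq, mem_subtreesAvoiding, disjoint_union_left]
    refine ⟨⟨isSubtree_union hG hvu hA hB hvA huB, mem_union_left _ hvA, hAX, ?_⟩,
      mem_union_right _ huB⟩
    rw [disjoint_left]
    intro x hxB hxX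
    have hvx := mem_neighbors.1 (hX hxX)
    have := (separates_or_of_adj hG hvu x).resolve_right
      (not_separates_of_notMem hB huB hvB hxB) hvx.toWalk
    have hux : u ≠ x := fun h => hu (h ▸ hxX)
    simp [hvu.ne', hux] at this
  · intro S hS
    ext x
    simp only [mem_union, mem_sidePart, ← and_or_left, and_iff_left_iff_imp]
    intro _
    by_contra! h
    exact h.1.not_swap hG.connected hvu.ne' h.2
  · rintro ⟨A, B⟩ hP
    simp only [coe_product, Set.mem_prod, mem_coe, mem_subtreesAvoiding, disjoint_insert_right,
      disjoint_singleton_right] at hP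
    obtain ⟨⟨hA, hvA, huA, -⟩, hB, huB, hvB⟩ := hP
    refine Prod.ext (sidePart_union_left hG hvu hA hB hvA huB huA hvB) ?_
    simp only
    rw [union_comm]
    exact sidePart_union_left hG hvu.symm hB hA huB hvA hvB huA

lemma card_subtreesAvoiding_eq_mul (hG : G.IsTree) (hvu : G.Adj v u) {X : Finset V}
    (hX : X ⊆ neighbors G v) (hu : u ∉ X) :
    #(subtreesAvoiding G v X) =
      (1 + #(subtreesAvoiding G u {v})) * #(subtreesAvoiding G v (insert u X)) := by
  rw [← card_filter_add_card_filter_not (s := subtreesAvoiding G v X) (fun S => u ∈ S),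
    card_subtreesAvoiding_filter_mem hG hvu hX hu]
  have : {S ∈ subtreesAvoiding G v X | u ∉ S} = subtreesAvoiding G v (insert u X) := by
    ext S
    simp only [mem_filter, mem_subtreesAvoiding, disjoint_insert_right]
    tauto
  rw [this]
  ring

lemma subtreesAvoiding_neighbors (hG : G.IsTree) (v : V) :
    subtreesAvoiding G v (neighbors G v) = {{v}} := by
  ext S
  simp only [mem_subtreesAvoiding, mem_singleton]
  constructor
  · rintro ⟨hS, hv, hd⟩
    refine eq_singleton_iff_unique_mem.2 ⟨hv, fun x hx => ?_⟩
    by_contra hne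
    obtain ⟨p, ⟨hvp, hp⟩, -⟩ := existsUnique_adj_separates (w := v) (r := x) hG (Ne.symm hne)
    exact disjoint_left.1 hd (mem_of_separates hS hv hx hp) (mem_neighbors.2 hvp)
  · rintro rfl
    exact ⟨isSubtree_singleton hG v, mem_singleton_self v, by simp [mem_neighbors]⟩

lemma card_subtreesAvoiding_sdiff (hG : G.IsTree) (v : V) {Y : Finset V}
    (hY : Y ⊆ neighbors G v) :
    #(subtreesAvoiding G v (neighbors G v \ Y)) =
      ∏ w ∈ Y, (1 + #(subtreesAvoiding G w {v})) := by
  induction Y using Finset.induction_on with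
  | empty => simp [subtreesAvoiding_neighbors hG]
  | insert u Y hu ih =>
    have huv := hY (mem_insert_self u Y)
    rw [prod_insert hu, ← ih ((subset_insert _ _).trans hY),
      card_subtreesAvoiding_eq_mul hG (mem_neighbors.1 huv) sdiff_subset (by simp)]
    congr 3
    ext x
    simp only [mem_insert, mem_sdiff]
    grind

/-- The number of subtrees containing `v`. -/
noncomputable def numAt (G : SimpleGraph V) (v : V) : ℕ := #(subtreesAvoiding G v ∅)

/-- The number of subtrees containing `v` but not `u`. -/
local notation "η" => numSubtreesWithWithout G

lemma numAt_eq_prod (hG : G.IsTree) (v : V) :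
    numAt G v = ∏ w ∈ neighbors G v, (1 + η w v) := by
  have := card_subtreesAvoiding_sdiff hG v (Subset.refl (neighbors G v))
  simpa only [numAt, sdiff_self, bot_eq_empty, card_subtreesAvoiding_singleton] using this

lemma numSubtreesWithWithout_eq_prod (hG : G.IsTree) (hvu : G.Adj v u) :
    η v u = ∏ w ∈ (neighbors G v).erase u, (1 + η w v) := by
  have := card_subtreesAvoiding_sdiff hG v (erase_subset u (neighbors G v))
  rw [sdiff_erase_self (mem_neighbors.2 hvu)] at this
  simpa only [card_subtreesAvoiding_singleton] using this

lemma numAt_eq_mul (hG : G.IsTree) (hvu : G.Adj v u) :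
    numAt G v = (1 + η u v) * η v u := by
  rw [numAt_eq_prod hG, numSubtreesWithWithout_eq_prod hG hvu,
    mul_prod_erase _ (fun w => 1 + η w v) (mem_neighbors.2 hvu)]

lemma numSubtreesWithWithout_pos (hG : G.IsTree) (hvu : G.Adj v u) : 0 < η v u := by
  rw [numSubtreesWithWithout_eq_prod hG hvu]
  exact prod_pos fun _ _ => by omega

lemma one_add_le_of_adj (hG : G.IsTree) (hvu : G.Adj v u) (hvw : G.Adj v w) (h : w ≠ u) :
    1 + η w v ≤ η v u := by
  rw [numSubtreesWithWithout_eq_prod hG hvu]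
  exact single_le_prod' (f := fun w => 1 + η w v) (fun _ _ => by omega)
    (mem_erase.2 ⟨h, mem_neighbors.2 hvw⟩)

/-- The neighbour of `w` on the way to `r` (and `w` itself if there is none). -/
noncomputable def parent (G : SimpleGraph V) (r w : V) : V :=
  if h : ∃ p, G.Adj w p ∧ Separates G p w r then h.choose else w

lemma parent_spec (hG : G.IsTree) (hw : w ≠ r) :
    G.Adj w (parent G r w) ∧ Separates G (parent G r w) w r := by
  have h := (existsUnique_adj_separates hG hw).exists
  rw [parent, dif_pos h]
  exact h.choose_spec

lemma eq_parent (hG : G.IsTree) (hw : w ≠ r) (hu : G.Adj w u) (hs : Separates G u w r) :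
    parent G r w = u :=
  (existsUnique_adj_separates hG hw).unique (parent_spec hG hw) ⟨hu, hs⟩

lemma children_root (hG : G.IsTree) (r : V) :
    {w ∈ univ.erase r | parent G r w = r} = neighbors G r := by
  ext w
  simp only [mem_filter, mem_erase, mem_univ, and_true, mem_neighbors]
  constructor
  · rintro ⟨hw, h⟩
    exact h ▸ (parent_spec hG hw).1.symm
  · exact fun h => ⟨h.ne', eq_parent hG h.ne' h.symm (separates_right _ _)⟩

lemma children_of_ne_root (hG : G.IsTree) (hv : v ≠ r) :
    {w ∈ univ.erase r | parent G r w = v} = (neighbors G v).erase (parent G r v) := by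
  ext w
  simp only [mem_filter, mem_erase, mem_univ, and_true, mem_neighbors]
  constructor
  · rintro ⟨hw, rfl⟩
    have h := parent_spec hG hw
    refine ⟨fun hp => ?_, h.1.symm⟩
    have h' := (parent_spec hG hv).2
    rw [← hp] at h'
    exact h.2.not_swap hG.connected h.1.ne' h'
  · rintro ⟨hne, hvw⟩
    have hs : Separates G v w r := (separates_or_of_adj hG hvw r).resolve_left
      fun h => hne (eq_parent hG hv hvw h).symm
    have hw : w ≠ r := by
      rintro rfl
      exact hv hs.eq_of_same
    exact ⟨hw, eq_parent hG hw hvw.symm hs⟩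

/-- Multiplying the branch recursion over all vertices telescopes. -/
lemma prod_one_add_eq (hG : G.IsTree) (r : V) :
    ∏ w ∈ univ.erase r, (1 + η w (parent G r w)) =
      numAt G r * ∏ w ∈ univ.erase r, η w (parent G r w) := by
  rw [← prod_fiberwise (univ.erase r) (parent G r), ← mul_prod_erase univ _ (mem_univ r)]
  congr 1
  · rw [numAt_eq_prod hG, ← children_root hG r]
    exact prod_congr rfl fun w hw => by rw [(mem_filter.1 hw).2]
  · refine prod_congr rfl fun v hv => ?_
    have hvr := ne_of_mem_erase hv
    rw [numSubtreesWithWithout_eq_prod hG (parent_spec hG hvr).1, ← children_of_ne_root hG hvr]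
    exact prod_congr rfl fun w hw => by rw [(mem_filter.1 hw).2]

lemma sum_log_one_add_eq (hG : G.IsTree) (r : V) :
    ∑ w ∈ univ.erase r, Real.log (1 + 1 / (η w (parent G r w) : ℝ)) =
      Real.log (numAt G r) := by
  have hpos : ∀ w ∈ univ.erase r, (0 : ℝ) < η w (parent G r w) := fun w hw =>
    Nat.cast_pos.2 (numSubtreesWithWithout_pos hG (parent_spec hG (ne_of_mem_erase hw)).1)
  rw [← Real.log_prod fun w hw => by have := hpos w hw; positivity]
  congr 1
  have h := congrArg (Nat.cast : ℕ → ℝ) (prod_one_add_eq hG r)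
  push_cast at h
  have hne : ∏ w ∈ univ.erase r, (η w (parent G r w) : ℝ) ≠ 0 := (prod_pos hpos).ne'
  rw [eq_div_of_mul_eq hne h.symm, ← prod_div_distrib]
  refine prod_congr rfl fun w hw => ?_
  have := (hpos w hw).ne'
  field_simp
  ring

lemma numAt_le_iff (hG : G.IsTree) (hvu : G.Adj v u) :
    numAt G v ≤ numAt G u ↔ η v u ≤ η u v := by
  rw [numAt_eq_mul hG hvu, numAt_eq_mul hG hvu.symm]
  constructor <;> intro h <;> nlinarith

/-- When the root maximises `numAt`, every edge is dominated by its end closer to the root. -/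
lemma le_of_isMax (hG : G.IsTree) (hr : ∀ v, numAt G v ≤ numAt G r) (hw : w ≠ r) :
    η w (parent G r w) ≤ η (parent G r w) w := by
  let B : Finset V := {w | w ≠ r ∧ η (parent G r w) w < η w (parent G r w)}
  suffices hB : ¬ B.Nonempty by
    by_contra! h
    exact hB ⟨w, by simp [B, hw, h]⟩
  intro hB
  obtain ⟨w, hwB, hmax⟩ := exists_max_image B (fun w => η w (parent G r w)) hB
  obtain ⟨hw, hlt⟩ : w ≠ r ∧ η (parent G r w) w < η w (parent G r w) := by
    simpa [B] using hwB
  obtain ⟨hadj, hsep⟩ := parent_spec hG hw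
  by_cases hp : parent G r w = r
  · rw [hp] at hadj hlt
    exact hlt.not_ge ((numAt_le_iff hG hadj).1 (hr w))
  · obtain ⟨hadj', hsep'⟩ := parent_spec hG hp
    have hne : w ≠ parent G r (parent G r w) := fun h => by
      rw [← h] at hsep'
      exact hsep.not_swap hG.connected hadj.ne' hsep'
    have h1 := one_add_le_of_adj hG hadj' hadj.symm hne
    have h2 := one_add_le_of_adj hG hadj.symm hadj' hne.symm
    have h3 := hmax (parent G r w)
      (by simp only [B, mem_filter, mem_univ, true_and]; exact ⟨hp, by omega⟩)
    omega

lemma subtreeM_eq (hG : G.IsTree) (hr : ∀ v, numAt G v ≤ numAt G r) (hw : w ≠ r) :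
    subtreeM G w = η w (parent G r w) := by
  obtain ⟨hadj, -⟩ := parent_spec hG hw
  refine le_antisymm (Nat.sInf_le ⟨_, hadj, rfl⟩) (le_csInf ⟨_, _, hadj, rfl⟩ ?_)
  rintro _ ⟨u, hu, rfl⟩
  by_cases h : u = parent G r w
  · rw [h]
  · have := one_add_le_of_adj hG hu hadj (Ne.symm h)
    have := le_of_isMax hG hr hw
    simp only
    omega

lemma subtreeM_pos (hG : G.IsTree) (hvu : G.Adj v u) : 0 < subtreeM G v := by
  obtain ⟨u, hu, h⟩ := Nat.sInf_mem (s := (fun u => η v u) '' G.neighborSet v) ⟨_, u, hvu, rfl⟩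
  rw [subtreeM, ← h]
  exact numSubtreesWithWithout_pos hG hu

/-- The subtrees lying in the branch at the neighbour `c` of `r`. -/
noncomputable def branchSubtrees (G : SimpleGraph V) (c r : V) : Finset (Finset V) :=
  {S | IsSubtree G S ∧ ∀ x ∈ S, ¬ Separates G r c x}

/-- The union of the paths from `c` to the elements of `S`. -/
noncomputable def hullFrom (G : SimpleGraph V) (c : V) (S : Finset V) : Finset V :=
  {y | ∃ x ∈ S, Separates G y c x}

lemma mem_hullFrom {c y : V} {S : Finset V} :
    y ∈ hullFrom G c S ↔ ∃ x ∈ S, Separates G y c x := by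
  simp [hullFrom]

lemma subset_hullFrom (c : V) (S : Finset V) : S ⊆ hullFrom G c S :=
  fun x hx => mem_hullFrom.2 ⟨x, hx, separates_right _ _⟩

lemma card_branchSubtrees_le (hG : G.IsTree) (c r : V) :
    #(branchSubtrees G c r) ≤ η c r * (1 + η c r) := by
  have key : #(branchSubtrees G c r) ≤
      #(subtreesAvoiding G c {r} ×ˢ insert ∅ (subtreesAvoiding G c {r})) := by
    refine card_le_card_of_injOn (fun S => (hullFrom G c S, hullFrom G c S \ S)) ?_ ?_
    · intro S hS
      simp only [branchSubtrees, coe_filter, mem_univ, true_and, Set.mem_ofPred_eq] at hS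
      obtain ⟨hS, hb⟩ := hS
      have hsub : ∀ y ∈ hullFrom G c S, ∀ z, Separates G z c y → z ∈ hullFrom G c S := by
        intro y hy z hz
        obtain ⟨x, hx, hy⟩ := mem_hullFrom.1 hy
        exact mem_hullFrom.2 ⟨x, hx, hy.trans hz⟩
      have hr : r ∉ hullFrom G c S := fun h => by
        obtain ⟨x, hx, h⟩ := mem_hullFrom.1 h
        exact hb x hx h
      have hc : c ∈ hullFrom G c S := by
        obtain ⟨x, hx⟩ := hS.1
        exact mem_hullFrom.2 ⟨x, hx, separates_left _ _⟩
      have hclosed : ∀ y ∈ hullFrom G c S \ S, ∀ z, Separates G z c y →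
          z ∈ hullFrom G c S \ S := by
        intro y hy z hz
        obtain ⟨hy, hyS⟩ := mem_sdiff.1 hy
        refine mem_sdiff.2 ⟨hsub y hy z hz, fun hzS => hyS ?_⟩
        obtain ⟨x, hx, hyx⟩ := mem_hullFrom.1 hy
        exact mem_of_separates hS hzS hx
          (hz.of_prefix hG.connected (fun h => hyS (h ▸ hzS)) hyx)
      simp only [coe_product, Set.mem_prod, mem_coe, mem_insert, mem_subtreesAvoiding,
        disjoint_singleton_right]
      refine ⟨⟨isSubtree_of_forall_separates hG hc hsub, hc, hr⟩, ?_⟩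
      rcases (hullFrom G c S \ S).eq_empty_or_nonempty with h | ⟨y, hy⟩
      · exact Or.inl h
      · have hc' := hclosed y hy c (separates_left _ _)
        exact Or.inr ⟨isSubtree_of_forall_separates hG hc' hclosed, hc',
          fun h => hr (mem_sdiff.1 h).1⟩
    · intro S _ S' _ h
      obtain ⟨h1, h2⟩ := Prod.mk.inj h
      rw [← Finset.sdiff_sdiff_eq_self (subset_hullFrom (G := G) c S),
        ← Finset.sdiff_sdiff_eq_self (subset_hullFrom (G := G) c S'), h2, h1]
  refine key.trans ?_
  rw [card_product, ← card_subtreesAvoiding_singleton, add_comm]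
  exact Nat.mul_le_mul_left _ (card_insert_le _ _)

lemma numSubtrees_le_add_sum (hG : G.IsTree) (r : V) :
    numSubtrees G ≤ numAt G r + ∑ c ∈ neighbors G r, η c r * (1 + η c r) := by
  have hcover : ({S | IsSubtree G S} : Finset (Finset V)) ⊆
      subtreesAvoiding G r ∅ ∪ (neighbors G r).biUnion fun c => branchSubtrees G c r := by
    intro S hS
    have hS : IsSubtree G S := by simpa using hS
    by_cases hr : r ∈ S
    · exact mem_union_left _ (mem_subtreesAvoiding.2 ⟨hS, hr, disjoint_empty_right _⟩)
    · obtain ⟨x, hx⟩ := hS.1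
      have hrx : r ≠ x := fun h => hr (h ▸ hx)
      obtain ⟨c, ⟨hrc, hc⟩, -⟩ := existsUnique_adj_separates hG hrx
      refine mem_union_right _ (mem_biUnion.2 ⟨c, mem_neighbors.2 hrc, ?_⟩)
      simp only [branchSubtrees, mem_filter, mem_univ, true_and]
      exact ⟨hS, fun y hy => not_separates_trans (hc.not_swap hG.connected hrc.ne')
        (not_separates_of_notMem hS hx hr hy)⟩
  have hN : numSubtrees G = #({S | IsSubtree G S} : Finset (Finset V)) := by
    rw [numSubtrees, Nat.card_eq_fintype_card, Fintype.card_subtype]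
  rw [hN]
  refine (card_le_card hcover).trans ((card_union_le _ _).trans ?_)
  exact Nat.add_le_add_left (card_biUnion_le.trans
    (sum_le_sum fun c _ => card_branchSubtrees_le hG c r)) _

lemma numAt_le_numSubtrees (r : V) : numAt G r ≤ numSubtrees G := by
  rw [numSubtrees, Nat.card_eq_fintype_card, Fintype.card_subtype, numAt]
  exact card_le_card fun S hS => by simpa using (mem_subtreesAvoiding.1 hS).1

lemma numAt_pos (hG : G.IsTree) (r : V) : 0 < numAt G r := by
  rw [numAt_eq_prod hG]
  exact prod_pos fun _ _ => by omega

lemma sum_le_prod_one_add {ι : Type*} (s : Finset ι) (f : ι → ℕ) :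
    ∑ i ∈ s, f i ≤ ∏ i ∈ s, (1 + f i) := by
  suffices 1 + ∑ i ∈ s, f i ≤ ∏ i ∈ s, (1 + f i) by omega
  induction s using Finset.induction_on with
  | empty => simp
  | insert a s ha ih =>
    rw [sum_insert ha, prod_insert ha]
    calc 1 + (f a + ∑ i ∈ s, f i) ≤ (1 + f a) * (1 + ∑ i ∈ s, f i) := by
          nlinarith [Nat.zero_le (f a * ∑ i ∈ s, f i)]
      _ ≤ _ := Nat.mul_le_mul_left _ ih

lemma numSubtrees_le_three_mul (hG : G.IsTree) (hr : ∀ v, numAt G v ≤ numAt G r)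
    (hru : G.Adj r u) : numSubtrees G ≤ 3 * numAt G r := by
  obtain ⟨c, hc, hmax⟩ :=
    exists_max_image (neighbors G r) (fun c => η c r) ⟨u, mem_neighbors.2 hru⟩
  have hrc := mem_neighbors.1 hc
  have h1 : η c r * (1 + η c r) ≤ numAt G r := by
    rw [numAt_eq_mul hG hrc, mul_comm]
    exact Nat.mul_le_mul_left _ ((numAt_le_iff hG hrc.symm).1 (hr c))
  have h2 : ∑ d ∈ (neighbors G r).erase c, η d r * (1 + η d r) ≤ numAt G r := calc
    _ ≤ ∑ d ∈ (neighbors G r).erase c, (1 + η c r) * η d r := sum_le_sum fun d hd => by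
      rw [mul_comm]
      exact Nat.mul_le_mul_right _ (Nat.add_le_add_left (hmax d (mem_of_mem_erase hd)) 1)
    _ = (1 + η c r) * ∑ d ∈ (neighbors G r).erase c, η d r := (mul_sum _ _ _).symm
    _ ≤ (1 + η c r) * η r c := Nat.mul_le_mul_left _ <| by
      rw [numSubtreesWithWithout_eq_prod hG hrc]
      exact sum_le_prod_one_add _ _
    _ = numAt G r := (numAt_eq_mul hG hrc).symm
  have h3 := numSubtrees_le_add_sum hG r
  rw [← add_sum_erase _ _ hc] at h3
  omega

end Counting

end SubtreeCount

open SubtreeCount in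
theorem stmt3 {V : Type*} [Fintype V] (G : SimpleGraph V) (hG : G.IsTree)
    (h2 : 2 ≤ Fintype.card V) :
    |Real.log (numSubtrees G : ℝ) -
        ∑ w : V, Real.log (1 + 1 / (subtreeM G w : ℝ))| ≤ 2 * Real.log 2 := by
  classical
  have : Nontrivial V := Fintype.one_lt_card_iff_nontrivial.1 h2
  obtain ⟨r, -, hr⟩ := Finset.exists_max_image Finset.univ (numAt G) Finset.univ_nonempty
  replace hr : ∀ v, numAt G v ≤ numAt G r := fun v => hr v (Finset.mem_univ v)
  obtain ⟨x, hx⟩ := exists_ne r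
  obtain ⟨u, ⟨hru, -⟩, -⟩ := existsUnique_adj_separates hG hx.symm
  have hsum : ∑ w : V, Real.log (1 + 1 / (subtreeM G w : ℝ)) =
      Real.log (1 + 1 / (subtreeM G r : ℝ)) + Real.log (numAt G r) := by
    rw [← Finset.add_sum_erase _ _ (Finset.mem_univ r), ← sum_log_one_add_eq hG r]
    congr 1
    exact Finset.sum_congr rfl fun w hw => by rw [subtreeM_eq hG hr (Finset.ne_of_mem_erase hw)]
  have hM : (1 : ℝ) ≤ subtreeM G r := by exact_mod_cast subtreeM_pos hG hru
  have hM' : 1 / (subtreeM G r : ℝ) ≤ 1 := (div_le_one (by linarith)).2 hM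
  have hM0 : 0 ≤ 1 / (subtreeM G r : ℝ) := by positivity
  have hlog0 : 0 ≤ Real.log (1 + 1 / (subtreeM G r : ℝ)) := Real.log_nonneg (by linarith)
  have hlog1 : Real.log (1 + 1 / (subtreeM G r : ℝ)) ≤ Real.log 2 :=
    Real.log_le_log (by linarith) (by linarith)
  have hpos : (0 : ℝ) < numAt G r := by exact_mod_cast numAt_pos hG r
  have hle : (numAt G r : ℝ) ≤ numSubtrees G := by exact_mod_cast numAt_le_numSubtrees r
  have hle' : (numSubtrees G : ℝ) ≤ 2 ^ 2 * numAt G r := by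
    have : (numSubtrees G : ℝ) ≤ 3 * numAt G r := by
      exact_mod_cast numSubtrees_le_three_mul hG hr hru
    linarith
  have h1 := Real.log_le_log hpos hle
  have h3 := Real.log_le_log (hpos.trans_le hle) hle'
  rw [Real.log_mul (by norm_num) hpos.ne', Real.log_pow] at h3
  push_cast at h3
  have hlog2 : 0 ≤ Real.log 2 := Real.log_nonneg (by norm_num)
  rw [hsum, abs_le]
  constructor <;> linarith
end

section
/- Let m and r be positive integers with 2r − 1 < m, and let T be a finite tree that is not an m-good tree. Then T has at least (1/2)·(1 − 2(r−1)/m)·|T| vertices v such that the subgraph of T induced by all vertices at distance at most r from v is isomorphic to a path on 2r+1 vertices via an isomorphism mapping v to the middle vertex of the path. -/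
/-- A path segment of `G`: a path all of whose internal vertices have degree 2 in `G`,
and whose endpoints have degree different from 2 in `G`. -/
def IsPathSegment {V : Type*} (G : SimpleGraph V) {a b : V} (p : G.Walk a b) : Prop :=
  p.IsPath ∧ Nat.card (G.neighborSet a) ≠ 2 ∧ Nat.card (G.neighborSet b) ≠ 2 ∧
    ∀ x ∈ p.support, x ≠ a → x ≠ b → Nat.card (G.neighborSet x) = 2

/-- The vertex `x` lies in (i.e., is an internal vertex of) a path segment of length
greater than `m`. -/
def LiesInSegmentLongerThan {V : Type*} (G : SimpleGraph V) (m : ℕ) (x : V) : Prop :=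
  ∃ (a b : V) (p : G.Walk a b), IsPathSegment G p ∧ m < p.length ∧
    x ∈ p.support ∧ x ≠ a ∧ x ≠ b

/-- `G` is an `m`-good tree: at most half of the vertices lie in path segments of
length greater than `m`. -/
def IsMGood {V : Type*} [Fintype V] (G : SimpleGraph V) (m : ℕ) : Prop :=
  2 * Nat.card {x : V | LiesInSegmentLongerThan G m x} ≤ Fintype.card V

open SimpleGraph

/-- The spanning subgraph of `G` whose edges join vertices of degree 2. -/
def degreeTwoGraph {V : Type*} (G : SimpleGraph V) : SimpleGraph V where
  Adj x y := G.Adj x y ∧ Nat.card (G.neighborSet x) = 2 ∧ Nat.card (G.neighborSet y) = 2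
  symm := ⟨fun _ _ h => ⟨h.1.symm, h.2.2, h.2.1⟩⟩
  loopless := ⟨fun _ h => h.1.ne rfl⟩

namespace IsPathSegment

variable {V : Type*} {G : SimpleGraph V} {a b : V} {p : G.Walk a b}

theorem getVert_inj (hp : IsPathSegment G p) {i j : ℕ} (hi : i ≤ p.length) (hj : j ≤ p.length) :
    p.getVert i = p.getVert j ↔ i = j :=
  ⟨fun h => hp.1.getVert_injOn hi hj h, fun h => h ▸ rfl⟩

theorem exists_getVert_eq {x : V} (hx : x ∈ p.support) (ha : x ≠ a) (hb : x ≠ b) :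
    ∃ i, 0 < i ∧ i < p.length ∧ p.getVert i = x := by
  obtain ⟨i, rfl, hi⟩ := Walk.mem_support_iff_exists_getVert.1 hx
  refine ⟨i, Nat.pos_of_ne_zero ?_, lt_of_le_of_ne hi ?_, rfl⟩
  · rintro rfl
    exact ha p.getVert_zero
  · rintro rfl
    exact hb p.getVert_length

theorem card_neighborSet_getVert (hp : IsPathSegment G p) {i : ℕ} (h0 : 0 < i)
    (hi : i < p.length) : Nat.card (G.neighborSet (p.getVert i)) = 2 := by
  refine hp.2.2.2 _ (p.getVert_mem_support i) (fun h => ?_) (fun h => ?_)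
  · have := (hp.getVert_inj hi.le (Nat.zero_le _)).1 (h.trans p.getVert_zero.symm)
    omega
  · have := (hp.getVert_inj hi.le le_rfl).1 (h.trans p.getVert_length.symm)
    omega

theorem adj_getVert (hp : IsPathSegment G p) {i : ℕ} (h0 : 0 < i) (hi : i < p.length) {y : V}
    (h : G.Adj (p.getVert i) y) : y = p.getVert (i - 1) ∨ y = p.getVert (i + 1) := by
  have hcard := hp.card_neighborSet_getVert h0 hi
  have hfin : (G.neighborSet (p.getVert i)).Finite := by
    apply Set.finite_of_ncard_ne_zero
    rw [← Nat.card_coe_set_eq, hcard]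
    norm_num
  have hsub : ({p.getVert (i - 1), p.getVert (i + 1)} : Set V) ⊆ G.neighborSet (p.getVert i) := by
    have h1 := p.adj_getVert_succ (i := i - 1) (by omega)
    rw [Nat.sub_add_cancel h0] at h1
    rintro z (rfl | rfl)
    · exact h1.symm
    · exact p.adj_getVert_succ hi
  have hne : p.getVert (i - 1) ≠ p.getVert (i + 1) := by
    rw [Ne, hp.getVert_inj (by omega) (by omega)]
    omega
  have heq := Set.eq_of_subset_of_ncard_le hsub
    (by rw [← Nat.card_coe_set_eq, hcard, Set.ncard_pair hne]) hfin
  have hy : y ∈ ({p.getVert (i - 1), p.getVert (i + 1)} : Set V) := heq ▸ h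
  simpa using hy

theorem adj_getVert_getVert_iff (hp : IsPathSegment G p) {i j : ℕ} (hi : i ≤ p.length)
    (hj : j ≤ p.length) (hint : 0 < i ∧ i < p.length ∨ 0 < j ∧ j < p.length) :
    G.Adj (p.getVert i) (p.getVert j) ↔ i + 1 = j ∨ j + 1 = i := by
  constructor
  · intro h
    rcases hint with ⟨h0, h1⟩ | ⟨h0, h1⟩
    · rcases hp.adj_getVert h0 h1 h with h | h
      · have := (hp.getVert_inj hj (by omega)).1 h
        omega
      · have := (hp.getVert_inj hj (by omega)).1 h
        omega
    · rcases hp.adj_getVert h0 h1 h.symm with h | h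
      · have := (hp.getVert_inj hi (by omega)).1 h
        omega
      · have := (hp.getVert_inj hi (by omega)).1 h
        omega
  · rintro (rfl | rfl)
    · exact p.adj_getVert_succ (by omega)
    · exact (p.adj_getVert_succ (by omega)).symm

theorem reachable_getVert (hp : IsPathSegment G p) {i j : ℕ} (hi : 0 < i) (hij : i ≤ j)
    (hj : j < p.length) : (degreeTwoGraph G).Reachable (p.getVert i) (p.getVert j) := by
  induction j, hij using Nat.le_induction with
  | base => exact Reachable.refl _
  | succ j hij ih =>
    refine (ih (by omega)).trans (Adj.reachable ⟨p.adj_getVert_succ (by omega), ?_, ?_⟩)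
    · exact hp.card_neighborSet_getVert (by omega) (by omega)
    · exact hp.card_neighborSet_getVert (by omega) hj

theorem exists_getVert_eq_of_reachable (hp : IsPathSegment G p) {x y : V}
    (h : (degreeTwoGraph G).Reachable x y)
    (hx : ∃ i, 0 < i ∧ i < p.length ∧ p.getVert i = x) :
    ∃ i, 0 < i ∧ i < p.length ∧ p.getVert i = y := by
  obtain ⟨w⟩ := h
  induction w with
  | nil => exact hx
  | cons hadj _ ih =>
    refine ih ?_
    obtain ⟨i, h0, hi, rfl⟩ := hx
    obtain ⟨hadj, -, hdeg⟩ := hadj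
    refine exists_getVert_eq ?_ (fun h => hp.2.1 (h ▸ hdeg)) (fun h => hp.2.2.1 (h ▸ hdeg))
    rcases hp.adj_getVert h0 hi hadj with rfl | rfl <;> exact p.getVert_mem_support _

theorem exists_getVert_eq_of_dist_le (hG : G.Connected) (hp : IsPathSegment G p) {i n : ℕ}
    (hni : n ≤ i) (hin : i + n ≤ p.length) {x : V} (hx : G.dist (p.getVert i) x ≤ n) :
    ∃ j, i ≤ j + n ∧ j ≤ i + n ∧ p.getVert j = x := by
  induction n generalizing x with
  | zero => exact ⟨i, by omega, by omega, hG.dist_eq_zero_iff.1 (by omega)⟩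
  | succ n ih =>
    obtain ⟨w, hw⟩ := hG.exists_walk_length_eq_dist x (p.getVert i)
    rw [SimpleGraph.dist_comm] at hw
    cases w with
    | nil => exact ⟨i, by omega, by omega, rfl⟩
    | @cons _ y _ hadj w =>
      rw [Walk.length_cons] at hw
      have hy : G.dist (p.getVert i) y ≤ n := by
        rw [SimpleGraph.dist_comm]
        have := dist_le w
        omega
      obtain ⟨j, hj1, hj2, rfl⟩ := ih (by omega) (by omega) hy
      rcases hp.adj_getVert (by omega) (by omega) hadj.symm with rfl | rfl
      · exact ⟨j - 1, by omega, by omega, rfl⟩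
      · exact ⟨j + 1, by omega, by omega, rfl⟩

theorem dist_getVert_le (hG : G.Connected) (p : G.Walk a b) {i j : ℕ} (hij : i ≤ j)
    (hj : j ≤ p.length) : G.dist (p.getVert i) (p.getVert j) ≤ j - i := by
  induction j, hij using Nat.le_induction with
  | base => simp
  | succ j hij ih =>
    have h1 := hG.dist_triangle (u := p.getVert i) (v := p.getVert j) (w := p.getVert (j + 1))
    have h2 := dist_eq_one_iff_adj.2 (p.adj_getVert_succ (i := j) (by omega))
    have h3 := ih (by omega)
    omega

theorem exists_ball_iso (hG : G.Connected) (hp : IsPathSegment G p) {i r : ℕ}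
    (hri : r ≤ i) (hir : i + r ≤ p.length) (hlen : 2 * r < p.length) :
    ∃ φ : (G.induce {x : V | G.dist (p.getVert i) x ≤ r}) ≃g pathGraph (2 * r + 1),
      φ ⟨p.getVert i, by simp [SimpleGraph.dist_self]⟩ = ⟨r, by omega⟩ := by
  have hmem (k : Fin (2 * r + 1)) : G.dist (p.getVert i) (p.getVert (i - r + k)) ≤ r := by
    have hk := k.2
    rcases le_total i (i - r + k) with h | h
    · have := dist_getVert_le hG p h (by omega)
      omega
    · have := dist_getVert_le hG p h (by omega)
      rw [SimpleGraph.dist_comm]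
      omega
  let f : Fin (2 * r + 1) → {x : V | G.dist (p.getVert i) x ≤ r} :=
    fun k => ⟨p.getVert (i - r + k), hmem k⟩
  have hf : Function.Bijective f := by
    constructor
    · intro k l hkl
      have hk := k.2
      have hl := l.2
      have := (hp.getVert_inj (by omega) (by omega)).1 (Subtype.ext_iff.1 hkl)
      ext
      omega
    · rintro ⟨x, hx⟩
      obtain ⟨j, h1, h2, rfl⟩ := hp.exists_getVert_eq_of_dist_le hG hri hir hx
      refine ⟨⟨j + r - i, by omega⟩, Subtype.ext ?_⟩
      change p.getVert (i - r + (j + r - i)) = _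
      congr 1
      omega
  let e : pathGraph (2 * r + 1) ≃g G.induce {x : V | G.dist (p.getVert i) x ≤ r} :=
    { Equiv.ofBijective f hf with
      map_rel_iff' := by
        intro k l
        have hk := k.2
        have hl := l.2
        change G.Adj (p.getVert (i - r + k)) (p.getVert (i - r + l)) ↔ _
        rw [pathGraph_adj]
        by_cases hkl : k = l
        · subst hkl
          simp
        · have hkl' : (k : ℕ) ≠ l := fun h => hkl (Fin.ext h)
          rw [hp.adj_getVert_getVert_iff (by omega) (by omega) (by omega)]
          omega }
  refine ⟨e.symm, ?_⟩
  rw [RelIso.symm_apply_eq]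
  refine Subtype.ext ?_
  change p.getVert i = p.getVert (i - r + r)
  rw [Nat.sub_add_cancel hri]

end IsPathSegment

open Classical in
/-- If `A` contains all vertices at distance at least `r` from both ends of every path segment
longer than `m`, then `A` has at least a `1 - 2 (r - 1) / m` share of the vertices lying in such
segments. -/
theorem mul_card_liesInSegment_le {V : Type*} [Fintype V] {G : SimpleGraph V} {m r : ℕ}
    (hr : 0 < r) (hrm : 2 * r ≤ m) (A : Finset V)
    (hA : ∀ (a b : V) (p : G.Walk a b), IsPathSegment G p → m < p.length →
      ∀ i, r ≤ i → i + r ≤ p.length → p.getVert i ∈ A) :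
    m * (Finset.univ.filter (LiesInSegmentLongerThan G m)).card ≤
      m * A.card + 2 * (r - 1) * (Finset.univ.filter (LiesInSegmentLongerThan G m)).card := by
  set S := Finset.univ.filter (LiesInSegmentLongerThan G m)
  let comp := (degreeTwoGraph G).connectedComponentMk
  have hfib (B : Finset V) := Finset.card_eq_sum_card_fiberwise (f := comp) (s := B)
    (t := Finset.univ) (fun _ _ => Finset.mem_coe.2 (Finset.mem_univ _))
  rw [hfib S, hfib A, Finset.mul_sum, Finset.mul_sum, Finset.mul_sum, ← Finset.sum_add_distrib]
  refine Finset.sum_le_sum fun c _ => ?_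
  rcases (S.filter (comp · = c)).eq_empty_or_nonempty with hempty | ⟨x, hx⟩
  · simp [hempty]
  obtain ⟨hxS, rfl⟩ := Finset.mem_filter.1 hx
  obtain ⟨a, b, p, hp, hlen, hxp, hxa, hxb⟩ := (Finset.mem_filter.1 hxS).2
  have hxi := IsPathSegment.exists_getVert_eq hxp hxa hxb
  have hcomp : ∀ i, 0 < i → i < p.length → comp (p.getVert i) = comp x := by
    obtain ⟨j, hj0, hj, rfl⟩ := hxi
    intro i hi0 hi
    refine ConnectedComponent.eq.2 ?_
    rcases le_total i j with h | h
    · exact hp.reachable_getVert hi0 h hj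
    · exact (hp.reachable_getVert hj0 h hi).symm
  have hSfib : S.filter (comp · = comp x) = (Finset.Ioo 0 p.length).image p.getVert := by
    ext y
    simp only [Finset.mem_filter, Finset.mem_image, Finset.mem_Ioo]
    constructor
    · rintro ⟨-, hy⟩
      obtain ⟨i, h0, hi, h⟩ :=
        hp.exists_getVert_eq_of_reachable (ConnectedComponent.eq.1 hy).symm hxi
      exact ⟨i, ⟨h0, hi⟩, h⟩
    · rintro ⟨i, ⟨h0, hi⟩, rfl⟩
      have hdeg := hp.card_neighborSet_getVert h0 hi
      exact ⟨Finset.mem_filter.2 ⟨Finset.mem_univ _, a, b, p, hp, hlen, p.getVert_mem_support i,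
        fun h => hp.2.1 (h ▸ hdeg), fun h => hp.2.2.1 (h ▸ hdeg)⟩, hcomp i h0 hi⟩
  have hAfib : (Finset.Icc r (p.length - r)).image p.getVert ⊆ A.filter (comp · = comp x) := by
    intro y hy
    obtain ⟨i, hi, rfl⟩ := Finset.mem_image.1 hy
    rw [Finset.mem_Icc] at hi
    exact Finset.mem_filter.2
      ⟨hA a b p hp hlen i hi.1 (by omega), hcomp i (by omega) (by omega)⟩
  have hScard : (S.filter (comp · = comp x)).card = p.length - 1 := by
    rw [hSfib, Finset.card_image_of_injOn, Nat.card_Ioo, Nat.sub_zero]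
    exact hp.1.getVert_injOn.mono fun i hi => (Finset.mem_Ioo.1 hi).2.le
  have hAcard : p.length - r + 1 - r ≤ (A.filter (comp · = comp x)).card := by
    refine le_trans (le_of_eq ?_) (Finset.card_le_card hAfib)
    rw [Finset.card_image_of_injOn, Nat.card_Icc]
    exact hp.1.getVert_injOn.mono fun i hi => (Finset.mem_Icc.1 hi).2.trans (Nat.sub_le _ _)
  rw [hScard]
  calc m * (p.length - 1) = m * (p.length - r + 1 - r) + 2 * (r - 1) * m := by
        rw [mul_comm (2 * (r - 1)), ← mul_add]
        congr 1
        omega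
    _ ≤ _ := by
        gcongr
        omega

theorem stmt5 {V : Type*} [Fintype V] (G : SimpleGraph V) (hG : G.IsTree)
    (m r : ℕ) (hm : 0 < m) (hr : 0 < r) (hrm : 2 * r - 1 < m)
    (hbad : ¬ IsMGood G m) :
    (1 / 2 : ℝ) * (1 - 2 * ((r : ℝ) - 1) / (m : ℝ)) * (Fintype.card V : ℝ) ≤
      (Nat.card {v : V |
        ∃ φ : (G.induce {x : V | G.dist v x ≤ r}) ≃g SimpleGraph.pathGraph (2 * r + 1),
          φ ⟨v, by simp [SimpleGraph.dist_self]⟩ = ⟨r, by omega⟩} : ℝ) := by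
  classical
  set A := {v : V |
    ∃ φ : (G.induce {x : V | G.dist v x ≤ r}) ≃g SimpleGraph.pathGraph (2 * r + 1),
      φ ⟨v, by simp [SimpleGraph.dist_self]⟩ = ⟨r, by omega⟩}
  have hmain := mul_card_liesInSegment_le (G := G) (m := m) hr (by omega) A.toFinset
    fun a b p hp hlen i hri hir => by
      rw [Set.mem_toFinset]
      exact hp.exists_ball_iso hG.connected hri hir (by omega)
  rw [Nat.card_eq_card_toFinset]
  have hS : Fintype.card V < 2 * (Finset.univ.filter (LiesInSegmentLongerThan G m)).card := by
    rw [IsMGood, not_le, Nat.card_eq_card_toFinset, Set.toFinset_ofPred] at hbad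
    exact hbad
  generalize (Finset.univ.filter (LiesInSegmentLongerThan G m)).card = s at hmain hS
  generalize A.toFinset.card = g at hmain ⊢
  have hS' : (Fintype.card V : ℝ) ≤ 2 * s := by exact_mod_cast hS.le
  have hmain' : (m : ℝ) * s ≤ m * g + 2 * (r - 1) * s := by
    have : ((r - 1 : ℕ) : ℝ) = r - 1 := by simp [Nat.cast_sub hr]
    rw [← this]
    exact_mod_cast hmain
  have hm' : (0 : ℝ) < m := by exact_mod_cast hm
  have hrm' : 2 * (r : ℝ) ≤ m := by exact_mod_cast (show 2 * r ≤ m by omega)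
  have hfrac : 0 ≤ 1 - 2 * ((r : ℝ) - 1) / m := by
    rw [sub_nonneg, div_le_one hm']
    linarith
  calc (1 / 2 : ℝ) * (1 - 2 * ((r : ℝ) - 1) / m) * Fintype.card V
      ≤ (1 / 2 : ℝ) * (1 - 2 * ((r : ℝ) - 1) / m) * (2 * s) := by gcongr
    _ = (m * s - 2 * (r - 1) * s) / m := by
        field_simp
    _ ≤ g := by
        rw [div_le_iff₀ hm']
        linarith
end

section
/- Let m be a positive integer and let T be an m-good finite tree with at least two vertices. Then T has at least |T|/(4m) leaves. -/
namespace SimpleGraph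

variable {V : Type*} {G : SimpleGraph V}

/-- In a tree, a vertex has at most one neighbour closer to a given root. -/
lemma IsTree.eq_of_adj_of_dist_add_one (hG : G.IsTree) {r x y z : V} (hy : G.Adj x y)
    (hz : G.Adj x z) (hdy : G.dist y r + 1 = G.dist x r) (hdz : G.dist z r + 1 = G.dist x r) :
    y = z := by
  obtain ⟨p, hp⟩ := hG.connected.exists_walk_length_eq_dist y r
  obtain ⟨q, hq⟩ := hG.connected.exists_walk_length_eq_dist z r
  have hp' : (Walk.cons hy p).IsPath :=
    Walk.isPath_of_length_eq_dist _ (by rw [Walk.length_cons, hp, hdy])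
  have hq' : (Walk.cons hz q).IsPath :=
    Walk.isPath_of_length_eq_dist _ (by rw [Walk.length_cons, hq, hdz])
  simpa using congrArg Walk.snd ((hG.existsUnique_path x r).unique hp' hq')

/-- A parent function for a tree rooted at `r`. -/
lemma IsTree.exists_parent (hG : G.IsTree) (r : V) :
    ∃ f : V → V, f r = r ∧ ∀ x, x ≠ r → G.Adj x (f x) ∧ G.dist (f x) r + 1 = G.dist x r := by
  have h : ∀ x, ∃ y, (x = r → y = r) ∧
      (x ≠ r → G.Adj x y ∧ G.dist y r + 1 = G.dist x r) := by
    intro x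
    by_cases hx : x = r
    · exact ⟨x, id, fun h ↦ absurd hx h⟩
    obtain ⟨p, hp⟩ := hG.connected.exists_walk_length_eq_dist x r
    cases p with
    | nil => exact absurd rfl hx
    | @cons _ y _ hxy q =>
      refine ⟨y, fun h ↦ absurd h hx, fun _ ↦ ⟨hxy, ?_⟩⟩
      have h1 := dist_le q
      rw [Walk.length_cons] at hp
      rcases hG.dist_eq_dist_add_one_of_adj r hxy with h | h <;>
        rw [G.dist_comm (u := r) (v := x), G.dist_comm (u := r) (v := y)] at h <;> omega
  choose f hfr hf using h
  exact ⟨f, hfr r rfl, hf⟩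

/-- In a nontrivial finite tree, at most twice as many vertices have degree other than two as
have degree one. -/
lemma IsTree.card_degree_ne_two_le [Fintype V] [DecidableRel G.Adj] (hG : G.IsTree)
    [Nontrivial V] :
    (Finset.univ.filter fun v ↦ G.degree v ≠ 2).card ≤
      2 * (Finset.univ.filter fun v ↦ G.degree v = 1).card := by
  have hsum := G.sum_degrees_eq_twice_card_edges
  have hE := hG.card_edgeFinset
  have hle : ∑ v : V, (2 + if G.degree v ≠ 2 then 1 else 0) ≤
      ∑ v : V, (G.degree v + 2 * if G.degree v = 1 then 1 else 0) := by
    refine Finset.sum_le_sum fun v _ ↦ ?_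
    have := hG.preconnected.degree_pos_of_nontrivial v
    split_ifs <;> omega
  rw [Finset.sum_add_distrib, Finset.sum_add_distrib, ← Finset.mul_sum, ← Finset.card_filter,
    ← Finset.card_filter, hsum, Finset.sum_const, Finset.card_univ, smul_eq_mul] at hle
  omega

section Parent

variable {r : V} {f : V → V}

/-- Iterating the parent function traces a walk through the iterates. -/
lemma exists_walk_iterate (hf : ∀ x, x ≠ r → G.Adj x (f x)) (b : V) (k : ℕ)
    (hk : ∀ i < k, f^[i] b ≠ r) :
    ∃ p : G.Walk b (f^[k] b), p.length = k ∧ ∀ x, x ∈ p.support ↔ ∃ i ≤ k, f^[i] b = x := by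
  induction k with
  | zero => exact ⟨Walk.nil, rfl, fun x ↦ by simp [eq_comm]⟩
  | succ k ih =>
    obtain ⟨p, hp, hs⟩ := ih fun i hi ↦ hk i (by omega)
    have hadj : G.Adj (f^[k] b) (f^[k + 1] b) := by
      rw [Function.iterate_succ_apply']
      exact hf _ (hk k (by omega))
    refine ⟨p.concat hadj, by rw [Walk.length_concat, hp], fun x ↦ ?_⟩
    rw [Walk.support_concat, List.mem_append, hs, List.mem_singleton]
    constructor
    · rintro (⟨i, hi, rfl⟩ | rfl)
      · exact ⟨i, by omega, rfl⟩
      · exact ⟨k + 1, le_rfl, rfl⟩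
    · rintro ⟨i, hi, rfl⟩
      rcases Nat.lt_or_ge k i with h | h
      · right
        rw [show i = k + 1 by omega]
      · exact Or.inl ⟨i, h, rfl⟩

lemma dist_iterate_add (hf : ∀ x, x ≠ r → G.dist (f x) r + 1 = G.dist x r) (b : V) (k : ℕ)
    (hk : ∀ i < k, f^[i] b ≠ r) : G.dist (f^[k] b) r + k = G.dist b r := by
  induction k with
  | zero => rfl
  | succ k ih =>
    have h1 := ih fun i hi ↦ hk i (by omega)
    have h2 := hf _ (hk k (by omega))
    rw [Function.iterate_succ_apply']
    omega

/-- Every vertex is reached from a vertex of degree other than two by iterating the parent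
function through vertices of degree two. -/
lemma IsTree.exists_iterate_eq [Fintype V] (hG : G.IsTree)
    (hr : Nat.card (G.neighborSet r) ≠ 2)
    (hf : ∀ x, x ≠ r → G.Adj x (f x) ∧ G.dist (f x) r + 1 = G.dist x r) (x : V) :
    ∃ b j, Nat.card (G.neighborSet b) ≠ 2 ∧ f^[j] b = x ∧
      ∀ i, 1 ≤ i → i ≤ j → Nat.card (G.neighborSet (f^[i] b)) = 2 := by
  obtain ⟨M, hM⟩ := (Set.finite_range fun v ↦ G.dist v r).bddAbove
  have hM : ∀ v, G.dist v r ≤ M := fun v ↦ hM ⟨v, rfl⟩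
  induction hn : M - G.dist x r using Nat.strong_induction_on generalizing x with
  | _ n ih =>
    by_cases hx : Nat.card (G.neighborSet x) = 2
    swap
    · exact ⟨x, 0, hx, rfl, fun i hi hi' ↦ by omega⟩
    have hxr : x ≠ r := by
      rintro rfl
      exact hr hx
    obtain ⟨y, hy, hyf⟩ : ∃ y ∈ G.neighborSet x, y ≠ f x :=
      Set.exists_ne_of_one_lt_ncard (by rw [← Nat.card_coe_set_eq, hx]; norm_num) (f x)
    rw [mem_neighborSet] at hy
    have hdy : G.dist y r = G.dist x r + 1 := by
      rcases hG.dist_eq_dist_add_one_of_adj r hy with h | h <;>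
        rw [G.dist_comm (u := r) (v := x), G.dist_comm (u := r) (v := y)] at h
      · exact absurd (hG.eq_of_adj_of_dist_add_one hy (hf x hxr).1 h.symm (hf x hxr).2) hyf
      · exact h
    have hyr : y ≠ r := by
      rintro rfl
      simp at hdy
    have hfy : f y = x :=
      hG.eq_of_adj_of_dist_add_one (hf y hyr).1 hy.symm (hf y hyr).2 hdy.symm
    obtain ⟨b, j, hb, hj, hall⟩ := ih _ (by have := hM y; omega) y rfl
    have hj' : f^[j + 1] b = x := by rw [Function.iterate_succ_apply', hj, hfy]
    refine ⟨b, j + 1, hb, hj', fun i hi hi' ↦ ?_⟩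
    rcases Nat.lt_or_ge j i with h | h
    · rw [show i = j + 1 by omega, hj', hx]
    · exact hall i hi h

/-- A vertex lying in no path segment longer than `m` is reached by fewer than `m` iterations of
the parent function from a vertex of degree other than two. -/
lemma IsTree.exists_iterate_lt_eq [Fintype V] (hG : G.IsTree) {m : ℕ} (hm : 0 < m)
    (hr : Nat.card (G.neighborSet r) ≠ 2) (hfr : f r = r)
    (hf : ∀ x, x ≠ r → G.Adj x (f x) ∧ G.dist (f x) r + 1 = G.dist x r) {x : V}
    (hx : ¬ LiesInSegmentLongerThan G m x) :
    ∃ b, Nat.card (G.neighborSet b) ≠ 2 ∧ ∃ j < m, f^[j] b = x := by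
  classical
  obtain ⟨b, j, hb, rfl, hall⟩ := hG.exists_iterate_eq hr hf x
  refine ⟨b, hb, j, ?_, rfl⟩
  by_contra! hmj
  have hj2 := hall j (by omega) le_rfl
  have hbr : b ≠ r := by
    rintro rfl
    rw [Function.iterate_fixed hfr] at hj2
    exact hr hj2
  have hex : ∃ k, 1 ≤ k ∧ Nat.card (G.neighborSet (f^[k] b)) ≠ 2 := by
    by_contra! hcon
    have := dist_iterate_add (fun x hx ↦ (hf x hx).2) b (G.dist b r + 1) fun i _ hi ↦ by
      rcases Nat.eq_zero_or_pos i with rfl | h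
      · exact hbr hi
      · exact hr (hi ▸ hcon i h)
    omega
  obtain ⟨hk1, hk2⟩ := Nat.find_spec hex
  have hmin : ∀ i, 1 ≤ i → i < Nat.find hex → Nat.card (G.neighborSet (f^[i] b)) = 2 :=
    fun i hi hik ↦ by
      by_contra h
      exact Nat.find_min hex hik ⟨hi, h⟩
  generalize Nat.find hex = k at hk1 hk2 hmin
  have hjk : j < k := by
    by_contra! h
    exact hk2 (hall k hk1 h)
  have hne : ∀ i < k, f^[i] b ≠ r := fun i hi hi' ↦ by
    rcases Nat.eq_zero_or_pos i with rfl | h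
    · exact hbr hi'
    · exact hr (hi' ▸ hmin i h hi)
  obtain ⟨p, hp, hs⟩ := exists_walk_iterate (fun x hx ↦ (hf x hx).1) b k hne
  have hd := dist_iterate_add (fun x hx ↦ (hf x hx).2) b k hne
  have hpath : p.IsPath := by
    refine Walk.isPath_of_length_eq_dist _ (le_antisymm ?_ (dist_le p))
    have := hG.connected.dist_triangle (u := b) (v := f^[k] b) (w := r)
    omega
  refine hx ⟨b, f^[k] b, p, ⟨hpath, hb, hk2, fun y hy hyb hyk ↦ ?_⟩, by omega,
    (hs _).2 ⟨j, hjk.le, rfl⟩, fun h ↦ hb (h ▸ hj2), fun h ↦ hk2 (h ▸ hj2)⟩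
  obtain ⟨i, hi, rfl⟩ := (hs y).1 hy
  refine hmin i (Nat.one_le_iff_ne_zero.2 ?_) (lt_of_le_of_ne hi ?_)
  · rintro rfl
    exact hyb rfl
  · rintro rfl
    exact hyk rfl

end Parent

end SimpleGraph

theorem stmt6 {V : Type*} [Fintype V] (G : SimpleGraph V) (hG : G.IsTree)
    (m : ℕ) (hm : 0 < m) (h2 : 2 ≤ Fintype.card V) (hgood : IsMGood G m) :
    (Fintype.card V : ℝ) / (4 * (m : ℝ)) ≤
      (Nat.card {v : V | Nat.card (G.neighborSet v) = 1} : ℝ) := by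
  classical
  have : Nontrivial V := Fintype.one_lt_card_iff_nontrivial.1 h2
  have hdeg : ∀ v, Nat.card (G.neighborSet v) = G.degree v := fun v ↦ by
    rw [Nat.card_eq_fintype_card, SimpleGraph.card_neighborSet_eq_degree]
  obtain ⟨r, hr⟩ := hG.exists_vert_degree_one_of_nontrivial
  obtain ⟨f, hfr, hf⟩ := hG.exists_parent r
  have hr2 : Nat.card (G.neighborSet r) ≠ 2 := by rw [hdeg, hr]; norm_num
  have hlong : 2 * (Finset.univ.filter fun x ↦ LiesInSegmentLongerThan G m x).card ≤
      Fintype.card V := by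
    rwa [IsMGood, Nat.card_eq_card_toFinset, Set.toFinset_ofPred] at hgood
  have hshort : (Finset.univ.filter fun x ↦ ¬ LiesInSegmentLongerThan G m x).card ≤
      (Finset.univ.filter fun v ↦ G.degree v ≠ 2).card * m := by
    have hsub : (Finset.univ.filter fun x ↦ ¬ LiesInSegmentLongerThan G m x) ⊆
        ((Finset.univ.filter fun v ↦ G.degree v ≠ 2) ×ˢ Finset.range m).image
          fun q ↦ f^[q.2] q.1 := fun x hx ↦ by
      obtain ⟨b, hb, j, hj, rfl⟩ := hG.exists_iterate_lt_eq hm hr2 hfr hf (Finset.mem_filter.1 hx).2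
      rw [hdeg] at hb
      exact Finset.mem_image.2 ⟨(b, j), by simp [hb, hj], rfl⟩
    refine (Finset.card_le_card hsub).trans (Finset.card_image_le.trans ?_)
    rw [Finset.card_product, Finset.card_range]
  have hsplit := Finset.card_filter_add_card_filter_not (s := (Finset.univ : Finset V))
    (fun x ↦ LiesInSegmentLongerThan G m x)
  rw [Finset.card_univ] at hsplit
  have hleaf := Nat.mul_le_mul_right m hG.card_degree_ne_two_le
  have hcard : Nat.card {v : V | Nat.card (G.neighborSet v) = 1} =
      (Finset.univ.filter fun v ↦ G.degree v = 1).card := by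
    simp_rw [hdeg]
    rw [Nat.card_eq_card_toFinset, Set.toFinset_ofPred]
  rw [hcard, div_le_iff₀ (by positivity)]
  have : Fintype.card V ≤ (Finset.univ.filter fun v ↦ G.degree v = 1).card * (4 * m) := by
    linarith
  exact_mod_cast this
end

section
/- For every finite tree T, the ratio log₂(N(T))/|T| lies in the interval [0,1]; moreover, the set of values {log₂(N(T))/|T| : T a finite tree} is dense in [0,1]. -/
/-- The parent of a vertex in the broom rooted at `0`: the vertices `0, …, m` form a path and every
later vertex hangs from `0`. -/
def broomParent (m i : ℕ) : ℕ := if i ≤ m then i - 1 else 0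

/-- The broom on `n + 1` vertices: a path `0, …, m` with the remaining vertices attached to `0`. -/
def broom (n m : ℕ) : SimpleGraph (Fin (n + 1)) where
  Adj i j := ((j : ℕ) ≠ 0 ∧ (i : ℕ) = broomParent m j) ∨ ((i : ℕ) ≠ 0 ∧ (j : ℕ) = broomParent m i)
  symm := ⟨fun _ _ h => h.symm⟩
  loopless := ⟨fun i h => by
    unfold broomParent at h
    split_ifs at h <;> omega⟩

theorem broomParent_lt {m i : ℕ} (hi : i ≠ 0) : broomParent m i < i := by
  unfold broomParent
  split_ifs <;> omega

theorem broom_connected (n m : ℕ) : (broom n m).Connected := by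
  rw [SimpleGraph.connected_iff_exists_forall_reachable]
  refine ⟨0, fun ⟨i, hi⟩ => ?_⟩
  induction i using Nat.strong_induction_on with
  | _ i ih =>
    by_cases h0 : i = 0
    · subst h0
      exact SimpleGraph.Reachable.refl _
    · have hlt := broomParent_lt (m := m) h0
      exact (ih _ hlt (hlt.trans hi)).trans (SimpleGraph.Adj.reachable (Or.inl ⟨h0, rfl⟩))

theorem broom_isTree (n m : ℕ) : (broom n m).IsTree := by
  classical
  rw [SimpleGraph.isTree_iff_connected_and_card]
  refine ⟨broom_connected n m,
    le_antisymm ?_ (broom_connected n m).card_vert_le_card_edgeSet_add_one⟩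
  rw [Nat.card_eq_fintype_card (α := Fin (n + 1)), Fintype.card_fin]
  have hp : ∀ i : Fin n, broomParent m (i + 1) < n + 1 := fun i =>
    (broomParent_lt (Nat.succ_ne_zero _)).trans (by omega)
  have hsub : (broom n m).edgeSet ⊆
      Set.range fun i : Fin n => s(i.succ, (⟨broomParent m (i + 1), hp i⟩ : Fin (n + 1))) := by
    have key : ∀ a b : Fin (n + 1), (b : ℕ) ≠ 0 → (a : ℕ) = broomParent m b → s(b, a) ∈
        Set.range fun i : Fin n => s(i.succ, (⟨broomParent m (i + 1), hp i⟩ : Fin (n + 1))) := by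
      intro a b hb hab
      obtain ⟨i, rfl⟩ := Fin.exists_succ_eq.2 (show b ≠ 0 from fun h => hb (by simp [h]))
      exact ⟨i, by
        simp only [show a = ⟨broomParent m (i + 1), hp i⟩ from Fin.ext hab]⟩
    intro e
    induction e using Sym2.ind with
    | _ a b =>
      rintro (⟨h, h'⟩ | ⟨h, h'⟩)
      · rw [Sym2.eq_swap]
        exact key a b h h'
      · exact key b a h h'
  have h := (Set.ncard_le_ncard hsub).trans_eq (Set.ncard_eq_toFinset_card' _)
  rw [Set.toFinset_range] at h
  rw [Nat.card_coe_set_eq]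
  simpa using h.trans Finset.card_image_le

/-- In a connected induced subgraph, a vertex predicate preserved by adjacency within the vertex set
holds everywhere as soon as it holds somewhere. -/
theorem IsSubtree.forall_of_adj {V : Type*} {G : SimpleGraph V} {S : Finset V} (hS : IsSubtree G S)
    {P : V → Prop} (hP : ∀ x ∈ S, ∀ y ∈ S, G.Adj x y → P x → P y) {a b : V} (ha : a ∈ S)
    (hb : b ∈ S) (hPa : P a) : P b := by
  obtain ⟨w⟩ := hS.2.preconnected ⟨a, ha⟩ ⟨b, hb⟩
  suffices ∀ x y : (S : Set V), (G.induce (S : Set V)).Walk x y → P x → P y from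
    this _ _ w hPa
  intro x y w
  induction w with
  | nil => exact id
  | cons h _ ih => exact fun hx => ih (hP _ (Subtype.prop _) _ (Subtype.prop _) h hx)

/-- A subtree of the broom meets the path in an interval. -/
theorem IsSubtree.broom_ordConnected {n m : ℕ} {S : Finset (Fin (n + 1))}
    (hS : IsSubtree (broom n m) S) {a b c : Fin (n + 1)} (ha : a ∈ S) (hc : c ∈ S) (hab : a ≤ b)
    (hbc : b ≤ c) (hcm : (c : ℕ) ≤ m) : b ∈ S := by
  by_contra hb
  have hcb' : c ≠ b := fun h => hb (h ▸ hc)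
  have h := hS.forall_of_adj (P := fun x => b < x ∧ (x : ℕ) ≤ m) ?_ hc ha
    ⟨lt_of_le_of_ne hbc hcb'.symm, hcm⟩
  · exact absurd h.1 (not_lt.2 hab)
  · intro x hx y hy hxy hPx
    have hyb : (y : ℕ) ≠ b := fun h => hb (Fin.ext h ▸ hy)
    have hbx := Fin.lt_def.1 hPx.1
    rw [Fin.lt_def]
    rcases hxy with ⟨h, h'⟩ | ⟨h, h'⟩ <;> unfold broomParent at h' <;> split_ifs at h' <;> omega

theorem numSubtrees_le_two_pow {n : ℕ} (G : SimpleGraph (Fin n)) : numSubtrees G ≤ 2 ^ n := by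
  have h := Finite.card_subtype_le (α := Finset (Fin n)) (IsSubtree G)
  simpa [numSubtrees] using h

theorem numSubtrees_pos {V : Type*} [Fintype V] [Nonempty V] (G : SimpleGraph V) :
    0 < numSubtrees G := by
  obtain ⟨v⟩ := ‹Nonempty V›
  have : Nonempty {S : Finset V // IsSubtree G S} :=
    ⟨⟨{v}, Finset.singleton_nonempty v, by
      rw [SimpleGraph.connected_iff_exists_forall_reachable]
      refine ⟨⟨v, by simp⟩, fun ⟨w, hw⟩ => ?_⟩
      obtain rfl : w = v := by simpa using hw
      exact SimpleGraph.Reachable.refl _⟩⟩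
  exact Nat.card_pos

theorem two_pow_le_numSubtrees_broom {n m : ℕ} (hm : m ≤ n) :
    2 ^ (n - m) ≤ numSubtrees (broom n m) := by
  let M : Fin (n + 1) := ⟨m, by omega⟩
  have hsub : ∀ L : (Finset.Ioi M).powerset, IsSubtree (broom n m) (insert 0 L.1) := by
    rintro ⟨L, hL⟩
    rw [Finset.mem_powerset] at hL
    refine ⟨Finset.insert_nonempty _ _, ?_⟩
    rw [SimpleGraph.connected_iff_exists_forall_reachable]
    refine ⟨⟨0, by simp⟩, fun ⟨w, hw⟩ => ?_⟩
    rcases Finset.mem_insert.1 hw with rfl | hw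
    · exact SimpleGraph.Reachable.refl _
    · have hmw : m < w := Fin.lt_def.1 (Finset.mem_Ioi.1 (hL hw))
      refine SimpleGraph.Adj.reachable (Or.inl ⟨?_, ?_⟩)
      · simp only [Function.Embedding.subtype_apply]; omega
      · simp [broomParent, hmw.not_ge]
  have hinj : Function.Injective
      (fun L => ⟨_, hsub L⟩ : (Finset.Ioi M).powerset → {S // IsSubtree (broom n m) S}) := by
    rintro ⟨L, hL⟩ ⟨L', hL'⟩ h
    rw [Finset.mem_powerset] at hL hL'
    have h0 : (0 : Fin (n + 1)) ∉ Finset.Ioi M := by simp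
    have h' := congrArg (fun S => S.1.erase 0) h
    simpa [Finset.erase_insert (fun h => h0 (hL h)),
      Finset.erase_insert (fun h => h0 (hL' h))] using h'
  have h := Nat.card_le_card_of_injective _ hinj
  have hc : Nat.card (Finset.Ioi M).powerset = 2 ^ (n - m) := by
    rw [Nat.card_eq_fintype_card, Fintype.card_coe, Finset.card_powerset, Fin.card_Ioi]
    simp [M]
  rwa [hc] at h

theorem numSubtrees_broom_le {n m : ℕ} (hm : m ≤ n) :
    numSubtrees (broom n m) ≤ 2 ^ (n - m) * (n + 2) ^ 2 := by
  classical
  let M : Fin (n + 1) := ⟨m, by omega⟩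
  let f : Finset (Fin (n + 1)) × ℕ × ℕ → Finset (Fin (n + 1)) := fun p =>
    p.1 ∪ Finset.univ.filter fun i => p.2.1 ≤ (i : ℕ) ∧ (i : ℕ) < p.2.2
  let D := (Finset.Ioi M).powerset ×ˢ (Finset.range (n + 2) ×ˢ Finset.range (n + 2))
  have hsub : ∀ S, IsSubtree (broom n m) S → S ∈ D.image f := by
    intro S hS
    have hD : ∀ a b : ℕ, a < n + 2 → b < n + 2 → (S ∩ Finset.Ioi M, a, b) ∈ D := by
      intro a b ha hb
      simp [D, ha, hb]
    rw [Finset.mem_image]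
    rcases (S.filter (· ≤ M)).eq_empty_or_nonempty with he | hne
    · refine ⟨_, hD 0 0 (by omega) (by omega), ?_⟩
      ext i
      have hi : i ∈ S → M < i := fun h => not_le.1 fun hle => by
        have : i ∈ S.filter (· ≤ M) := by simp [h, hle]
        simp [he] at this
      simpa [f] using hi
    · set a := (S.filter (· ≤ M)).min' hne with ha
      set b := (S.filter (· ≤ M)).max' hne with hb
      have haS := Finset.min'_mem _ hne
      have hbS := Finset.max'_mem _ hne
      rw [← ha, Finset.mem_filter] at haS
      rw [← hb, Finset.mem_filter] at hbS
      refine ⟨_, hD a (b + 1) (by omega) (by omega), ?_⟩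
      ext i
      simp only [f, Finset.mem_union, Finset.mem_inter, Finset.mem_Ioi, Finset.mem_filter,
        Finset.mem_univ, true_and, Nat.lt_succ_iff]
      constructor
      · rintro (h | ⟨h, h'⟩)
        · exact h.1
        · exact hS.broom_ordConnected haS.1 hbS.1 h h' hbS.2
      · intro h
        rcases lt_or_ge M i with hi | hi
        · exact Or.inl ⟨h, hi⟩
        · have : i ∈ S.filter (· ≤ M) := by simp [h, hi]
          exact Or.inr ⟨Finset.min'_le _ _ this, Finset.le_max' _ _ this⟩
  have hD : D.card = 2 ^ (n - m) * (n + 2) ^ 2 := by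
    simp [D, M, Finset.card_product, Fin.card_Ioi, sq]
  have h := Nat.card_le_card_of_injective
    (fun S => ⟨S.1, hsub S.1 S.2⟩ : {S // IsSubtree (broom n m) S} → D.image f)
    (fun S S' h => Subtype.ext (congrArg (fun x => x.1) h))
  rw [Nat.card_eq_fintype_card (α := D.image f), Fintype.card_coe] at h
  exact (h.trans Finset.card_image_le).trans hD.le

theorem logb_numSubtrees_div_mem_Icc {n : ℕ} {G : SimpleGraph (Fin n)} (hG : G.IsTree) :
    Real.logb 2 (numSubtrees G : ℝ) / (n : ℝ) ∈ Set.Icc (0 : ℝ) 1 := by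
  have := hG.connected.nonempty
  have hpos : (1 : ℝ) ≤ numSubtrees G := by exact_mod_cast numSubtrees_pos G
  refine ⟨div_nonneg (Real.logb_nonneg one_lt_two hpos) n.cast_nonneg,
    div_le_one_of_le₀ ?_ n.cast_nonneg⟩
  rw [Real.logb_le_iff_le_rpow one_lt_two (by linarith), Real.rpow_natCast]
  exact_mod_cast numSubtrees_le_two_pow G

theorem logb_numSubtrees_broom_bounds {n k : ℕ} (hk : k ≤ n) :
    (k : ℝ) ≤ Real.logb 2 (numSubtrees (broom n (n - k))) ∧
      Real.logb 2 (numSubtrees (broom n (n - k))) ≤ k + 2 * Real.logb 2 (n + 2) := by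
  have hl : ((2 : ℝ) ^ k) ≤ numSubtrees (broom n (n - k)) := by
    have h := two_pow_le_numSubtrees_broom (Nat.sub_le n k)
    rw [Nat.sub_sub_self hk] at h
    exact_mod_cast h
  have hu : (numSubtrees (broom n (n - k)) : ℝ) ≤ 2 ^ k * (n + 2) ^ 2 := by
    have h := numSubtrees_broom_le (Nat.sub_le n k)
    rw [Nat.sub_sub_self hk] at h
    exact_mod_cast h
  have hpos : (0 : ℝ) < numSubtrees (broom n (n - k)) := lt_of_lt_of_le (by positivity) hl
  constructor
  · rwa [Real.le_logb_iff_rpow_le one_lt_two hpos, Real.rpow_natCast]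
  · refine (Real.logb_le_logb_of_le one_lt_two hpos hu).trans_eq ?_
    rw [Real.logb_mul (by positivity) (by positivity), Real.logb_pow, Real.logb_pow,
      Real.logb_self_eq_one one_lt_two]
    simp

open Filter Topology in
theorem tendsto_logb_numSubtrees_broom {x : ℝ} (hx : x ∈ Set.Icc (0 : ℝ) 1) :
    Tendsto (fun n : ℕ => Real.logb 2 (numSubtrees (broom n (n - ⌊x * n⌋₊))) / ((n + 1 : ℕ) : ℝ))
      atTop (𝓝 x) := by
  have hshift : Tendsto (fun n : ℕ => (n : ℝ) + 2) atTop atTop :=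
    tendsto_atTop_add_const_right _ _ tendsto_natCast_atTop_atTop
  have hone : Tendsto (fun n : ℕ => 1 / ((n : ℝ) + 1)) atTop (𝓝 0) :=
    tendsto_one_div_add_atTop_nhds_zero_nat
  have hlog : Tendsto (fun n : ℕ => Real.log ((n : ℝ) + 2) / (n + 2)) atTop (𝓝 0) :=
    Real.isLittleO_log_id_atTop.tendsto_div_nhds_zero.comp hshift
  have hlo : Tendsto (fun n : ℕ => x - 2 * (1 / ((n : ℝ) + 1))) atTop (𝓝 x) := by
    simpa using tendsto_const_nhds.sub (hone.const_mul 2)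
  have hhi : Tendsto (fun n : ℕ => x + 2 / Real.log 2 *
      (Real.log ((n : ℝ) + 2) / (n + 2) * (1 + 1 / ((n : ℝ) + 1)))) atTop (𝓝 x) := by
    simpa using tendsto_const_nhds.add
      ((hlog.mul (tendsto_const_nhds.add hone)).const_mul (2 / Real.log 2))
  refine tendsto_of_tendsto_of_tendsto_of_le_of_le hlo hhi (fun n => ?_) (fun n => ?_)
  all_goals
    have hn : (0 : ℝ) ≤ n := n.cast_nonneg
    have hfl : (⌊x * n⌋₊ : ℝ) ≤ x * n := Nat.floor_le (mul_nonneg hx.1 hn)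
    have hfl' : x * n < ⌊x * n⌋₊ + 1 := Nat.lt_floor_add_one _
    have hk : ⌊x * n⌋₊ ≤ n := by
      have : (⌊x * n⌋₊ : ℝ) ≤ n := hfl.trans (mul_le_of_le_one_left hn hx.2)
      exact_mod_cast this
    obtain ⟨h₁, h₂⟩ := logb_numSubtrees_broom_bounds hk
    have hn1 : (0 : ℝ) < n + 1 := by positivity
    push_cast
  · rw [le_div_iff₀ hn1]
    have : (x - 2 * (1 / ((n : ℝ) + 1))) * (n + 1) = x * n + x - 2 := by
      field_simp
    linarith [hx.2]
  · rw [div_le_iff₀ hn1]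
    have : (x + 2 / Real.log 2 * (Real.log ((n : ℝ) + 2) / (n + 2) * (1 + 1 / ((n : ℝ) + 1)))) *
        (n + 1) = x * n + x + 2 * Real.logb 2 (n + 2) := by
      have : Real.log 2 ≠ 0 := (Real.log_pos one_lt_two).ne'
      rw [Real.logb]
      field_simp
      ring
    linarith [hx.1]

theorem stmt7 :
    (∀ (n : ℕ) (G : SimpleGraph (Fin n)), G.IsTree →
      Real.logb 2 (numSubtrees G : ℝ) / (n : ℝ) ∈ Set.Icc (0 : ℝ) 1) ∧
    closure {x : ℝ | ∃ (n : ℕ) (G : SimpleGraph (Fin n)), G.IsTree ∧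
      x = Real.logb 2 (numSubtrees G : ℝ) / (n : ℝ)} = Set.Icc (0 : ℝ) 1 := by
  refine ⟨fun n G hG => logb_numSubtrees_div_mem_Icc hG, Set.Subset.antisymm ?_ fun x hx => ?_⟩
  · refine closure_minimal ?_ isClosed_Icc
    rintro x ⟨n, G, hG, rfl⟩
    exact logb_numSubtrees_div_mem_Icc hG
  · exact mem_closure_of_tendsto (tendsto_logb_numSubtrees_broom hx)
      (Filter.Eventually.of_forall fun n => ⟨n + 1, _, broom_isTree n _, rfl⟩)
end

section
/- For every finite tree T, the subtree density D(T) lies in the interval [1/3,1]; moreover, the set of values {D(T) : T a finite tree} is dense in [1/3,1]. -/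
/-- `R(T) = Σ_S |S|`: the total number of vertices over all subtrees. -/
noncomputable def totalSubtreeOrder {V : Type*} [Fintype V] (G : SimpleGraph V) : ℕ :=
  ∑ S ∈ (Set.toFinite {S : Finset V | IsSubtree G S}).toFinset, S.card

/-- `μ(T)`: the average subtree order. -/
noncomputable def avgSubtreeOrder {V : Type*} [Fintype V] (G : SimpleGraph V) : ℝ :=
  (totalSubtreeOrder G : ℝ) / (numSubtrees G : ℝ)

/-- `D(T) = μ(T)/|T|`: the subtree density. -/
noncomputable def subtreeDensity {V : Type*} [Fintype V] (G : SimpleGraph V) : ℝ :=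
  avgSubtreeOrder G / (Fintype.card V : ℝ)

open Polynomial Finset

section Subtrees

variable {V W : Type*}

/-- Connectedness of an induced subgraph as a closure principle. -/
theorem isSubtree_iff {G : SimpleGraph V} {S : Finset V} :
    IsSubtree G S ↔ S.Nonempty ∧ ∀ p : V → Prop, (∃ x ∈ S, p x) →
      (∀ x ∈ S, ∀ y ∈ S, G.Adj x y → p x → p y) → ∀ y ∈ S, p y := by
  refine and_congr_right fun hS => ⟨?_, ?_⟩
  · rintro h p ⟨x, hx, hpx⟩ hp y hy
    obtain ⟨w⟩ := h.preconnected ⟨x, hx⟩ ⟨y, hy⟩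
    by_contra hpy
    obtain ⟨d, -, hd1, hd2⟩ := w.exists_boundary_dart {z | p z} hpx hpy
    exact hd2 (hp _ d.fst.2 _ d.snd.2 d.adj hd1)
  · intro h
    obtain ⟨x₀, hx₀⟩ := hS
    have : Nonempty (S : Set V) := ⟨⟨x₀, hx₀⟩⟩
    refine ⟨fun x y => ?_⟩
    obtain ⟨hy, hr⟩ := h (fun z => ∃ hz : z ∈ S, (G.induce (S : Set V)).Reachable x ⟨z, hz⟩)
      ⟨x, x.2, x.2, SimpleGraph.Reachable.refl _⟩
      (fun a _ b hb hab ⟨ha', har⟩ => ⟨hb, har.trans (SimpleGraph.Adj.reachable (by simpa using hab))⟩)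
      y y.2
    exact hr

theorem IsSubtree.map {G : SimpleGraph V} {H : SimpleGraph W} (e : G ≃g H) {S : Finset V}
    (h : IsSubtree G S) : IsSubtree H (S.map e.toEquiv.toEmbedding) := by
  rw [isSubtree_iff] at h ⊢
  refine ⟨h.1.map, ?_⟩
  rintro p ⟨x, hx, hpx⟩ hp y hy
  obtain ⟨x, hxS, rfl⟩ := Finset.mem_map.1 hx
  obtain ⟨y, hyS, rfl⟩ := Finset.mem_map.1 hy
  exact h.2 (p ∘ e) ⟨x, hxS, hpx⟩ (fun a ha b hb hab => hp _ (Finset.mem_map_of_mem _ ha) _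
    (Finset.mem_map_of_mem _ hb) (e.map_adj_iff.2 hab)) y hyS

theorem isSubtree_map_iff {G : SimpleGraph V} {H : SimpleGraph W} (e : G ≃g H) {S : Finset V} :
    IsSubtree H (S.map e.toEquiv.toEmbedding) ↔ IsSubtree G S := by
  refine ⟨fun h => ?_, fun h => h.map e⟩
  have := h.map e.symm
  rw [Finset.map_map] at this
  convert this
  ext x
  simp

/-- The disjoint union of two graphs, joined by one edge. -/
abbrev glue (G : SimpleGraph V) (H : SimpleGraph W) (v : V) (w : W) : SimpleGraph (V ⊕ W) :=
  (G ⊕g H) ⊔ SimpleGraph.edge (Sum.inl v) (Sum.inr w)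

theorem isSubtree_glue_iff {G : SimpleGraph V} {H : SimpleGraph W} {v : V} {w : W}
    {A : Finset V} {B : Finset W} :
    IsSubtree (glue G H v w) (A.disjSum B) ↔
      (IsSubtree G A ∧ B = ∅) ∨ (A = ∅ ∧ IsSubtree H B) ∨
        ((IsSubtree G A ∧ v ∈ A) ∧ (IsSubtree H B ∧ w ∈ B)) := by
  constructor
  · intro h
    rw [isSubtree_iff] at h
    obtain ⟨hne, h⟩ := h
    have hA : A.Nonempty → IsSubtree G A := fun hA => by
      refine isSubtree_iff.2 ⟨hA, fun p hx hp => ?_⟩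
      have := h (Sum.elim p fun _ => p v)
      simp [SimpleGraph.edge_adj] at this
      exact (this (Or.inl hx) (by grind) (by grind)).1
    have hB : B.Nonempty → IsSubtree H B := fun hB => by
      refine isSubtree_iff.2 ⟨hB, fun p hx hp => ?_⟩
      have := h (Sum.elim (fun _ => p w) p)
      simp [SimpleGraph.edge_adj] at this
      exact (this (Or.inr hx) (by grind) (by grind)).2
    rcases A.eq_empty_or_nonempty with rfl | hAne
    · exact Or.inr (Or.inl ⟨rfl, hB (by simpa [Finset.nonempty_iff_ne_empty] using hne)⟩)
    rcases B.eq_empty_or_nonempty with rfl | hBne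
    · exact Or.inl ⟨hA hAne, rfl⟩
    have hvw : v ∈ A ∧ w ∈ B := by
      by_contra hvw
      obtain ⟨a, ha⟩ := hAne
      obtain ⟨b, hb⟩ := hBne
      have := h (Sum.elim (fun _ => True) fun _ => False)
      simp [SimpleGraph.edge_adj] at this
      exact this a ha (by grind) b hb
    exact Or.inr (Or.inr ⟨⟨hA hAne, hvw.1⟩, hB hBne, hvw.2⟩)
  · rintro (⟨hA, rfl⟩ | ⟨rfl, hB⟩ | ⟨⟨hA, hv⟩, hB, hw⟩)
    · rw [isSubtree_iff] at hA ⊢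
      refine ⟨by simpa [Finset.nonempty_iff_ne_empty] using hA.1, fun p hx hp => ?_⟩
      simp [SimpleGraph.edge_adj] at hx hp ⊢
      exact hA.2 (fun a => p (.inl a)) hx hp
    · rw [isSubtree_iff] at hB ⊢
      refine ⟨by simpa [Finset.nonempty_iff_ne_empty] using hB.1, fun p hx hp => ?_⟩
      simp [SimpleGraph.edge_adj] at hx hp ⊢
      exact hB.2 (fun a => p (.inr a)) hx hp
    · rw [isSubtree_iff] at hA hB ⊢
      refine ⟨⟨.inl v, by simpa using hv⟩, fun p hx hp => ?_⟩
      simp [SimpleGraph.edge_adj] at hx hp ⊢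
      have hA' := fun h => hA.2 (fun a => p (.inl a)) h fun a ha => (hp.1 a ha).1
      have hB' := fun h => hB.2 (fun b => p (.inr b)) h fun b hb => (hp.2 b hb).2
      have hiff : p (.inl v) ↔ p (.inr w) :=
        ⟨(hp.1 v hv).2 w hw rfl rfl, (hp.2 w hw).1 v hv rfl rfl⟩
      rcases hx with hx | hx
      · exact ⟨hA' hx, hB' ⟨w, hw, hiff.1 (hA' hx v hv)⟩⟩
      · exact ⟨hA' ⟨v, hv, hiff.2 (hB' hx w hw)⟩, hB' hx⟩

/-- The generating polynomial of the subtrees by order. -/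
noncomputable def subtreePoly [Fintype V] (G : SimpleGraph V) : ℕ[X] :=
  open Classical in ∑ S with IsSubtree G S, X ^ #S

/-- The generating polynomial of the subtrees containing `v` by order. -/
noncomputable def rootedPoly [Fintype V] (G : SimpleGraph V) (v : V) : ℕ[X] :=
  open Classical in ∑ S with IsSubtree G S ∧ v ∈ S, X ^ #S

theorem numSubtrees_eq_eval [Fintype V] (G : SimpleGraph V) :
    numSubtrees G = (subtreePoly G).eval 1 := by
  classical
  simp [numSubtrees, subtreePoly, eval_finsetSum, Nat.card_eq_fintype_card, Fintype.card_subtype]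

theorem totalSubtreeOrder_eq_eval [Fintype V] (G : SimpleGraph V) :
    totalSubtreeOrder G = (derivative (subtreePoly G)).eval 1 := by
  classical
  simp only [totalSubtreeOrder, subtreePoly, derivative_sum, eval_finsetSum]
  refine Finset.sum_congr (by ext; simp) fun S _ => ?_
  simp [derivative_X_pow]

theorem subtreePoly_congr [Fintype V] [Fintype W] {G : SimpleGraph V} {H : SimpleGraph W}
    (e : G ≃g H) : subtreePoly G = subtreePoly H := by
  classical
  refine Finset.sum_equiv (Equiv.finsetCongr e.toEquiv) (fun S => ?_) (fun S _ => ?_)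
  · simpa using (isSubtree_map_iff e).symm
  · simp

theorem rootedPoly_congr [Fintype V] [Fintype W] {G : SimpleGraph V} {H : SimpleGraph W}
    (e : G ≃g H) (v : V) : rootedPoly G v = rootedPoly H (e v) := by
  classical
  refine Finset.sum_equiv (Equiv.finsetCongr e.toEquiv) (fun S => ?_) (fun S _ => ?_)
  · have h : e v ∈ S.map e.toEquiv.toEmbedding ↔ v ∈ S := Finset.mem_map' e.toEquiv.toEmbedding
    simp only [Finset.mem_filter, Finset.mem_univ, true_and, Equiv.finsetCongr_apply, h,
      isSubtree_map_iff e]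
  · simp

theorem subtreePoly_glue [Fintype V] [Fintype W] (G : SimpleGraph V) (H : SimpleGraph W)
    (v : V) (w : W) :
    subtreePoly (glue G H v w) =
      subtreePoly G + subtreePoly H + rootedPoly G v * rootedPoly H w := by
  classical
  have hfilter : (univ.filter fun q : Finset V × Finset W =>
      IsSubtree (glue G H v w) (q.1.disjSum q.2)) =
      ((univ.filter fun A => IsSubtree G A) ×ˢ {∅}) ∪
      (({∅} ×ˢ univ.filter fun B => IsSubtree H B) ∪
      ((univ.filter fun A => IsSubtree G A ∧ v ∈ A) ×ˢ
        (univ.filter fun B => IsSubtree H B ∧ w ∈ B))) := by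
    ext ⟨A, B⟩
    simp [isSubtree_glue_iff]
    grind
  have hsum : subtreePoly (glue G H v w) = ∑ q : Finset V × Finset W with
      IsSubtree (glue G H v w) (q.1.disjSum q.2), X ^ (#q.1 + #q.2) := by
    refine (Finset.sum_equiv (Finset.sumEquiv (α := V) (β := W)).symm.toEquiv ?_ ?_).symm
    · simp
    · simp
  have hG : ¬ IsSubtree G ∅ := fun h => by simpa using h.1
  have hH : ¬ IsSubtree H ∅ := fun h => by simpa using h.1
  rw [hsum, hfilter, Finset.sum_union, Finset.sum_union]
  · simp only [Finset.sum_product, Finset.sum_singleton, pow_add, ← Finset.mul_sum,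
      ← Finset.sum_mul]
    simp [subtreePoly, rootedPoly, add_assoc]
  · rw [Finset.disjoint_left]
    rintro ⟨A, B⟩
    simp
    grind
  · rw [Finset.disjoint_left]
    rintro ⟨A, B⟩
    simp
    grind

theorem rootedPoly_glue [Fintype V] [Fintype W] (G : SimpleGraph V) (H : SimpleGraph W)
    (v : V) (w : W) :
    rootedPoly (glue G H v w) (.inl v) = rootedPoly G v * (1 + rootedPoly H w) := by
  classical
  have hfilter : (univ.filter fun q : Finset V × Finset W =>
      IsSubtree (glue G H v w) (q.1.disjSum q.2) ∧ v ∈ q.1) =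
      ((univ.filter fun A => IsSubtree G A ∧ v ∈ A) ×ˢ {∅}) ∪
      ((univ.filter fun A => IsSubtree G A ∧ v ∈ A) ×ˢ
        (univ.filter fun B => IsSubtree H B ∧ w ∈ B)) := by
    ext ⟨A, B⟩
    simp [isSubtree_glue_iff]
    grind
  have hsum : rootedPoly (glue G H v w) (.inl v) = ∑ q : Finset V × Finset W with
      IsSubtree (glue G H v w) (q.1.disjSum q.2) ∧ v ∈ q.1, X ^ (#q.1 + #q.2) := by
    refine (Finset.sum_equiv (Finset.sumEquiv (α := V) (β := W)).symm.toEquiv ?_ ?_).symm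
    · simp
    · simp
  rw [hsum, hfilter, Finset.sum_union]
  · simp only [Finset.sum_product, Finset.sum_singleton, pow_add, ← Finset.mul_sum,
      ← Finset.sum_mul]
    simp [rootedPoly, mul_add]
  · rw [Finset.disjoint_left]
    rintro ⟨A, B⟩
    simp
    grind

theorem isTree_glue [Finite V] [Finite W] {G : SimpleGraph V} {H : SimpleGraph W}
    (hG : G.IsTree) (hH : H.IsTree) (v : V) (w : W) : (glue G H v w).IsTree := by
  rw [SimpleGraph.isTree_iff_connected_and_card] at *
  refine ⟨hG.1.sum_sup_edge hH.1, ?_⟩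
  rw [SimpleGraph.edgeSet_sup, SimpleGraph.edgeSet_edge_of_ne (by simp), Nat.card_coe_set_eq,
    Set.ncard_union_eq (by simp), ← Nat.card_coe_set_eq,
    Nat.card_congr SimpleGraph.edgeSetSumEquiv, Nat.card_sum, Nat.card_sum]
  rw [Set.ncard_singleton]
  omega

/-- A tree splits at any of its edges. -/
theorem exists_iso_glue {G : SimpleGraph V} (hG : G.IsTree) {v u : V} (hvu : G.Adj v u) :
    ∃ (s : Set V) (hv : v ∈ s) (hu : u ∈ sᶜ) (e : G ≃g glue (G.induce s) (G.induce sᶜ) ⟨v, hv⟩ ⟨u, hu⟩),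
      e v = .inl ⟨v, hv⟩ ∧ (G.induce s).IsTree ∧ (G.induce sᶜ).IsTree := by
  classical
  set G' := G.deleteEdges {s(v, u)} with hG'
  have hle : G' ≤ G := G.deleteEdges_le _
  have hbr : ¬ G'.Reachable v u :=
    SimpleGraph.isBridge_iff.1 (SimpleGraph.isAcyclic_iff_forall_adj_isBridge.1 hG.isAcyclic hvu)
  have hcover : ∀ y, G'.Reachable v y ∨ G'.Reachable u y := by
    intro y
    by_contra hy
    obtain ⟨p⟩ := hG.connected.preconnected v y
    obtain ⟨d, -, hd1, hd2⟩ := p.exists_boundary_dart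
      {z | G'.Reachable v z ∨ G'.Reachable u z} (Or.inl (SimpleGraph.Reachable.refl _)) hy
    have hadj : ¬ G'.Adj d.fst d.snd := fun h => hd2 <|
      hd1.imp (fun h1 => h1.trans h.reachable) (fun h1 => h1.trans h.reachable)
    have : s(d.fst, d.snd) = s(v, u) := by
      by_contra hne
      exact hadj (SimpleGraph.deleteEdges_adj.2 ⟨d.adj, hne⟩)
    rcases Sym2.eq_iff.1 this with ⟨h1, h2⟩ | ⟨h1, h2⟩
    · exact hd2 (Or.inr (h2 ▸ SimpleGraph.Reachable.refl _))
    · exact hd2 (Or.inl (h2 ▸ SimpleGraph.Reachable.refl _))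
  set s : Set V := (G'.connectedComponentMk v).supp with hs
  have hmem : ∀ {y}, y ∈ s ↔ G'.Reachable v y := by
    intro y
    simp [hs, SimpleGraph.reachable_comm]
  have hsc : sᶜ = (G'.connectedComponentMk u).supp := by
    ext y
    rw [Set.mem_compl_iff, hmem]
    simp only [SimpleGraph.ConnectedComponent.mem_supp_iff, SimpleGraph.ConnectedComponent.eq]
    refine ⟨fun h => ((hcover y).resolve_left h).symm, fun h h' => hbr (h'.trans h)⟩
  have hconn : ∀ c : G'.ConnectedComponent, (G.induce c.supp).Connected := fun c =>
    c.connected_toSimpleGraph.mono fun a b h => hle h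
  have hv : v ∈ s := hmem.2 (SimpleGraph.Reachable.refl _)
  have hu : u ∈ sᶜ := fun h => hbr (hmem.1 h)
  have hcross : ∀ a ∈ s, ∀ b ∈ sᶜ, (G.Adj a b ↔ a = v ∧ b = u) := by
    intro a ha b hb
    refine ⟨fun hab => ?_, by rintro ⟨rfl, rfl⟩; exact hvu⟩
    have : s(a, b) = s(v, u) := by
      by_contra hne
      have : G'.Adj a b := SimpleGraph.deleteEdges_adj.2 ⟨hab, hne⟩
      exact hb (hmem.2 ((hmem.1 ha).trans this.reachable))
    rcases Sym2.eq_iff.1 this with h | ⟨rfl, rfl⟩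
    · exact h
    · exact absurd ha hu
  refine ⟨s, hv, hu, SimpleGraph.Iso.symm ⟨Equiv.Set.sumCompl s, ?_⟩, ?_, ⟨hconn _, hG.isAcyclic.induce _⟩,
    ⟨by rw [hsc]; exact hconn _, hG.isAcyclic.induce _⟩⟩
  · rintro (⟨a, ha⟩ | ⟨a, ha⟩) (⟨b, hb⟩ | ⟨b, hb⟩)
    · simp [SimpleGraph.edge_adj]
    · simpa [SimpleGraph.edge_adj] using hcross a ha b hb
    · simpa [SimpleGraph.edge_adj, G.adj_comm a b, and_comm] using hcross b hb a ha
    · simp [SimpleGraph.edge_adj]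
  · exact Equiv.Set.sumCompl_symm_apply_of_mem hv

end Subtrees

/-- Rooted trees, built from single vertices by attaching the root of one tree as a new child of
the root of another. -/
inductive GraftTree : Type
  | point : GraftTree
  | graft : GraftTree → GraftTree → GraftTree

namespace GraftTree

/-- The number of vertices. -/
def order : GraftTree → ℕ
  | point => 1
  | graft s t => s.order + t.order

/-- The number of subtrees containing the root. -/
def rooted : GraftTree → ℕ
  | point => 1
  | graft s t => s.rooted * (1 + t.rooted)

/-- The total order of the subtrees containing the root. -/
def rootedTotal : GraftTree → ℕ
  | point => 1
  | graft s t => s.rootedTotal * (1 + t.rooted) + s.rooted * t.rootedTotal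

/-- The number of subtrees. -/
def count : GraftTree → ℕ
  | point => 1
  | graft s t => s.count + t.count + s.rooted * t.rooted

/-- The total order of the subtrees. -/
def total : GraftTree → ℕ
  | point => 1
  | graft s t => s.total + t.total + (s.rootedTotal * t.rooted + s.rooted * t.rootedTotal)

theorem order_pos (b : GraftTree) : 1 ≤ b.order := by
  induction b with
  | point => simp [order]
  | graft s t hs ht => simp only [order]; omega

theorem order_le_rooted (b : GraftTree) : b.order ≤ b.rooted := by
  induction b with
  | point => simp [order, rooted]
  | graft s t hs ht =>
    simp only [order, rooted]
    have := s.order_pos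
    nlinarith

theorem rooted_pos (b : GraftTree) : 1 ≤ b.rooted := b.order_pos.trans b.order_le_rooted

theorem rooted_le_two_pow (b : GraftTree) : 2 * b.rooted ≤ 2 ^ b.order := by
  induction b with
  | point => simp [order, rooted]
  | graft s t hs ht =>
    simp only [order, rooted, pow_add]
    have := t.rooted_pos
    calc 2 * (s.rooted * (1 + t.rooted)) = 2 * s.rooted * (1 + t.rooted) := by ring
      _ ≤ 2 ^ s.order * 2 ^ t.order := by gcongr; omega

theorem rooted_le_count (b : GraftTree) : b.rooted ≤ b.count := by
  induction b with
  | point => simp [rooted, count]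
  | graft s t hs ht => simp only [rooted, count]; nlinarith

theorem count_pos (b : GraftTree) : 1 ≤ b.count := b.rooted_pos.trans b.rooted_le_count

theorem rootedTotal_le (b : GraftTree) : b.rootedTotal ≤ b.order * b.rooted := by
  induction b with
  | point => simp [rooted, order, rootedTotal]
  | graft s t hs ht =>
    simp only [rooted, order, rootedTotal]
    nlinarith [Nat.mul_le_mul_right (1 + t.rooted) hs, Nat.mul_le_mul_left s.rooted ht,
      Nat.zero_le (s.rooted * t.order)]

theorem total_le (b : GraftTree) : b.total ≤ b.order * b.count := by
  induction b with
  | point => simp [order, total, count]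
  | graft s t hs ht =>
    simp only [order, total, count]
    nlinarith [Nat.mul_le_mul_right t.rooted s.rootedTotal_le,
      Nat.mul_le_mul_left s.rooted t.rootedTotal_le,
      Nat.zero_le (s.order * t.count), Nat.zero_le (t.order * s.count)]

/-- The mean order of a subtree containing the root is at least half of `order + 1`. -/
theorem le_rootedTotal (b : GraftTree) : (b.order + 1) * b.rooted ≤ 2 * b.rootedTotal := by
  induction b with
  | point => simp [rooted, order, rootedTotal]
  | graft s t hs ht =>
    simp only [rooted, order, rootedTotal]
    have h := t.order_le_rooted
    nlinarith [Nat.mul_le_mul_right (1 + t.rooted) hs, Nat.mul_le_mul_left s.rooted ht,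
      Nat.mul_le_mul_left s.rooted h]

/-- An upper bound for the number of subtrees, attained by a path rooted at an end. -/
theorem count_le (b : GraftTree) :
    2 * b.count + b.order ^ 2 ≤ 2 * b.order * b.rooted + b.order := by
  induction b with
  | point => simp [rooted, order, count]
  | graft s t hs ht =>
    simp only [rooted, order, count]
    have h1 := s.order_le_rooted
    have h2 := s.order_pos
    have h3 := s.rooted_pos
    have e1 := Nat.mul_le_mul_left t.order h1
    have e2 := Nat.mul_le_mul_left (t.order * t.rooted) h3
    have e3 := Nat.mul_le_mul_left (s.rooted * t.rooted) h2
    nlinarith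

/-- The tree whose root has the given list of branches. -/
def ofList : List GraftTree → GraftTree
  | [] => point
  | t :: l => graft (ofList l) t

theorem exists_eq_ofList (b : GraftTree) : ∃ l, b = ofList l := by
  induction b with
  | point => exact ⟨[], rfl⟩
  | graft s t hs _ =>
    obtain ⟨l, rfl⟩ := hs
    exact ⟨t :: l, rfl⟩

theorem order_ofList (l : List GraftTree) : (ofList l).order = 1 + (l.map order).sum := by
  induction l with
  | nil => rfl
  | cons t l ih => simp only [ofList, order, ih, List.map_cons, List.sum_cons]; ring

theorem rooted_ofList (l : List GraftTree) :
    (ofList l).rooted = (l.map fun c => 1 + c.rooted).prod := by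
  induction l with
  | nil => rfl
  | cons t l ih => simp only [ofList, rooted, ih, List.map_cons, List.prod_cons]; ring

theorem count_ofList (l : List GraftTree) :
    (ofList l).count = (ofList l).rooted + (l.map count).sum := by
  induction l with
  | nil => rfl
  | cons t l ih => simp only [ofList, rooted, count, ih, List.map_cons, List.sum_cons]; ring

theorem total_ofList (l : List GraftTree) :
    (ofList l).total = (ofList l).rootedTotal + (l.map total).sum := by
  induction l with
  | nil => rfl
  | cons t l ih => simp only [ofList, rootedTotal, total, ih, List.map_cons, List.sum_cons]; ring

theorem rootedTotal_ofList_perm {l l' : List GraftTree} (h : l.Perm l') :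
    (ofList l).rootedTotal = (ofList l').rootedTotal := by
  have hr {l l' : List GraftTree} (h : l.Perm l') : (ofList l).rooted = (ofList l').rooted := by
    rw [rooted_ofList, rooted_ofList, (h.map _).prod_eq]
  induction h with
  | nil => rfl
  | cons t h ih => simp only [ofList, rootedTotal, hr h, ih]
  | swap s t l => simp only [ofList, rootedTotal, rooted]; ring
  | trans _ _ ih ih' => exact ih.trans ih'

/-- Every tree can be rooted at a vertex contained in the maximal number of subtrees; there, no
branch has more rooted subtrees than the rest of the tree. -/
theorem exists_central_root (b : GraftTree) : ∃ l : List GraftTree,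
    (ofList l).order = b.order ∧ (ofList l).count = b.count ∧ (ofList l).total = b.total ∧
    ∀ c l', l.Perm (c :: l') → c.rooted ≤ (ofList l').rooted := by
  let A : Set ℕ := {n | ∃ d : GraftTree, d.rooted = n ∧ d.order = b.order ∧ d.count = b.count ∧
    d.total = b.total}
  have hbdd : BddAbove A := ⟨b.count, by
    rintro _ ⟨d, rfl, -, hd, -⟩
    exact hd ▸ d.rooted_le_count⟩
  obtain ⟨d, hd, ho, hc, ht⟩ := Nat.sSup_mem (s := A) ⟨_, b, rfl, rfl, rfl, rfl⟩ hbdd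
  obtain ⟨l, rfl⟩ := d.exists_eq_ofList
  refine ⟨l, ho, hc, ht, fun c l' hl => ?_⟩
  have hroot : (ofList l).rooted = (ofList l').rooted * (1 + c.rooted) := by
    rw [rooted_ofList, (hl.map _).prod_eq, ← rooted_ofList]; rfl
  have horder : (ofList l).order = (ofList l').order + c.order := by
    rw [order_ofList, (hl.map _).sum_eq, ← order_ofList]; rfl
  have hcount : (ofList l).count = (graft (ofList l') c).count := by
    rw [count_ofList, (hl.map _).sum_eq, hroot]
    exact (count_ofList (c :: l')).symm
  have htotal : (ofList l).total = (graft (ofList l') c).total := by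
    rw [total_ofList, (hl.map _).sum_eq, rootedTotal_ofList_perm hl]
    exact (total_ofList (c :: l')).symm
  have hmem : (graft c (ofList l')).rooted ∈ A := by
    refine ⟨_, rfl, ?_, ?_, ?_⟩
    · rw [← ho, horder, order, add_comm]
    · rw [← hc, hcount]; simp only [count]; ring
    · rw [← ht, htotal]; simp only [total]; ring
  have := le_csSup hbdd hmem
  rw [← hd, hroot, rooted] at this
  nlinarith

theorem two_mul_sum_order_le_rooted {l : List GraftTree} (hl : 2 ≤ l.length) :
    2 * (l.map order).sum ≤ (ofList l).rooted := by
  match l, hl with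
  | [s, t], _ =>
    have h1 := s.order_le_rooted
    have h2 := t.order_le_rooted
    have h3 := s.order_pos
    have h4 := t.order_pos
    simp only [List.map_cons, List.map_nil, List.sum_cons, List.sum_nil, ofList, rooted]
    nlinarith [mul_le_mul' (show 1 + s.order ≤ 1 + s.rooted by omega)
      (show 1 + t.order ≤ 1 + t.rooted by omega), mul_le_mul' h3 h4,
      Nat.le_mul_of_pos_right s.order h4, Nat.le_mul_of_pos_left t.order h3]
  | s :: t :: u :: l, _ =>
    have ih := two_mul_sum_order_le_rooted (l := t :: u :: l) (by simp)
    have h1 := s.order_le_rooted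
    have h2 : 2 ≤ (ofList (t :: u :: l)).rooted := by
      refine le_trans ?_ (ofList (t :: u :: l)).order_le_rooted
      have := u.order_pos
      have := t.order_pos
      simp only [order_ofList, List.map_cons, List.sum_cons]
      omega
    rw [ofList, rooted, List.map_cons, List.sum_cons]
    nlinarith

theorem branch_bound_of_three_le {c : GraftTree} {l : List GraftTree} (hl : 2 ≤ l.length)
    (hc : c.rooted ≤ (ofList l).rooted) :
    2 * (ofList l).order * c.count ≤ c.order * ((ofList l).rooted * (1 + c.rooted)) := by
  have h := two_mul_sum_order_le_rooted hl
  have hs : 2 ≤ (ofList l).order := by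
    match l, hl with
    | s :: t :: l, _ =>
      have := s.order_pos
      simp only [order_ofList, List.map_cons, List.sum_cons]
      omega
  have hs' := order_ofList l
  set s := (ofList l).order
  set Q := (ofList l).rooted
  have hN := c.count_le
  have hx := c.order_pos
  have hxa := c.order_le_rooted
  have ha2 := c.rooted_le_two_pow
  set x := c.order
  set a := c.rooted
  have key : 2 * s * a + s ≤ s * x + Q * (1 + a) := by
    by_cases hQ : 2 * s ≤ Q
    · nlinarith
    · have hs2 : 2 * s ≤ Q + 2 := by omega
      have : 2 * (1 + a) ≤ s * (x + 1) := by
        by_cases hx3 : 3 ≤ x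
        · nlinarith
        · interval_cases x <;> omega
      nlinarith [Nat.mul_le_mul_right (1 + a) hs2]
  have h1 := Nat.mul_le_mul_left s hN
  have h2 := Nat.mul_le_mul_left x key
  nlinarith

theorem two_branch_inequality {X Y A B : ℝ} (hX : 1 ≤ X) (hY : 1 ≤ Y) (hXA : X ≤ A) (hYB : Y ≤ B)
    (h1 : A ≤ B + 1) (h2 : B ≤ A + 1) :
    Y * (X - 1) * (2 * A - X) + X * (Y - 1) * (2 * B - Y) ≤ (X + Y + 2) * (A * B) := by
  have e1 : X * Y * (2 * (A + B) - (X + Y)) ≤ (X + Y) ^ 2 / 4 * (2 * (A + B) - (X + Y)) := by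
    apply mul_le_mul_of_nonneg_right _ (by linarith)
    nlinarith [sq_nonneg (X - Y)]
  have e2 : (X + Y) ^ 2 / 4 * (2 * (A + B) - (X + Y)) ≤ (X + Y) * ((A + B) ^ 2 / 4) := by
    nlinarith [mul_nonneg (by linarith : 0 ≤ X + Y) (sq_nonneg (A + B - (X + Y)))]
  have e3 : (A + B) ^ 2 / 4 ≤ A * B + 1 / 4 := by nlinarith
  have e4 := mul_le_mul_of_nonneg_left e3 (by linarith : 0 ≤ X + Y)
  have e5 : X * Y ≤ A * Y := by gcongr
  have e6 : X ≤ B * X := by nlinarith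
  have e7 : Y ≤ A * Y := by nlinarith
  nlinarith [mul_nonneg (by linarith : 0 ≤ A) (by linarith : 0 ≤ B)]

theorem branch_bound {l : List GraftTree}
    (hl : ∀ c l', l.Perm (c :: l') → c.rooted ≤ (ofList l').rooted) :
    2 * (ofList l).order * (l.map count).sum ≤
      ((ofList l).order + 3) * (ofList l).rooted + 2 * (l.map fun c => c.order * c.count).sum := by
  match l with
  | [] => simp
  | [c] =>
    have h1 : c.rooted ≤ 1 := hl c [] (List.Perm.refl _)
    have h2 := c.count_le
    have h3 := c.order_pos
    have h4 := c.order_le_rooted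
    obtain ⟨h5, h6⟩ : c.order = 1 ∧ c.rooted = 1 := by omega
    rw [h5, h6] at h2
    simp [ofList, order, rooted, h5, h6]
    omega
  | [c, d] =>
    have hc : c.rooted ≤ 1 + d.rooted := by
      simpa [ofList, rooted] using hl c [d] (List.Perm.refl _)
    have hd : d.rooted ≤ 1 + c.rooted := by
      simpa [ofList, rooted] using hl d [c] (List.Perm.swap _ _ _)
    have h1 := c.count_le
    have h2 := d.count_le
    have h3 := c.order_le_rooted
    have h4 := d.order_le_rooted
    simp only [ofList, order, rooted, List.map_cons, List.map_nil, List.sum_cons, List.sum_nil]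
    rify at *
    have key := two_branch_inequality (X := c.order + 1) (Y := d.order + 1) (A := c.rooted + 1)
      (B := d.rooted + 1) (by simp) (by simp) (by linarith) (by linarith) (by linarith)
      (by linarith)
    have e1 := mul_le_mul_of_nonneg_left h1 (by positivity : (0 : ℝ) ≤ d.order + 1)
    have e2 := mul_le_mul_of_nonneg_left h2 (by positivity : (0 : ℝ) ≤ c.order + 1)
    nlinarith [mul_nonneg (by positivity : (0 : ℝ) ≤ 1 + d.rooted)
      (by positivity : (0 : ℝ) ≤ 1 + c.rooted)]
  | c₁ :: c₂ :: c₃ :: m =>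
    set l := c₁ :: c₂ :: c₃ :: m with hldef
    have hterm : ∀ c ∈ l, 2 * (ofList l).order * c.count ≤
        c.order * (ofList l).rooted + 2 * (c.order * c.count) := by
      intro c hc
      obtain ⟨l₁, l₂, hl₁₂⟩ := List.append_of_mem hc
      have hperm : l.Perm (c :: (l₁ ++ l₂)) := hl₁₂ ▸ List.perm_middle
      have hlen : 2 ≤ (l₁ ++ l₂).length := by
        have := hperm.length_eq
        simp only [hldef, List.length_cons] at this
        omega
      have := branch_bound_of_three_le hlen (hl c _ hperm)
      have hroot : (ofList l).rooted = (ofList (l₁ ++ l₂)).rooted * (1 + c.rooted) := by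
        rw [rooted_ofList, (hperm.map _).prod_eq, ← rooted_ofList]; rfl
      have horder : (ofList l).order = (ofList (l₁ ++ l₂)).order + c.order := by
        rw [order_ofList, (hperm.map _).sum_eq, ← order_ofList]; rfl
      rw [hroot, horder]
      linarith
    have hsum := List.sum_le_sum hterm
    rw [List.sum_map_mul_left, List.sum_map_add, List.sum_map_mul_left, List.sum_map_mul_right]
      at hsum
    have horder := order_ofList l
    refine hsum.trans (Nat.add_le_add_right (Nat.mul_le_mul_right _ ?_) _)
    change (l.map order).sum ≤ _
    omega

/-- The mean order of a subtree is at least a third of the order of the tree. -/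
theorem le_total (b : GraftTree) : b.order * b.count ≤ 3 * b.total := by
  induction h : b.order using Nat.strong_induction_on generalizing b with
  | _ n ih =>
    obtain ⟨l, ho, hc, ht, hl⟩ := b.exists_central_root
    have hsum : (l.map fun c => c.order * c.count).sum ≤ (l.map fun c => 3 * c.total).sum := by
      refine List.sum_le_sum fun c hmem => ih _ ?_ c rfl
      have := List.single_le_sum (l := l.map order) (by simp) _ (List.mem_map_of_mem hmem)
      have := order_ofList l
      omega
    rw [List.sum_map_mul_left] at hsum
    have h1 := branch_bound hl
    have h2 := (ofList l).le_rootedTotal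
    have h3 := count_ofList l
    have h4 := total_ofList l
    rw [← h, ← hc, ← ht, ← ho, h3, h4]
    change _ ≤ 3 * (l.map total).sum at hsum
    nlinarith

end GraftTree

namespace GraftTree

/-- The subtree density in terms of the recursively computed invariants. -/
noncomputable def density (b : GraftTree) : ℝ := b.total / b.count / b.order

/-- `b` records the order and the subtree counts of the graph `G` rooted at `v`. -/
structure Represents {V : Type*} [Fintype V] (b : GraftTree) (G : SimpleGraph V) (v : V) :
    Prop where
  order_eq : Fintype.card V = b.order
  rooted_eq : (rootedPoly G v).eval 1 = b.rooted
  rootedTotal_eq : (derivative (rootedPoly G v)).eval 1 = b.rootedTotal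
  count_eq : (subtreePoly G).eval 1 = b.count
  total_eq : (derivative (subtreePoly G)).eval 1 = b.total

namespace Represents

variable {V W : Type*} [Fintype V] [Fintype W] {G : SimpleGraph V} {H : SimpleGraph W}
  {v : V} {w : W} {b s t : GraftTree}

theorem density_eq (h : b.Represents G v) : subtreeDensity G = b.density := by
  rw [subtreeDensity, avgSubtreeOrder, density, numSubtrees_eq_eval, totalSubtreeOrder_eq_eval,
    h.count_eq, h.total_eq, h.order_eq]

theorem congr (h : b.Represents H w) (e : G ≃g H) (hv : e v = w) : b.Represents G v where
  order_eq := (Fintype.card_congr e.toEquiv).trans h.order_eq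
  rooted_eq := by rw [rootedPoly_congr e, hv, h.rooted_eq]
  rootedTotal_eq := by rw [rootedPoly_congr e, hv, h.rootedTotal_eq]
  count_eq := by rw [subtreePoly_congr e, h.count_eq]
  total_eq := by rw [subtreePoly_congr e, h.total_eq]

theorem glue (hs : s.Represents G v) (ht : t.Represents H w) :
    (graft s t).Represents (glue G H v w) (.inl v) where
  order_eq := by simp [order, hs.order_eq, ht.order_eq]
  rooted_eq := by simp [rootedPoly_glue, rooted, hs.rooted_eq, ht.rooted_eq]
  rootedTotal_eq := by
    simp [rootedPoly_glue, rootedTotal, derivative_mul, hs.rooted_eq, ht.rooted_eq,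
      hs.rootedTotal_eq, ht.rootedTotal_eq]
  count_eq := by
    simp [subtreePoly_glue, count, hs.rooted_eq, ht.rooted_eq, hs.count_eq, ht.count_eq]
  total_eq := by
    simp [subtreePoly_glue, total, derivative_mul, hs.rooted_eq, ht.rooted_eq,
      hs.rootedTotal_eq, ht.rootedTotal_eq, hs.total_eq, ht.total_eq]

theorem point [Subsingleton V] (G : SimpleGraph V) (v : V) : point.Represents G v := by
  classical
  have hcard : Fintype.card V = 1 := Fintype.card_eq_one_iff.2 ⟨v, fun y => Subsingleton.elim _ _⟩
  have hiff (S : Finset V) : IsSubtree G S ↔ S = {v} := by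
    rw [isSubtree_iff]
    constructor
    · rintro ⟨⟨x, hx⟩, -⟩
      ext y
      simpa [Subsingleton.elim y x, Subsingleton.elim v x] using hx
    · rintro rfl
      refine ⟨Finset.singleton_nonempty v, fun p ⟨x, _, hx⟩ _ y _ => ?_⟩
      rwa [Subsingleton.elim y x]
  have hsub : subtreePoly G = X := by
    simp [subtreePoly, hiff, Finset.filter_eq']
  have hroot : rootedPoly G v = X := by
    have : (univ.filter fun S => IsSubtree G S ∧ v ∈ S) = {({v} : Finset V)} := by
      ext S
      simp only [hiff, Finset.mem_filter, Finset.mem_univ, true_and, Finset.mem_singleton]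
      exact ⟨And.left, fun h => ⟨h, by simp [h]⟩⟩
    rw [rootedPoly]
    convert (congrArg (fun F => ∑ S ∈ F, (X : ℕ[X]) ^ #S) this).trans _
    simp
  constructor <;> simp [hsub, hroot, hcard, order, rooted, rootedTotal, count, total]

end Represents

theorem exists_represents {V : Type*} [Fintype V] {G : SimpleGraph V} (hG : G.IsTree) (v : V) :
    ∃ b : GraftTree, b.Represents G v := by
  classical
  induction hn : Fintype.card V using Nat.strong_induction_on generalizing V with
  | _ n ih =>
    rcases subsingleton_or_nontrivial V with hV | hV
    · exact ⟨_, .point G v⟩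
    · obtain ⟨u, hvu⟩ := hG.connected.preconnected.exists_adj_of_nontrivial v
      obtain ⟨s, hv, hu, e, he, hs, hsc⟩ := exists_iso_glue hG hvu
      obtain ⟨b, hb⟩ := ih _ (hn ▸ Fintype.card_subtype_lt (p := (· ∈ s)) hu) hs ⟨v, hv⟩ rfl
      obtain ⟨c, hc⟩ := ih _ (hn ▸ Fintype.card_subtype_lt (p := (· ∈ sᶜ)) (x := v) (by simpa))
        hsc ⟨u, hu⟩ rfl
      exact ⟨_, (hb.glue hc).congr e he⟩

theorem exists_graph (b : GraftTree) : ∃ (V : Type) (_ : Fintype V) (G : SimpleGraph V) (v : V),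
    G.IsTree ∧ b.Represents G v := by
  induction b with
  | point => exact ⟨Unit, inferInstance, ⊥, (), .of_subsingleton, .point _ _⟩
  | graft s t hs ht =>
    obtain ⟨V, _, G, v, hG, hs⟩ := hs
    obtain ⟨W, _, H, w, hH, ht⟩ := ht
    exact ⟨V ⊕ W, inferInstance, _, _, isTree_glue hG hH v w, hs.glue ht⟩

theorem exists_fin_graph (b : GraftTree) :
    ∃ (n : ℕ) (G : SimpleGraph (Fin n)), G.IsTree ∧ b.density = subtreeDensity G := by
  obtain ⟨V, _, G, v, hG, hb⟩ := b.exists_graph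
  let e := SimpleGraph.Iso.map (Fintype.equivFin V) G
  exact ⟨_, _, e.isTree_iff.1 hG, (hb.congr e.symm (e.symm_apply_apply v)).density_eq.symm⟩

theorem density_mem_Icc (b : GraftTree) : b.density ∈ Set.Icc (1 / 3 : ℝ) 1 := by
  have hn : (0 : ℝ) < b.order := by exact_mod_cast b.order_pos
  have hN : (0 : ℝ) < b.count := by exact_mod_cast b.count_pos
  have h1 : (b.order * b.count : ℝ) ≤ 3 * b.total := by exact_mod_cast b.le_total
  have h2 : (b.total : ℝ) ≤ b.order * b.count := by exact_mod_cast b.total_le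
  rw [density, div_div]
  constructor
  · rw [div_le_div_iff₀ (by norm_num) (by positivity)]
    linarith
  · rw [div_le_one (by positivity)]
    linarith

/-- The star with `k` leaves, rooted at its centre. -/
def star : ℕ → GraftTree
  | 0 => point
  | k + 1 => graft (star k) point

/-- The tree obtained by attaching a path with `L` vertices to the root of `b`; the new root is the
other end of the path. -/
def extend (b : GraftTree) : ℕ → GraftTree
  | 0 => b
  | L + 1 => graft point (extend b L)

theorem star_order (k : ℕ) : ((star k).order : ℝ) = k + 1 := by
  induction k with
  | zero => simp [star, order]
  | succ k ih => simp [star, order, ih]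

theorem star_rooted (k : ℕ) : ((star k).rooted : ℝ) = 2 ^ k := by
  induction k with
  | zero => simp [star, rooted]
  | succ k ih => simp only [star, rooted]; push_cast; rw [ih]; ring

theorem star_rootedTotal (k : ℕ) : ((star k).rootedTotal : ℝ) = (k + 2) * 2 ^ k / 2 := by
  induction k with
  | zero => simp [star, rootedTotal]
  | succ k ih =>
    simp only [star, rootedTotal, rooted]; push_cast; rw [ih, star_rooted]; ring

theorem star_count (k : ℕ) : ((star k).count : ℝ) = 2 ^ k + k := by
  induction k with
  | zero => simp [star, count]
  | succ k ih => simp only [star, count, rooted]; push_cast; rw [ih, star_rooted]; ring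

theorem star_total (k : ℕ) : ((star k).total : ℝ) = (k + 2) * 2 ^ k / 2 + k := by
  induction k with
  | zero => simp [star, total]
  | succ k ih =>
    simp only [star, total, rooted, rootedTotal]; push_cast
    rw [ih, star_rooted, star_rootedTotal]; ring

theorem extend_order (b : GraftTree) (L : ℕ) : ((b.extend L).order : ℝ) = b.order + L := by
  induction L with
  | zero => simp [extend]
  | succ L ih => simp only [extend, order]; push_cast; rw [ih]; ring

theorem extend_rooted (b : GraftTree) (L : ℕ) : ((b.extend L).rooted : ℝ) = b.rooted + L := by
  induction L with
  | zero => simp [extend]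
  | succ L ih => simp only [extend, rooted]; push_cast; rw [ih]; ring

theorem extend_rootedTotal (b : GraftTree) (L : ℕ) :
    ((b.extend L).rootedTotal : ℝ) = b.rootedTotal + L * (1 + b.rooted) + L * (L - 1) / 2 := by
  induction L with
  | zero => simp [extend]
  | succ L ih =>
    simp only [extend, rooted, rootedTotal]; push_cast; rw [ih, extend_rooted]; ring

theorem extend_count (b : GraftTree) (L : ℕ) :
    ((b.extend L).count : ℝ) = b.count + L * b.rooted + L * (L + 1) / 2 := by
  induction L with
  | zero => simp [extend]
  | succ L ih =>
    simp only [extend, rooted, count]; push_cast; rw [ih, extend_rooted]; ring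

theorem extend_total (b : GraftTree) (L : ℕ) :
    ((b.extend L).total : ℝ) = b.total + L * b.rootedTotal + (1 + b.rooted) * (L * (L + 1) / 2) +
      (L + 1) * L * (L - 1) / 6 := by
  induction L with
  | zero => simp [extend]
  | succ L ih =>
    simp only [extend, rooted, rootedTotal, total]; push_cast
    rw [ih, extend_rooted, extend_rootedTotal]; ring

/-- Two stars with `k` leaves each, their centres joined by a path with `L` inner vertices. -/
def dumbbell (k L : ℕ) : GraftTree := graft ((star k).extend L) (star k)

/-- The density of a dumbbell in terms of the rescaled parameters
`x = L / 2 ^ k`, `y = k / 2 ^ k` and `z = 1 / 2 ^ k`. -/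
noncomputable def dumbbellDensity (q : ℝ × ℝ × ℝ) : ℝ :=
  (2 * ((q.2.1 + 2 * q.2.2) / 2 * q.2.2 + q.2.1 * q.2.2 ^ 2) + q.1 * ((q.2.1 + 2 * q.2.2) / 2) +
      (q.2.2 + 1) * (q.1 * (q.1 + q.2.2) / 2) + (q.1 + q.2.2) * q.1 * (q.1 - q.2.2) / 6 +
      ((q.2.1 + 2 * q.2.2) / 2 + q.1 * (q.2.2 + 1) + q.1 * (q.1 - q.2.2) / 2) +
      (1 + q.1) * ((q.2.1 + 2 * q.2.2) / 2)) /
    ((2 * (q.2.2 + q.2.1 * q.2.2) + q.1 + q.1 * (q.1 + q.2.2) / 2 + 1 + q.1) *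
      (2 * q.2.1 + 2 * q.2.2 + q.1))

theorem density_dumbbell (k L : ℕ) :
    (dumbbell k L).density = dumbbellDensity (L / 2 ^ k, k / 2 ^ k, 1 / 2 ^ k) := by
  have hK : (0 : ℝ) < 2 ^ k := by positivity
  rw [density, div_div]
  simp only [dumbbell, order, count, total]
  push_cast
  simp only [extend_order, extend_rooted, extend_rootedTotal, extend_count, extend_total,
    star_order, star_rooted, star_rootedTotal, star_count, star_total, dumbbellDensity]
  symm
  generalize (2 : ℝ) ^ k = K at *
  rw [← mul_div_mul_left _ _ (pow_ne_zero 3 hK.ne')]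
  congr 1 <;> (field_simp; ring)

end GraftTree

open Filter Topology

theorem mem_closure_density {x : ℝ} (hx : x ∈ Set.Ioo (1 / 3 : ℝ) 1) :
    x ∈ closure (Set.range GraftTree.density) := by
  obtain ⟨h3, h1⟩ := hx
  set c := x / 2 - 1 / 6 with hc
  have hcpos : 0 < c := by linarith
  have hcont : ContinuousOn (fun τ : ℝ => (1 - x) + τ * (1 - 2 * x) - τ ^ 2 * c)
      (Set.Icc 0 (1 + 2 / c)) := by fun_prop
  obtain ⟨τ, ⟨hτ0, -⟩, hτ⟩ := intermediate_value_Icc' (by positivity) hcont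
    (show (0 : ℝ) ∈ Set.Icc _ _ by
      refine ⟨?_, by simp; linarith⟩
      have hM : (1 + 2 / c) * c = c + 2 := by field_simp
      have hM1 : 1 ≤ 1 + 2 / c := by simp; positivity
      generalize 1 + 2 / c = M at *
      have : M ^ 2 * c = M * (c + 2) := by rw [← hM]; ring
      simp only [this]
      nlinarith)
  simp only at hτ
  have hτpos : 0 < τ := by
    rcases hτ0.lt_or_eq with h | rfl
    · exact h
    · simp at hτ; linarith
  have hpow : Tendsto (fun k : ℕ => (2 : ℝ) ^ k) atTop atTop :=
    tendsto_pow_atTop_atTop_of_one_lt one_lt_two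
  have hL : Tendsto (fun k : ℕ => (⌊τ * 2 ^ k⌋₊ : ℝ) / 2 ^ k) atTop (𝓝 τ) :=
    (tendsto_nat_floor_mul_div_atTop hτ0).comp hpow
  have hk : Tendsto (fun k : ℕ => (k : ℝ) / 2 ^ k) atTop (𝓝 0) := by
    simpa using tendsto_pow_const_div_const_pow_of_one_lt 1 (one_lt_two (α := ℝ))
  have hone : Tendsto (fun k : ℕ => (1 : ℝ) / 2 ^ k) atTop (𝓝 0) :=
    hpow.const_div_atTop 1
  have hcontAt : ContinuousAt GraftTree.dumbbellDensity (τ, 0, 0) := by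
    unfold GraftTree.dumbbellDensity
    refine ContinuousAt.div (by fun_prop) (by fun_prop) ?_
    have : (0 : ℝ) < (2 * (0 + 0 * 0) + τ + τ * (τ + 0) / 2 + 1 + τ) * (2 * 0 + 2 * 0 + τ) := by
      positivity
    exact this.ne'
  have hval : GraftTree.dumbbellDensity (τ, 0, 0) = x := by
    simp only [GraftTree.dumbbellDensity]
    rw [div_eq_iff (by positivity)]
    rw [hc] at hτ
    linear_combination τ * hτ
  have hlim := hcontAt.tendsto.comp (hL.prodMk_nhds (hk.prodMk_nhds hone))
  rw [hval] at hlim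
  refine mem_closure_of_tendsto hlim (Eventually.of_forall fun k => ?_)
  exact ⟨GraftTree.dumbbell k ⌊τ * 2 ^ k⌋₊, GraftTree.density_dumbbell _ _⟩

theorem stmt10 :
    (∀ (n : ℕ) (G : SimpleGraph (Fin n)), G.IsTree →
      subtreeDensity G ∈ Set.Icc (1 / 3 : ℝ) 1) ∧
    closure {x : ℝ | ∃ (n : ℕ) (G : SimpleGraph (Fin n)), G.IsTree ∧
      x = subtreeDensity G} = Set.Icc (1 / 3 : ℝ) 1 := by
  have hbound : ∀ (n : ℕ) (G : SimpleGraph (Fin n)), G.IsTree →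
      subtreeDensity G ∈ Set.Icc (1 / 3 : ℝ) 1 := by
    intro n G hG
    obtain ⟨v⟩ := hG.connected.nonempty
    obtain ⟨b, hb⟩ := GraftTree.exists_represents hG v
    exact hb.density_eq ▸ b.density_mem_Icc
  refine ⟨hbound, Set.Subset.antisymm ?_ ?_⟩
  · refine closure_minimal ?_ isClosed_Icc
    rintro _ ⟨n, G, hG, rfl⟩
    exact hbound n G hG
  · rw [← closure_Ioo (by norm_num : (1 / 3 : ℝ) ≠ 1)]
    refine closure_minimal (fun x hx => ?_) isClosed_closure
    refine closure_mono ?_ (mem_closure_density hx)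
    rintro _ ⟨b, rfl⟩
    exact b.exists_fin_graph
end
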